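/- arXiv:2406.06766 — 2 statements merged into one kernel-verified Lean document; each statement's English description precedes it below -/
import Mathlib

section
/- Let S = k[x_1,…,x_{d+2}] with d ≥ 2 and R = S/(f,g) where f,g is a homogeneous S-regular sequence of degree-2 forms. Let E be a torsion-free R-module of rank e and projective dimension one with μ(E) = d+e, minimal free resolution 0 → R^d →φ R^{d+e} → E → 0 with φ consisting of linear entries, E satisfying G_d and I_1(φ) = (x_1,…,x_{d+2})R. Write S(E) ≅ B/L with B = S ⊗_k T and L = (ℓ_1,…,ℓ_d,f,g), where ψ is the matrix of linear forms over S lifting φ and [ℓ_1 … ℓ_d] = [y_1 … y_{d+e}]·ψ. Then L is generated by a B-regular sequence; in the duality theorem applied to ℓ_1,…,ℓ_d,f,g one has δ = 2 and τ = d; and S(E)_0 is a free T-module of rank one, rank_T S(E)_1 = 2, and rank_T S(E)_2 = 1. -/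
/-!
STATEMENT 12: `S = k[x_1,…,x_{d+2}]`, `d ≥ 2`, `R = S/(f,g)` with `f,g` a homogeneous
regular sequence of quadrics; `E` a torsion-free `R`-module of rank `e`, `pd_R E = 1`,
`μ(E) = d+e`, linearly presented by `φ`, satisfying `G_d`, `I_1(φ) = (x_1,…,x_{d+2})R`.
With `S(E) ≅ B/L`, `L = (ℓ_1,…,ℓ_d,f,g)`: `L` is generated by a `B`-regular sequence;
in the duality theorem applied to `ℓ_1,…,ℓ_d,f,g` one has `δ = 2`, `τ = d`; and `S(E)_0`
is free of rank one over `T`, `rank_T S(E)_1 = 2`, `rank_T S(E)_2 = 1`.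
-/

open MvPolynomial

noncomputable section

namespace Stmt12

variable (k : Type) [Field k] (d n : ℕ)

/-- `B = R ⊗_k T = k[x_1,…,x_d,y_1,…,y_n]`. -/
abbrev B := MvPolynomial (Fin d ⊕ Fin n) k

/-- `T = k[y_1,…,y_n]`. -/
abbrev T := MvPolynomial (Fin n) k

/-- `B` is a `T`-algebra via `y_j ↦ y_j`. -/
instance : Algebra (T k n) (B k d n) :=
  ((rename Sum.inr : T k n →ₐ[k] B k d n).toRingHom).toAlgebra

/-- The bigrading weight: `bideg x_i = (1,0)`, `bideg y_j = (0,1)`. -/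
def bwt : (Fin d ⊕ Fin n) → ℕ × ℕ := Sum.elim (fun _ => (1, 0)) (fun _ => (0, 1))

/-- The `x`-degree weight. -/
def wx : (Fin d ⊕ Fin n) → ℕ := Sum.elim (fun _ => 1) (fun _ => 0)

/-- The ideal `m = (x_1,…,x_d)B`. -/
def mxB : Ideal (B k d n) := Ideal.span (Set.range fun i : Fin d => (X (Sum.inl i) : B k d n))

variable (I : Ideal (B k d n))

/-- `A = H⁰_m(S)`: elements of `S = B/I` annihilated by a power of `m`. -/
def H0 : Submodule (B k d n) (B k d n ⧸ I) :=
  ⨆ N : ℕ, Submodule.torsionBySet (B k d n) (B k d n ⧸ I)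
    ((mxB k d n ^ N : Ideal (B k d n)) : Set (B k d n))

/-- The bigraded component of `S = B/I` in bidegree `p`. -/
def Scomp (p : ℕ × ℕ) : Submodule k (B k d n ⧸ I) :=
  (weightedHomogeneousSubmodule k (bwt d n) p).map (Ideal.Quotient.mkₐ k I).toLinearMap

/-- The graded strand `S_j = ⊕_b S_{(j,b)}` of `S` in `x`-degree `j`, as a `T`-module. -/
def SxDeg (j : ℕ) : Submodule (T k n) (B k d n ⧸ I) :=
  Submodule.span (T k n) ((Ideal.Quotient.mk I) '' {g : B k d n | g.IsWeightedHomogeneous (wx d n) j})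

/-- The graded strand of `S` in (possibly negative) `x`-degree `i : ℤ`. -/
def SxDegZ (i : ℤ) : Submodule (T k n) (B k d n ⧸ I) :=
  if 0 ≤ i then SxDeg k d n I i.toNat else ⊥

/-- The graded strand `A_i = ⊕_b A_{(i,b)}` of `A = H⁰_m(S)`, as a `T`-module. -/
def AcompZ (i : ℤ) : Submodule (T k n) (B k d n ⧸ I) :=
  (H0 k d n I).restrictScalars (T k n) ⊓ SxDegZ k d n I i

/-- The graded component of `T` in (possibly negative) degree `j`. -/
def TcompZ (j : ℤ) : Submodule k (T k n) :=
  if 0 ≤ j then homogeneousSubmodule (Fin n) k j.toNat else ⊥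

/-- The ideal of `t × t` minors of a matrix. -/
def minorsIdeal {R : Type} [CommRing R] {m' n' : Type} (M : Matrix m' n' R) (t : ℕ) :
    Ideal R :=
  Ideal.span {x | ∃ (f : Fin t → m') (g : Fin t → n'), x = (M.submatrix f g).det}

/-- `ht I ≥ c`: every prime containing `I` has height (= dimension of the localization)
at least `c`. -/
def htGE {R : Type} [CommRing R] (I : Ideal R) (c : ℕ) : Prop :=
  ∀ (p : Ideal R) (_ : p.IsPrime), I ≤ p →
    (c : WithBot ℕ∞) ≤ ringKrullDim (Localization.AtPrime p)

open RingTheory.Sequence IsLocalRing Module CategoryTheory Abelian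
open scoped Pointwise


lemma cm_supportDim_quot_step {A : Type} [CommRing A] [IsNoetherianRing A] (p q : Ideal A) [p.IsPrime]
    (hpq : p ≤ q) (x : A) (hxp : x ∉ p) (hxq : x ∈ q) :
    supportDim A (A ⧸ q) + 1 ≤ supportDim A (A ⧸ p) := by
  have reg : IsSMulRegular (A ⧸ p) x := by
    intro a b hab
    obtain ⟨a, rfl⟩ := Ideal.Quotient.mk_surjective a
    obtain ⟨b, rfl⟩ := Ideal.Quotient.mk_surjective b
    have h2 : Ideal.Quotient.mk p (x * a) = Ideal.Quotient.mk p (x * b) := hab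
    rw [Ideal.Quotient.eq] at h2 ⊢
    rw [← mul_sub] at h2
    exact (Ideal.IsPrime.mem_or_mem ‹_› h2).resolve_left hxp
  have h1 := Module.supportDim_quotSMulTop_succ_le_of_notMem_minimalPrimes (M := A ⧸ p)
    (fun _ ↦ reg.notMem_of_mem_minimalPrimes)
  refine le_trans ?_ h1
  gcongr
  let f : (A ⧸ p) →ₗ[A] (A ⧸ q) := (Ideal.Quotient.factorₐ A hpq).toLinearMap
  have hf : Function.Surjective f := Ideal.Quotient.factor_surjective hpq
  have hle : x • (⊤ : Submodule A (A ⧸ p)) ≤ LinearMap.ker f := by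
    rintro _ ⟨y, -, rfl⟩
    simp only [LinearMap.mem_ker]
    change f (x • y) = 0
    rw [map_smul]
    obtain ⟨z, hz⟩ := Ideal.Quotient.mk_surjective (f y)
    rw [← hz]
    change Ideal.Quotient.mk q (x * z) = 0
    exact Ideal.Quotient.eq_zero_iff_mem.mpr (q.mul_mem_right _ hxq)
  refine Module.supportDim_le_of_surjective (Submodule.liftQ _ f hle) ?_
  intro y
  obtain ⟨z, rfl⟩ := hf y
  exact ⟨Submodule.Quotient.mk z, by simp⟩

lemma cm_depth_le {A : Type} [CommRing A] [IsNoetherianRing A] [IsLocalRing A] (rs : List A) :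
    ∀ (M : Type) [AddCommGroup M] [Module A M] [Module.Finite A M],
    (∀ r ∈ rs, r ∈ maximalIdeal A) → IsRegular M rs →
    ∀ p ∈ associatedPrimes A M, (rs.length : WithBot ℕ∞) ≤ supportDim A (A ⧸ p) := by
  induction rs with
  | nil =>
    intro M _ _ _ _ _ p hp
    have hp1 := hp.isPrime
    have : Nontrivial (A ⧸ p) := Ideal.Quotient.nontrivial_iff.mpr hp1.ne_top
    have h := Module.supportDim_ne_bot_of_nontrivial A (A ⧸ p)
    rw [Module.supportDim_quotient_eq_ringKrullDim]
    simpa using ringKrullDim_nonneg_of_nontrivial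
  | cons x rs ih =>
    intro M _ _ _ hmem hreg p hp
    have hp1 := hp.isPrime
    rw [isRegular_cons_iff] at hreg
    have hx : x ∈ maximalIdeal A := hmem x (by simp)
    obtain ⟨_, z0, hz0⟩ := isAssociatedPrime_iff.mp hp
    have hz0' : z0 ≠ 0 := by
      rintro rfl
      apply hp1.ne_top
      rw [hz0]; ext; simp
    let N : Submodule A M := Submodule.torsionBySet A M (p : Set A)
    have hz0N : z0 ∈ N := by
      rw [Submodule.mem_torsionBySet_iff]
      rintro ⟨a, ha⟩
      have : a ∈ p := ha
      rw [hz0] at this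
      simpa using this
    have hxp : x ∉ p := by
      intro hxp
      rw [hz0] at hxp
      apply hz0'
      have h : x • z0 = 0 := by simpa using hxp
      exact hreg.1 (by simpa using h)
    have hN : ¬ N ≤ x • (⊤ : Submodule A M) := by
      intro hle
      have : N ≤ (maximalIdeal A) • N := by
        intro z hz
        obtain ⟨w, -, hw⟩ := hle hz
        have hw : x • w = z := hw
        rw [← hw]
        refine Submodule.smul_mem_smul hx ?_
        rw [Submodule.mem_torsionBySet_iff] at hz ⊢
        intro a
        apply hreg.1
        change x • (a : A) • w = x • (0 : M)
        rw [smul_zero, smul_comm, hw]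
        exact hz a
      have hb := Submodule.eq_bot_of_le_smul_of_le_jacobson_bot (maximalIdeal A) N
        (IsNoetherian.noetherian N) this (maximalIdeal_le_jacobson _)
      rw [hb] at hz0N
      exact hz0' (by simpa using hz0N)
    obtain ⟨z, hzN, hz⟩ := Set.not_subset.mp hN
    let zb : QuotSMulTop x M := Submodule.Quotient.mk z
    have hzb : zb ≠ 0 := by
      intro h
      exact hz ((Submodule.Quotient.mk_eq_zero _).mp h)
    obtain ⟨q, hq, hle⟩ := exists_le_isAssociatedPrime_of_isNoetherianRing A zb hzb
    have hann : ∀ a : A, a • zb = 0 → a ∈ q := by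
      intro a ha
      apply hle
      simpa using ha
    have hpq : p ≤ q := by
      intro a ha
      apply hann
      replace hzN : z ∈ N := hzN
      rw [Submodule.mem_torsionBySet_iff] at hzN
      have : a • z = 0 := hzN ⟨a, ha⟩
      change Submodule.Quotient.mk (a • z) = _
      rw [this]; rfl
    have hxq : x ∈ q := by
      apply hann
      refine (Submodule.Quotient.mk_eq_zero _).mpr ?_
      exact ⟨z, trivial, rfl⟩
    have h1 := ih (QuotSMulTop x M) (fun r hr => hmem r (by simp [hr])) hreg.2 q hq
    calc ((x :: rs).length : WithBot ℕ∞) = (rs.length : WithBot ℕ∞) + 1 := by simp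
      _ ≤ supportDim A (A ⧸ q) + 1 := by gcongr
      _ ≤ _ := cm_supportDim_quot_step p q hpq x hxp hxq

/-- The length of maximal regular sequence drops by one mod a regular element. -/
lemma cm_depth_drop {A : Type} [CommRing A] [IsNoetherianRing A] [IsLocalRing A]
    (M : Type) [AddCommGroup M] [Module A M] [Module.Finite A M] [Nontrivial M] (n : ℕ)
    (h : ∃ rs : List A, rs.length = n + 1 ∧ (∀ r ∈ rs, r ∈ maximalIdeal A) ∧ IsRegular M rs)
    (x : A) (hx : x ∈ maximalIdeal A) (hxr : IsSMulRegular M x) :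
    ∃ rs : List A, rs.length = n ∧ (∀ r ∈ rs, r ∈ maximalIdeal A) ∧ IsRegular (QuotSMulTop x M) rs := by
  have smul_lt : ∀ (M : Type) [AddCommGroup M] [Module A M] [Module.Finite A M] [Nontrivial M],
      maximalIdeal A • (⊤ : Submodule A M) < ⊤ := by
    intro M _ _ _ _
    refine lt_top_iff_ne_top.mpr (Ne.symm ?_)
    exact Submodule.top_ne_ideal_smul_of_le_jacobson_annihilator (maximalIdeal_le_jacobson _)
  have : Nontrivial (QuotSMulTop x M) := nontrivial_quotSMulTop_of_mem_maximalIdeal M hx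
  have h1 := ((ModuleCat.exists_isRegular_tfae (maximalIdeal A) (n+1) (ModuleCat.of A M)
    (smul_lt M)).out 3 1).mp h
  refine ((ModuleCat.exists_isRegular_tfae (maximalIdeal A) n (ModuleCat.of A (QuotSMulTop x M))
    (smul_lt _)).out 1 3).mp ?_
  intro i hi
  have zero1 := AddCommGrpCat.isZero_of_iff_subsingleton.mpr (h1 i (by omega))
  have zero2 := AddCommGrpCat.isZero_of_iff_subsingleton.mpr (h1 (i + 1) (by omega))
  have hxr' : IsSMulRegular (ModuleCat.of A M) x := hxr
  exact AddCommGrpCat.subsingleton_of_isZero <| ShortComplex.Exact.isZero_of_both_zeros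
    ((Ext.covariant_sequence_exact₃' _ hxr'.smulShortComplex_shortExact) i (i + 1) rfl)
    (zero1.eq_zero_of_src _) (zero2.eq_zero_of_tgt _)

lemma cm_supportDim_le {A : Type} [CommRing A] [IsNoetherianRing A] [IsLocalRing A] (xs : List A) :
    ∀ (M : Type) [AddCommGroup M] [Module A M] [Module.Finite A M],
    (∀ r ∈ xs, r ∈ maximalIdeal A) →
    supportDim A M ≤ supportDim A (M ⧸ Ideal.ofList xs • (⊤ : Submodule A M)) + xs.length := by
  induction xs with
  | nil =>
    intro M _ _ _ _
    have : supportDim A M = supportDim A (M ⧸ (Ideal.ofList [] : Ideal A) • (⊤ : Submodule A M)) := by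
      refine Module.supportDim_eq_of_equiv ((Submodule.quotEquivOfEqBot _ (by simp)).symm)
    simp only [← this, List.length_nil, Nat.cast_zero, add_zero, le_refl]
  | cons x xs ih =>
    intro M _ _ _ hmem
    have h1 := Module.supportDim_le_supportDim_quotSMulTop_succ (M := M) (hmem x (by simp))
    have h2 := ih (QuotSMulTop x M) (fun r hr => hmem r (by simp [hr]))
    have h3 := Module.supportDim_eq_of_equiv
      (Submodule.quotOfListConsSMulTopEquivQuotSMulTopInner M x xs)
    rw [h3]
    refine h1.trans ?_
    simp only [List.length_cons, Nat.cast_add, Nat.cast_one, ← add_assoc]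
    gcongr

theorem cm_main {A : Type} [CommRing A] [IsNoetherianRing A] [IsLocalRing A] (k : ℕ) (xs : List A) :
    ∀ (M : Type) [AddCommGroup M] [Module A M] [Module.Finite A M] [Nontrivial M],
    (∀ r ∈ xs, r ∈ maximalIdeal A) →
    (∃ rs : List A, rs.length = k + xs.length ∧ (∀ r ∈ rs, r ∈ maximalIdeal A) ∧ IsRegular M rs) →
    supportDim A (M ⧸ Ideal.ofList xs • (⊤ : Submodule A M)) ≤ k →
    IsWeaklyRegular M xs := by
  induction xs with
  | nil => intros; simp
  | cons x xs ih =>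
    intro M _ _ _ _ hmem hdep hdim
    have hx := hmem x (by simp)
    have hmem' : ∀ r ∈ xs, r ∈ maximalIdeal A := fun r hr => hmem r (by simp [hr])
    rw [Module.supportDim_eq_of_equiv
      (Submodule.quotOfListConsSMulTopEquivQuotSMulTopInner M x xs)] at hdim
    have hxr : IsSMulRegular M x := by
      have hass := biUnion_associatedPrimes_eq_compl_regular A M
      by_contra hcon
      have : x ∈ ⋃ p ∈ associatedPrimes A M, (p : Set A) := by
        rw [hass]; exact hcon
      simp only [Set.mem_iUnion] at this
      obtain ⟨p, hp, hxp⟩ := this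
      obtain ⟨rs, hlen, hrm, hreg⟩ := hdep
      have h1 := cm_depth_le rs M hrm hreg p hp
      have h2 : supportDim A (A ⧸ p) ≤ supportDim A (QuotSMulTop x M) := by
        have hp1 := hp.isPrime
        refine Order.krullDim_le_of_strictMono (fun a ↦ ⟨a.1, ?_⟩) (fun {_ _} lt ↦ lt)
        rw [Module.support_quotSMulTop]
        have ha : p ≤ a.1.asIdeal := by
          obtain ⟨a, ha⟩ := a
          rw [Module.support_eq_zeroLocus, Ideal.annihilator_quotient] at ha
          exact ha
        refine ⟨?_, ?_⟩
        · rw [Module.support_eq_zeroLocus]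
          have h5 := le_trans hp.annihilator_le ha
          rw [Submodule.annihilator_top] at h5
          exact h5
        · simpa using ha hxp
      have h3 := cm_supportDim_le xs (QuotSMulTop x M) hmem'
      have h4 : ((k + xs.length + 1 : ℕ) : WithBot ℕ∞) ≤ ((k + xs.length : ℕ) : WithBot ℕ∞) := by
        have : rs.length = k + xs.length + 1 := by simpa [add_assoc] using hlen
        rw [this] at h1
        refine (h1.trans h2).trans (h3.trans ?_)
        push_cast
        gcongr
      have := Nat.cast_le.mp h4
      omega
    have hn : Nontrivial (QuotSMulTop x M) := nontrivial_quotSMulTop_of_mem_maximalIdeal M hx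
    rw [isWeaklyRegular_cons_iff]
    exact ⟨hxr, ih (QuotSMulTop x M) hmem' (cm_depth_drop M _ hdep x hx hxr) hdim⟩


section
open RingTheory.Sequence IsLocalRing Module MvPolynomial
open scoped Pointwise


lemma wreg_iff {A : Type*} [CommRing A] (rs : List A) :
    IsWeaklyRegular A rs ↔ ∀ i (h : i < rs.length) (a : A),
      rs[i] * a ∈ Ideal.ofList (rs.take i) → a ∈ Ideal.ofList (rs.take i) := by
  rw [isWeaklyRegular_iff]
  refine forall₂_congr fun i h => ?_
  rw [isSMulRegular_iff_right_eq_zero_of_smul]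
  constructor
  · intro H a ha
    have := H (Submodule.Quotient.mk a) (by
      rw [← Submodule.Quotient.mk_smul, Submodule.Quotient.mk_eq_zero]
      simpa using ha)
    rw [Submodule.Quotient.mk_eq_zero] at this
    simpa using this
  · intro H m hm
    obtain ⟨a, rfl⟩ := Submodule.Quotient.mk_surjective _ m
    rw [← Submodule.Quotient.mk_smul, Submodule.Quotient.mk_eq_zero] at hm
    rw [Submodule.Quotient.mk_eq_zero]
    have := H a (by simpa using hm)
    simpa using this

lemma dim_quot_le {A : Type*} [CommRing A] (I : Ideal A) (h k : ℕ)
    (hdim : ringKrullDim A ≤ ((k + h : ℕ) : WithBot ℕ∞))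
    (hht : ∀ p : Ideal A, p.IsPrime → I ≤ p → (h : ℕ∞) ≤ p.height) :
    ringKrullDim (A ⧸ I) ≤ k := by
  rw [ringKrullDim_quotient]
  refine iSup_le fun q => ?_
  let q' : LTSeries (PrimeSpectrum A) := q.map (fun x => x.1) (fun _ _ h => h)
  have h1 : (h : ℕ∞) ≤ Order.height q'.head := by
    rw [← PrimeSpectrum.height_eq_orderHeight]
    exact hht _ q'.head.2 q.head.2
  obtain ⟨r, hr, hlen⟩ := Order.exists_series_of_le_height _ h1
  let s := r.smash q' hr
  have h2 : ((s.length : ℕ) : WithBot ℕ∞) ≤ ringKrullDim A := Order.LTSeries.length_le_krullDim s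
  have h3 := Nat.cast_le.mp (h2.trans hdim)
  have h4 : s.length = r.length + q.length := rfl
  have : q.length ≤ k := by omega
  exact_mod_cast this

lemma wreg_X {k : Type*} [Field k] {σ : Type*} (l : List σ) (hl : l.Nodup) :
    IsWeaklyRegular (MvPolynomial σ k) (l.map (X : σ → MvPolynomial σ k)) := by
  classical
  rw [wreg_iff]
  intro i h a ha
  have hof : Ideal.ofList ((l.map (X : σ → MvPolynomial σ k)).take i)
      = Ideal.span (X '' {x | x ∈ l.take i}) := by
    rw [← List.map_take]
    simp only [Ideal.ofList]
    congr 1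
    ext y
    show y ∈ List.map X (l.take i) ↔ _
    rw [List.mem_map]
    rfl
  rw [hof, mem_ideal_span_X_image] at ha ⊢
  intro m hm
  have hi : i < l.length := by simpa using h
  simp only [List.getElem_map] at ha
  have := ha (Finsupp.single l[i] 1 + m) (by
    rw [MvPolynomial.mem_support_iff, coeff_X_mul]
    exact MvPolynomial.mem_support_iff.mp hm)
  obtain ⟨j, hj, hne⟩ := this
  refine ⟨j, hj, ?_⟩
  have hji : l[i] ≠ j := by
    rintro rfl
    obtain ⟨n, hn, hn2⟩ := List.mem_take_iff_getElem.mp hj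
    have := (hl.getElem_inj_iff).mp hn2
    omega
  simpa [Finsupp.single_apply, hji] using hne

attribute [local instance] MvPolynomial.gradedAlgebra

lemma ofList_homog {k : Type*} [Field k] {σ : Type*} (xs : List (MvPolynomial σ k))
    (hx : ∀ x ∈ xs, ∃ n, x.IsHomogeneous n) :
    (Ideal.ofList xs).IsHomogeneous (homogeneousSubmodule σ k) := by
  refine Ideal.homogeneous_span _ _ ?_
  intro x hx'
  obtain ⟨n, hn⟩ := hx x hx'
  exact ⟨n, hn⟩

lemma dec_eq {k : Type*} [CommRing k] {σ : Type*} (φ : MvPolynomial σ k) (i : ℕ) :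
    ((DirectSum.decompose (homogeneousSubmodule σ k) φ) i : MvPolynomial σ k)
      = homogeneousComponent i φ := decomposition.decompose'_apply φ i

lemma hc_mul {k : Type*} [CommRing k] {σ : Type*} (x a : MvPolynomial σ k) (n j : ℕ)
    (hx : x.IsHomogeneous n) :
    homogeneousComponent (n + j) (x * a) = x * homogeneousComponent j a := by
  have h := DirectSum.coe_decompose_mul_add_of_left_mem (homogeneousSubmodule σ k)
    (a := x) (b := a) (i := n) (j := j) hx
  rw [dec_eq, dec_eq] at h
  exact h

lemma hc_mul_right {k : Type*} [CommRing k] {σ : Type*} (s a : MvPolynomial σ k) (j : ℕ)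
    (ha : a.IsHomogeneous j) :
    homogeneousComponent j (s * a) = C (constantCoeff s) * a := by
  have h := DirectSum.coe_decompose_mul_add_of_right_mem (homogeneousSubmodule σ k)
    (a := s) (b := a) (i := 0) (j := j) ha
  rw [zero_add, dec_eq, dec_eq, homogeneousComponent_zero] at h
  exact h

theorem graded_wreg {k : Type} [Field k] {σ : Type} [Finite σ] (xs : List (MvPolynomial σ k))
    (hx : ∀ x ∈ xs, ∃ n, 0 < n ∧ x.IsHomogeneous n)
    (hht : ∀ p : Ideal (MvPolynomial σ k), p.IsPrime → Ideal.ofList xs ≤ p →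
      (xs.length : ℕ∞) ≤ p.height) :
    IsRegular (MvPolynomial σ k) xs := by
  classical
  let n : Ideal (MvPolynomial σ k) := RingHom.ker (constantCoeff : MvPolynomial σ k →+* k)
  have hn : n.IsPrime := RingHom.ker_isPrime _
  have hxn : ∀ x ∈ xs, x ∈ n := by
    intro x hxs
    obtain ⟨m, hm, hh⟩ := hx x hxs
    rw [RingHom.mem_ker, constantCoeff_eq]
    by_contra hne
    have := hh hne
    simp at this
    omega
  have hle : Ideal.ofList xs ≤ n := Ideal.span_le.mpr fun x hx => hxn x hx
  let A := Localization.AtPrime n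
  have hdimA : ringKrullDim A ≤ (Nat.card σ : WithBot ℕ∞) := by
    rw [IsLocalization.AtPrime.ringKrullDim_eq_height n A]
    refine Ideal.height_le_ringKrullDim_of_isPrime.trans ?_
    rw [MvPolynomial.ringKrullDim_of_isNoetherianRing]
    simp
  have hlen : xs.length ≤ Nat.card σ := by
    have h1 := hht n hn hle
    have h2 : (n.height : WithBot ℕ∞) ≤ (Nat.card σ : WithBot ℕ∞) := by
      rwa [← IsLocalization.AtPrime.ringKrullDim_eq_height n A]
    have h3 : n.height ≤ (Nat.card σ : ℕ∞) := by exact_mod_cast h2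
    exact_mod_cast h1.trans h3
  obtain ⟨m, hm⟩ := Nat.exists_eq_add_of_le' hlen
  have := Fintype.ofFinite σ
  let ys : List (MvPolynomial σ k) := (Finset.univ : Finset σ).toList.map X
  have hyreg : IsWeaklyRegular (MvPolynomial σ k) ys := wreg_X _ (Finset.nodup_toList _)
  have hymem : ∀ r ∈ ys, r ∈ n := by
    intro r hr
    simp only [ys, List.mem_map] at hr
    obtain ⟨i, -, rfl⟩ := hr
    simp [n, RingHom.mem_ker]
  have hyA := hyreg.isRegular_of_isLocalization_of_mem A n hymem
  have hmemA : ∀ zs : List (MvPolynomial σ k), (∀ r ∈ zs, r ∈ n) →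
      ∀ r ∈ zs.map (algebraMap _ A), r ∈ maximalIdeal A := by
    intro zs h r hr
    obtain ⟨r, hr', rfl⟩ := List.mem_map.mp hr
    rw [IsLocalization.AtPrime.to_map_mem_maximal_iff A n]
    exact h r hr'
  have hwr : IsWeaklyRegular A (xs.map (algebraMap _ A)) := by
    refine cm_main m _ A (hmemA xs hxn) ⟨_, ?_, hmemA ys hymem, hyA⟩ ?_
    · simp only [ys, List.length_map, Finset.length_toList, Finset.card_univ]
      rw [← Nat.card_eq_fintype_card, hm]
    · rw [Ideal.smul_top_eq_map, ← Module.supportDim_eq_of_equiv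
        (Submodule.quotEquivOfEq (Ideal.ofList (xs.map (algebraMap _ A))) _ (by simp)),
        Module.supportDim_quotient_eq_ringKrullDim]
      refine dim_quot_le _ xs.length m (by rw [← hm]; exact hdimA) ?_
      intro p hp hle
      rw [← IsLocalization.height_under n.primeCompl p]
      refine hht _ inferInstance ?_
      rw [← Ideal.map_ofList] at hle
      exact Ideal.map_le_iff_le_comap.mp hle
  refine ⟨?_, ?_⟩
  · rw [wreg_iff] at hwr ⊢
    intro i hi a ha
    have hIh : (Ideal.ofList (xs.take i)).IsHomogeneous (homogeneousSubmodule σ k) :=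
      ofList_homog _ (fun x hx' => by
        obtain ⟨n, _, h⟩ := hx x (List.mem_of_mem_take hx')
        exact ⟨n, h⟩)
    obtain ⟨e, he, hxe⟩ := hx xs[i] (List.getElem_mem hi)
    rw [mem_iff_homogeneousComponent_mem hIh] at ha ⊢
    intro j
    have h1 := ha (e + j)
    rw [hc_mul _ _ _ _ hxe] at h1
    set b := homogeneousComponent j a
    have hb : b.IsHomogeneous j := homogeneousComponent_isHomogeneous j a
    have h2 := hwr i (by simpa using hi) (algebraMap _ A b) (by
      rw [← List.map_take, ← Ideal.map_ofList, List.getElem_map, ← map_mul]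
      exact Ideal.mem_map_of_mem _ h1)
    rw [← List.map_take, ← Ideal.map_ofList,
      IsLocalization.algebraMap_mem_map_algebraMap_iff n.primeCompl] at h2
    obtain ⟨s, hs, hsb⟩ := h2
    rw [mem_iff_homogeneousComponent_mem hIh] at hsb
    have h3 := hsb j
    rw [hc_mul_right _ _ _ hb] at h3
    have hs0 : constantCoeff s ≠ 0 := hs
    have h4 := Ideal.mul_mem_left _ (C (constantCoeff s)⁻¹) h3
    rwa [← mul_assoc, ← C_mul, inv_mul_cancel₀ hs0, C_1, one_mul] at h4
  · intro h
    apply hn.ne_top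
    rw [Ideal.smul_eq_mul, Ideal.mul_top] at h
    rw [eq_top_iff, h]
    exact hle

end

section
open RingTheory.Sequence IsLocalRing Module MvPolynomial


lemma height_ge_of_wreg {A : Type*} [CommRing A] [IsNoetherianRing A] (xs : List A)
    (hx : IsWeaklyRegular A xs) (P : Ideal A) [P.IsPrime] (hP : ∀ x ∈ xs, x ∈ P) :
    (xs.length : ℕ∞) ≤ P.height := by
  have h := hx.isRegular_of_isLocalization_of_mem (Localization.AtPrime P) P hP
  have h2 := ringKrullDim_add_length_eq_ringKrullDim_of_isRegular _ h
  rw [IsLocalization.AtPrime.ringKrullDim_eq_height P (Localization.AtPrime P)] at h2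
  have hnt : Nontrivial (Localization.AtPrime P ⧸
      Ideal.ofList (xs.map (algebraMap A (Localization.AtPrime P)))) := by
    rw [Ideal.Quotient.nontrivial_iff]
    intro h3
    apply h.2
    rw [h3]; simp
  have h4 := ringKrullDim_nonneg_of_nontrivial (R := Localization.AtPrime P ⧸
      Ideal.ofList (xs.map (algebraMap A (Localization.AtPrime P))))
  have h5 : ((xs.length : ℕ∞) : WithBot ℕ∞) ≤ (P.height : WithBot ℕ∞) := by
    rw [← h2]
    simp only [List.length_map]
    exact le_add_of_nonneg_left h4
  exact_mod_cast h5

lemma height_add_of_surj {A D : Type*} [CommRing A] [CommRing D] (ρ : A →+* D)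
    (hρ : Function.Surjective ρ) (q : Ideal D) [q.IsPrime] (h c : ℕ)
    (hh : ∀ p : Ideal A, p.IsPrime → RingHom.ker ρ ≤ p → (h : ℕ∞) ≤ p.height)
    (hc : (c : ℕ∞) ≤ q.height) : ((h + c : ℕ) : ℕ∞) ≤ (q.comap ρ).height := by
  have hq : (c : ℕ∞) ≤ Order.height (⟨q, inferInstance⟩ : PrimeSpectrum D) := by
    rwa [← PrimeSpectrum.height_eq_orderHeight]
  obtain ⟨s, hs, hlen⟩ := Order.exists_series_of_le_height _ hq
  have hmono : StrictMono (PrimeSpectrum.comap ρ) := by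
    intro a b hab
    rw [lt_iff_le_not_ge] at hab ⊢
    refine ⟨Ideal.comap_mono hab.1, fun h => hab.2 ?_⟩
    intro x hx
    obtain ⟨y, rfl⟩ := hρ x
    exact h hx
  let s' := s.map _ hmono
  have h1 : (h : ℕ∞) ≤ Order.height s'.head := by
    rw [← PrimeSpectrum.height_eq_orderHeight]
    refine hh _ s'.head.2 ?_
    intro x hx
    show ρ x ∈ s.head.asIdeal
    rw [RingHom.mem_ker.mp hx]
    exact zero_mem _
  obtain ⟨r, hr, hlen2⟩ := Order.exists_series_of_le_height _ h1
  let u := r.smash s' hr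
  have h4 : u.length = r.length + s.length := rfl
  have hl : u.last = PrimeSpectrum.comap ρ ⟨q, inferInstance⟩ := by
    simp [u, s', hs]
  have := Order.length_le_height (p := u) (x := PrimeSpectrum.comap ρ ⟨q, inferInstance⟩) hl.le
  rw [← PrimeSpectrum.height_eq_orderHeight] at this
  rw [h4, hlen, hlen2] at this
  exact this

/-- the linear form with given coefficients -/
noncomputable def lf {A : Type*} [CommRing A] {N : ℕ} (v : Fin N → A) : MvPolynomial (Fin N) A :=
  ∑ j, C (v j) * X j

lemma height_lf_field {K : Type*} [Field K] {N t : ℕ} (v : Fin t → Fin N → K)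
    (hv : LinearIndependent K v) (P : Ideal (MvPolynomial (Fin N) K)) [P.IsPrime]
    (hP : ∀ i, lf (v i) ∈ P) : (t : ℕ∞) ≤ P.height := by
  classical
  have hinj : LinearMap.ker (Fintype.linearCombination K v) = ⊥ :=
    LinearMap.ker_eq_bot.mpr (by
      have := linearIndependent_iff_injective_fintypeLinearCombination.mp hv
      exact this)
  obtain ⟨γ, hγ⟩ := LinearMap.exists_leftInverse_of_injective _ hinj
  have hγv : ∀ m i, γ (v m) i = if m = i then 1 else 0 := by
    intro m i
    have := congrArg (fun F => F (Pi.single m 1) i) hγ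
    simp only [LinearMap.comp_apply, Fintype.linearCombination_apply_single, one_smul,
      LinearMap.id_apply, Pi.single_apply] at this
    rw [this]; simp [eq_comm]
  let w : Fin t → Fin N → K := fun i j => γ (Pi.single j 1) i
  have hw : ∀ m i, ∑ j, v m j * w i j = if m = i then 1 else 0 := by
    intro m i
    rw [← hγv m i]
    conv_rhs => rw [pi_eq_sum_univ' (v m)]
    simp [w, Finset.sum_apply]
  let pr : ℕ → MvPolynomial (Fin N) K →ₐ[K] MvPolynomial (Fin N) K := fun s =>
    aeval (fun j => X j - ∑ i : Fin t, if (i : ℕ) < s then C (w i j) * lf (v i) else 0)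
  have hpr : ∀ s m, pr s (lf (v m)) = if (m : ℕ) < s then 0 else lf (v m) := by
    intro s m
    have h1 : pr s (lf (v m)) = lf (v m) - ∑ i : Fin t, if (i : ℕ) < s then
        C (∑ j, v m j * w i j) * lf (v i) else 0 := by
      conv_lhs => rw [lf]
      simp only [map_sum, map_mul, pr, aeval_X, algHom_C, algebraMap_eq, mul_sub,
        Finset.sum_sub_distrib, Finset.mul_sum]
      congr 1
      rw [Finset.sum_comm]
      refine Finset.sum_congr rfl fun i _ => ?_
      split_ifs
      · rw [Finset.sum_mul]
        exact Finset.sum_congr rfl fun j _ => by ring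
      · simp
    rw [h1]
    simp only [hw]
    rw [Finset.sum_eq_single m]
    · rw [if_pos rfl]; split_ifs <;> simp
    · intro b _ hb
      simp [hb.symm]
    · simp
  have hne : ∀ m, lf (v m) ≠ 0 := by
    intro m h0
    have : v m = 0 := by
      ext j
      have := congrArg (coeff (Finsupp.single j 1)) h0
      simpa [lf, coeff_sum, coeff_C_mul, coeff_X, Finsupp.single_left_inj] using this
    exact hv.ne_zero m this
  have hle : ∀ s (I : Ideal (MvPolynomial (Fin N) K)),
      (∀ m : Fin t, (m : ℕ) < s → lf (v m) ∈ I) → RingHom.ker (pr s) ≤ I := by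
    intro s I hI F hF
    have h1 : ∀ F, F - pr s F ∈ I := by
      have : (Ideal.Quotient.mkₐ K I).comp (pr s) = Ideal.Quotient.mkₐ K I := by
        apply MvPolynomial.algHom_ext
        intro j
        simp only [AlgHom.comp_apply, pr, aeval_X, map_sub, map_sum]
        rw [Finset.sum_eq_zero, sub_zero]
        intro i _
        split_ifs with h
        · exact Ideal.Quotient.eq_zero_iff_mem.mpr (Ideal.mul_mem_left _ _ (hI i h))
        · simp
      intro F
      rw [← Ideal.Quotient.eq_zero_iff_mem, map_sub]
      have h2 := congrArg (fun G => G F) this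
      simp only [AlgHom.comp_apply] at h2
      exact sub_eq_zero.mpr h2.symm
    have := h1 F
    rwa [RingHom.mem_ker.mp hF, sub_zero] at this
  let s : LTSeries (PrimeSpectrum (MvPolynomial (Fin N) K)) :=
    { length := t
      toFun := fun i => ⟨RingHom.ker (pr i), RingHom.ker_isPrime _⟩
      step := by
        intro i
        show RingHom.ker (pr (i.castSucc : Fin (t+1))) < RingHom.ker (pr (i.succ : Fin (t+1)))
        rw [lt_iff_le_not_ge]
        constructor
        · apply hle
          intro m hm
          rw [RingHom.mem_ker, hpr, if_pos]
          simp at hm ⊢; omega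
        · intro h
          have h2 : lf (v i) ∈ RingHom.ker (pr (i.succ : Fin (t+1))) := by
            rw [RingHom.mem_ker, hpr, if_pos]; simp
          have := h h2
          rw [RingHom.mem_ker, hpr, if_neg (by simp)] at this
          exact hne i this }
  have := Order.length_le_height (p := s) (x := ⟨P, inferInstance⟩) (by
    show RingHom.ker (pr (Fin.last t : Fin (t+1))) ≤ P
    exact hle _ _ fun m _ => hP m)
  rw [← PrimeSpectrum.height_eq_orderHeight] at this
  exact this

attribute [local instance] algebraMvPolynomial

lemma height_lf_domain {D : Type*} [CommRing D] [IsDomain D] {N t : ℕ} (v : Fin t → Fin N → D)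
    (hv : ∀ a : Fin t → D, (∀ j, ∑ i, a i * v i j = 0) → ∀ i, a i = 0)
    (P : Ideal (MvPolynomial (Fin N) D)) [P.IsPrime]
    (hP0 : ∀ a : D, C a ∈ P → a = 0)
    (hP : ∀ i, lf (v i) ∈ P) : (t : ℕ∞) ≤ P.height := by
  let K := FractionRing D
  let M : Submonoid (MvPolynomial (Fin N) D) := (nonZeroDivisors D).map (C (σ := Fin N))
  have : IsLocalization M (MvPolynomial (Fin N) K) := inferInstance
  have hdis : Disjoint (M : Set (MvPolynomial (Fin N) D)) (P : Set (MvPolynomial (Fin N) D)) := by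
    rw [Set.disjoint_left]
    rintro _ ⟨a, ha, rfl⟩ h
    exact nonZeroDivisors.ne_zero ha (hP0 a h)
  rw [← IsLocalization.height_map_of_disjoint (S := MvPolynomial (Fin N) K) M P hdis]
  have := IsLocalization.isPrime_of_isPrime_disjoint M (MvPolynomial (Fin N) K) P ‹_› hdis
  refine height_lf_field (fun i j => algebraMap D K (v i j)) ?_ _ ?_
  · have h1 : LinearIndependent D (fun i j => algebraMap D K (v i j)) := by
      rw [Fintype.linearIndependent_iff]
      intro a ha
      apply hv a
      intro j
      apply FaithfulSMul.algebraMap_injective D K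
      have := congrFun ha j
      simpa [Finset.sum_apply, Algebra.smul_def] using this
    exact (LinearIndependent.iff_fractionRing D K).mp h1
  · intro i
    have := Ideal.mem_map_of_mem (algebraMap (MvPolynomial (Fin N) D) (MvPolynomial (Fin N) K)) (hP i)
    convert this using 1
    rw [show algebraMap (MvPolynomial (Fin N) D) (MvPolynomial (Fin N) K) =
      MvPolynomial.map (algebraMap D K) from rfl]
    simp only [lf, map_sum, map_mul, map_C, map_X]

lemma height_lf {A : Type*} [CommRing A] {N t h : ℕ} (v : Fin t → Fin N → A)
    (P : Ideal (MvPolynomial (Fin N) A)) [P.IsPrime]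
    (hh : (h : ℕ∞) ≤ (P.comap C).height)
    (hv : ∀ a : Fin t → A, (∀ j, C (∑ i, a i * v i j) ∈ P) → ∀ i, C (a i) ∈ P)
    (hP : ∀ i, lf (v i) ∈ P) : ((h + t : ℕ) : ℕ∞) ≤ P.height := by
  let p := P.comap C
  have hp : p.IsPrime := inferInstance
  let ρ : MvPolynomial (Fin N) A →+* MvPolynomial (Fin N) (A ⧸ p) :=
    MvPolynomial.map (Ideal.Quotient.mk p)
  have hρ : Function.Surjective ρ := MvPolynomial.map_surjective _ Ideal.Quotient.mk_surjective
  have hker : ∀ (I : Ideal A) (F : MvPolynomial (Fin N) A),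
      F ∈ RingHom.ker (MvPolynomial.map (Ideal.Quotient.mk I)) ↔ ∀ m, coeff m F ∈ I := by
    intro I F
    rw [RingHom.mem_ker, MvPolynomial.ext_iff]
    simp only [coeff_map, coeff_zero, Ideal.Quotient.eq_zero_iff_mem]
  have hkerP : RingHom.ker ρ ≤ P := by
    intro F hF
    rw [hker] at hF
    rw [F.as_sum]
    refine sum_mem fun m _ => ?_
    rw [← mul_one (coeff m F), ← C_mul_monomial]
    exact Ideal.mul_mem_right _ _ (hF m)
  have hcm : (P.map ρ).comap ρ = P := by
    rw [Ideal.comap_map_of_surjective' ρ hρ, sup_eq_left.mpr hkerP]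
  have hmp : (P.map ρ).IsPrime := Ideal.map_isPrime_of_surjective hρ hkerP
  have hmem : ∀ F, ρ F ∈ P.map ρ ↔ F ∈ P := by
    intro F
    rw [← Ideal.mem_comap, hcm]
  rw [← hcm]
  refine height_add_of_surj ρ hρ (P.map ρ) h t ?_ ?_
  · intro q hq hle
    have h1 : (h : ℕ∞) ≤ Order.height (⟨p, inferInstance⟩ : PrimeSpectrum A) := by
      rwa [← PrimeSpectrum.height_eq_orderHeight]
    obtain ⟨s, hs, hlen⟩ := Order.exists_series_of_le_height _ h1
    let F : PrimeSpectrum A → PrimeSpectrum (MvPolynomial (Fin N) A) := fun I =>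
      ⟨RingHom.ker (MvPolynomial.map (Ideal.Quotient.mk I.asIdeal)), RingHom.ker_isPrime _⟩
    have hF : StrictMono F := by
      intro a b hab
      rw [lt_iff_le_not_ge] at hab ⊢
      constructor
      · intro x hx
        have hx' := (hker _ _).mp hx
        exact (hker _ _).mpr fun m => hab.1 (hx' m)
      · intro hba
        apply hab.2
        intro x hx
        have h1 : (C x : MvPolynomial (Fin N) A) ∈ (F b).asIdeal := by
          simpa [F, RingHom.mem_ker, Ideal.Quotient.eq_zero_iff_mem] using hx
        have h2 := hba h1
        simpa [F, RingHom.mem_ker, Ideal.Quotient.eq_zero_iff_mem] using h2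
    have := Order.length_le_height (p := s.map F hF) (x := ⟨q, hq⟩) (by
      simp only [LTSeries.last_map, hs]
      exact hle)
    rw [← PrimeSpectrum.height_eq_orderHeight] at this
    rwa [LTSeries.map_length, hlen] at this
  · refine height_lf_domain (fun i j => Ideal.Quotient.mk p (v i j)) ?_ _ ?_ ?_
    · intro a ha
      choose a' ha' using fun i => Ideal.Quotient.mk_surjective (a i)
      intro i
      rw [← ha' i, Ideal.Quotient.eq_zero_iff_mem]
      refine hv a' ?_ i
      intro j
      have := ha j
      simp only [← ha', ← map_mul, ← map_sum] at this
      have h3 : _ ∈ p := Ideal.Quotient.eq_zero_iff_mem.mp this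
      exact h3
    · intro a ha
      obtain ⟨b, rfl⟩ := Ideal.Quotient.mk_surjective a
      have h1 : ρ (C b) ∈ P.map ρ := by simpa [ρ] using ha
      rw [hmem] at h1
      exact Ideal.Quotient.eq_zero_iff_mem.mpr h1
    · intro i
      have := (hmem _).mpr (hP i)
      simpa [lf, ρ] using this

end

section
open Module


lemma loc_clear {R : Type*} [CommRing R] (q : Ideal R) [q.IsPrime] {E : Type*} [AddCommGroup E]
    [Module R E] (s : Finset (LocalizedModule q.primeCompl E))
    (hs : Submodule.span (Localization.AtPrime q)
          (s : Set (LocalizedModule q.primeCompl E)) = ⊤) :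
    ∃ m : s → E, ∀ x : E, ∃ u : R, u ∉ q ∧ u • x ∈ Submodule.span R (Set.range m) := by
  let f := LocalizedModule.mkLinearMap q.primeCompl E
  have h1 : ∀ x : s, ∃ m : E, ∃ u : q.primeCompl, IsLocalizedModule.mk' f m u = x := by
    intro x
    obtain ⟨⟨m, u⟩, h⟩ := IsLocalizedModule.mk'_surjective q.primeCompl f x
    exact ⟨m, u, h⟩
  choose m u hmu using h1
  refine ⟨m, fun x => ?_⟩
  have h2 : (Submodule.span R (Set.range m)).localized' (Localization.AtPrime q) q.primeCompl f
      = ⊤ := by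
    rw [eq_top_iff, ← hs, Submodule.span_le]
    intro y hy
    exact ⟨m ⟨y, hy⟩, Submodule.subset_span ⟨_, rfl⟩, u ⟨y, hy⟩, hmu ⟨y, hy⟩⟩
  have h3 : f x ∈ (Submodule.span R (Set.range m)).localized' (Localization.AtPrime q)
      q.primeCompl f := by rw [h2]; trivial
  obtain ⟨y, hy, t, hyt⟩ := h3
  rw [IsLocalizedModule.mk'_eq_iff] at hyt
  rw [Submonoid.smul_def, ← map_smul] at hyt
  obtain ⟨c, hc⟩ := (IsLocalizedModule.eq_iff_exists q.primeCompl f).mp hyt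
  refine ⟨c * t, (c * t).2, ?_⟩
  rw [mul_smul]
  have : (c : R) • (t : R) • x = (c : R) • y := hc.symm
  rw [this]
  exact Submodule.smul_mem _ _ hy

lemma cols_indep {R : Type} [CommRing R] [IsNoetherianRing R] (d e : ℕ)
    (φ : Matrix (Fin (d + e)) (Fin d) R) (hinj : Function.Injective φ.mulVecLin)
    (E : Type) [AddCommGroup E] [Module R E] (π : (Fin (d + e) → R) →ₗ[R] E)
    (hsurj : Function.Surjective π)
    (hker : LinearMap.ker π = LinearMap.range φ.mulVecLin)
    (q : Ideal R) [q.IsPrime] (c : ℕ) (hc : q.height = c)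
    (hG : 1 ≤ c → ∃ s : Finset (LocalizedModule q.primeCompl E), s.card ≤ c + e - 1 ∧
        Submodule.span (Localization.AtPrime q)
          (s : Set (LocalizedModule q.primeCompl E)) = ⊤) :
    ∃ σ : Fin (d - c) → Fin d, ∀ a : Fin (d - c) → R,
      (∀ j, ∑ i, a i * φ j (σ i) ∈ q) → ∀ i, a i ∈ q := by
  classical
  rcases Nat.eq_zero_or_pos c with rfl | hcpos
  · refine ⟨id, fun a ha => ?_⟩
    have hmin : q ∈ minimalPrimes R := by
      rw [← Ideal.height_eq_zero_iff]
      simpa using hc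
    have hass : q ∈ associatedPrimes R R := by
      apply Module.associatedPrimes.minimalPrimes_annihilator_subset_associatedPrimes R R
      rw [Module.annihilator_eq_bot.mpr inferInstance]
      exact hmin
    obtain ⟨-, x, hx⟩ := isAssociatedPrime_iff.mp hass
    have hmem : ∀ r, r ∈ q ↔ r * x = 0 := by
      intro r
      rw [hx]
      simp [Submodule.mem_colon_singleton]
    have h0 : φ.mulVecLin (fun i => x * a i) = 0 := by
      ext j
      have := (hmem _).mp (ha j)
      simp only [Matrix.mulVecLin_apply, Matrix.mulVec, dotProduct, Pi.zero_apply]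
      rw [← this, Finset.sum_mul]
      exact Finset.sum_congr rfl fun i _ => by simp only [id]; ring
    have h1 := hinj (h0.trans (map_zero _).symm)
    intro i
    rw [hmem, mul_comm]
    exact congrFun h1 i
  · obtain ⟨s, hcard, hs⟩ := hG hcpos
    obtain ⟨m, hm⟩ := loc_clear q s hs
    choose w hw using fun x => hsurj (m x)
    let K := q.ResidueField
    let θ : (Fin (d + e) → R) →ₗ[R] (Fin (d + e) → K) := (Algebra.linearMap R K).compLeft _
    have hθ : ∀ v j, θ v j = algebraMap R K (v j) := fun _ _ => rfl
    let col : Fin d → (Fin (d + e) → K) := fun i j => algebraMap R K (φ j i)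
    let W := Submodule.span K (Set.range col)
    let V := Submodule.span K (Set.range fun x => θ (w x))
    have htop : W ⊔ V = ⊤ := by
      rw [eq_top_iff, ← (Pi.basisFun K (Fin (d + e))).span_eq, Submodule.span_le]
      rintro _ ⟨j, rfl⟩
      obtain ⟨u, hu, hmem⟩ := hm (π (Pi.single j 1))
      have h1 : u • π (Pi.single j 1) ∈ (Submodule.span R (Set.range w)).map π := by
        rw [Submodule.map_span, ← Set.range_comp]
        convert hmem using 3
        ext x; exact hw x
      obtain ⟨z, hz, hzu⟩ := h1
      have h2 : u • (Pi.single j 1 : Fin (d + e) → R) - z ∈ LinearMap.ker π := by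
        rw [LinearMap.mem_ker, map_sub, map_smul, hzu, sub_self]
      rw [hker] at h2
      obtain ⟨b, hb⟩ := h2
      have h3 : θ z ∈ V := by
        have : θ z ∈ (Submodule.span R (Set.range w)).map θ := ⟨z, hz, rfl⟩
        rw [Submodule.map_span, ← Set.range_comp] at this
        exact Submodule.span_le_restrictScalars R K _ this
      have h4 : θ (φ.mulVecLin b) ∈ W := by
        have : θ (φ.mulVecLin b) = ∑ i, algebraMap R K (b i) • col i := by
          ext j
          simp [hθ, col, Matrix.mulVec, dotProduct, Finset.sum_apply, Algebra.smul_def, mul_comm]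
        rw [this]
        exact sum_mem fun i _ => Submodule.smul_mem _ _ (Submodule.subset_span ⟨i, rfl⟩)
      have h5 : algebraMap R K u • (Pi.basisFun K (Fin (d + e)) j) ∈ W ⊔ V := by
        have : algebraMap R K u • (Pi.basisFun K (Fin (d + e)) j)
            = θ (φ.mulVecLin b) + θ z := by
          rw [hb, ← map_add, sub_add_cancel]
          ext j'
          by_cases hj : j' = j
          · subst hj; simp [hθ]
          · simp [hθ, hj]
        rw [this]
        exact add_mem (Submodule.mem_sup_left h4) (Submodule.mem_sup_right h3)
      have hu0 : algebraMap R K u ≠ 0 := by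
        rwa [Ne, Ideal.algebraMap_residueField_eq_zero]
      exact (Submodule.smul_mem_iff _ hu0).mp h5
    have hV : finrank K V ≤ s.card := by
      have := finrank_range_le_card (R := K) (fun x => θ (w x))
      simpa [Set.finrank] using this
    have hW : d - c ≤ finrank K W := by
      have h1 := Submodule.finrank_add_le_finrank_add_finrank W V
      rw [htop, finrank_top, Module.finrank_fin_fun] at h1
      omega
    obtain ⟨g, hg1, hg2, hg3⟩ := Submodule.exists_fun_fin_finrank_span_eq K (Set.range col)
    choose σ hσ using hg1
    refine ⟨fun i => σ (Fin.castLE hW i), fun a ha => ?_⟩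
    have hli : LinearIndependent K (fun i : Fin (d - c) => col (σ (Fin.castLE hW i))) := by
      have := hg3.comp (Fin.castLE hW) (Fin.castLE_injective hW)
      have he : (fun i : Fin (d - c) => col (σ (Fin.castLE hW i))) = g ∘ Fin.castLE hW :=
        funext fun i => hσ _
      rw [he]
      exact this
    rw [Fintype.linearIndependent_iff] at hli
    intro i
    rw [← Ideal.algebraMap_residueField_eq_zero]
    refine hli (fun i => algebraMap R K (a i)) ?_ i
    ext j
    have := Ideal.algebraMap_residueField_eq_zero.mpr (ha j)
    simpa [Finset.sum_apply, Algebra.smul_def, col] using this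

end

section
open RingTheory.Sequence Module MvPolynomial


lemma height_main {k : Type} [Field k] (d e : ℕ)
    (f g : MvPolynomial (Fin (d + 2)) k)
    (hfg : IsRegular (MvPolynomial (Fin (d + 2)) k) [f, g])
    (E : Type) [AddCommGroup E]
    [Module (MvPolynomial (Fin (d + 2)) k ⧸
      (Ideal.span {f, g} : Ideal (MvPolynomial (Fin (d + 2)) k))) E]
    (ψ : Matrix (Fin (d + e)) (Fin d) (MvPolynomial (Fin (d + 2)) k))
    (φ : Matrix (Fin (d + e)) (Fin d) (MvPolynomial (Fin (d + 2)) k ⧸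
      (Ideal.span {f, g} : Ideal (MvPolynomial (Fin (d + 2)) k))))
    (hφψ : ∀ i j, φ i j = Ideal.Quotient.mk _ (ψ i j))
    (hinj : Function.Injective φ.mulVecLin)
    (π : (Fin (d + e) → (MvPolynomial (Fin (d + 2)) k ⧸
        (Ideal.span {f, g} : Ideal (MvPolynomial (Fin (d + 2)) k)))) →ₗ[MvPolynomial (Fin (d + 2)) k ⧸
        (Ideal.span {f, g} : Ideal (MvPolynomial (Fin (d + 2)) k))] E)
    (hsurj : Function.Surjective π)
    (hker : LinearMap.ker π = LinearMap.range φ.mulVecLin)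
    (hGd : ∀ (p : Ideal (MvPolynomial (Fin (d + 2)) k ⧸
        (Ideal.span {f, g} : Ideal (MvPolynomial (Fin (d + 2)) k)))) (_ : p.IsPrime) (c : ℕ),
      ringKrullDim (Localization.AtPrime p) = (c : WithBot ℕ∞) → 1 ≤ c → c ≤ d - 1 →
      ∃ s : Finset (LocalizedModule p.primeCompl E), s.card ≤ c + e - 1 ∧
        Submodule.span (Localization.AtPrime p)
          (s : Set (LocalizedModule p.primeCompl E)) = ⊤)
    (P : Ideal (MvPolynomial (Fin (d + e)) (MvPolynomial (Fin (d + 2)) k))) [P.IsPrime]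
    (hfP : C f ∈ P) (hgP : C g ∈ P) (hl : ∀ i, lf (fun j => ψ j i) ∈ P) :
    ((d + 2 : ℕ) : ℕ∞) ≤ P.height := by
  let p := P.comap C
  let I : Ideal (MvPolynomial (Fin (d + 2)) k) := Ideal.span {f, g}
  have hIp : I ≤ p := by
    rw [Ideal.span_le]
    rintro x (rfl | rfl)
    · exact hfP
    · exact hgP
  let μ := Ideal.Quotient.mk I
  have hμ : Function.Surjective μ := Ideal.Quotient.mk_surjective
  have hkμ : RingHom.ker μ ≤ p := by rwa [Ideal.mk_ker]
  let q := p.map μ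
  have hq : q.IsPrime := Ideal.map_isPrime_of_surjective hμ hkμ
  have hcm : q.comap μ = p := by
    rw [Ideal.comap_map_of_surjective' μ hμ, sup_eq_left.mpr hkμ]
  have hmem : ∀ x, μ x ∈ q ↔ x ∈ p := by
    intro x
    rw [← Ideal.mem_comap, hcm]
  obtain ⟨c, hc⟩ := ENat.ne_top_iff_exists.mp (Ideal.height_ne_top (I := q) hq.ne_top)
  have hp2 : ((2 + c : ℕ) : ℕ∞) ≤ p.height := by
    rw [← hcm]
    refine height_add_of_surj μ hμ q 2 c ?_ hc.le
    intro p' hp' hle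
    rw [Ideal.mk_ker] at hle
    refine height_ge_of_wreg [f, g] hfg.toIsWeaklyRegular p' ?_
    intro x hx
    apply hle
    apply Ideal.subset_span
    simpa using hx
  have key : ∃ σ : Fin (d - c) → Fin d, ∀ a : Fin (d - c) → _,
      (∀ j, ∑ i, a i * φ j (σ i) ∈ q) → ∀ i, a i ∈ q := by
    rcases le_or_gt d c with h | h
    · have : d - c = 0 := by omega
      exact ⟨fun i => absurd i.2 (by omega), fun a _ i => absurd i.2 (by omega)⟩
    · refine cols_indep d e φ hinj E π hsurj hker q c hc.symm ?_
      intro h1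
      refine hGd q hq c ?_ h1 (by omega)
      refine (IsLocalization.AtPrime.ringKrullDim_eq_height q (Localization.AtPrime q)).trans ?_
      rw [← hc]
      rfl
  obtain ⟨σ, hσ⟩ := key
  have := height_lf (fun i j => ψ j (σ i)) P hp2 ?_ (fun i => hl _)
  · refine le_trans ?_ this
    exact_mod_cast (by omega : d + 2 ≤ 2 + c + (d - c))
  · intro a ha i
    have h1 := hσ (fun i => μ (a i)) (by
      intro j
      have h2 := (hmem _).mpr (show (∑ i, a i * ψ j (σ i)) ∈ p from ha j)
      simp only [hφψ]
      simpa [map_sum] using h2) i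
    exact (hmem _).mp h1

lemma exists_eps (k : Type) [Field k] (a b : ℕ) :
    ∃ ε : MvPolynomial (Fin a ⊕ Fin b) k ≃+* MvPolynomial (Fin b) (MvPolynomial (Fin a) k),
      (∀ s, ε (rename Sum.inl s) = C s) ∧ ∀ j, ε (X (Sum.inr j)) = X j := by
  let ε : MvPolynomial (Fin a ⊕ Fin b) k ≃ₐ[k] MvPolynomial (Fin b) (MvPolynomial (Fin a) k) :=
    (renameEquiv k (Equiv.sumComm _ _)).trans (sumAlgEquiv k (Fin b) (Fin a))
  refine ⟨ε.toRingEquiv, ?_, ?_⟩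
  · intro s
    show ε (rename Sum.inl s) = C s
    simp only [ε, AlgEquiv.trans_apply, renameEquiv_apply, rename_rename]
    induction s using MvPolynomial.induction_on with
    | C a => simp
    | add p q hp hq => rw [map_add, map_add, hp, hq, C_add]
    | mul_X p i hp => rw [map_mul, map_mul, hp, C_mul]; simp
  · intro j
    show ε (X (Sum.inr j)) = X j
    simp [ε]

theorem reg_main {k : Type} [Field k] (d e : ℕ)
    (f g : MvPolynomial (Fin (d + 2)) k)
    (hf : f ∈ homogeneousSubmodule (Fin (d + 2)) k 2)
    (hg : g ∈ homogeneousSubmodule (Fin (d + 2)) k 2)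
    (hfg : IsRegular (MvPolynomial (Fin (d + 2)) k) [f, g])
    (E : Type) [AddCommGroup E]
    [Module (MvPolynomial (Fin (d + 2)) k ⧸
      (Ideal.span {f, g} : Ideal (MvPolynomial (Fin (d + 2)) k))) E]
    (ψ : Matrix (Fin (d + e)) (Fin d) (MvPolynomial (Fin (d + 2)) k))
    (hψlin : ∀ i j, ψ i j ∈ homogeneousSubmodule (Fin (d + 2)) k 1)
    (φ : Matrix (Fin (d + e)) (Fin d) (MvPolynomial (Fin (d + 2)) k ⧸
      (Ideal.span {f, g} : Ideal (MvPolynomial (Fin (d + 2)) k))))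
    (hφψ : ∀ i j, φ i j = Ideal.Quotient.mk _ (ψ i j))
    (hinj : Function.Injective φ.mulVecLin)
    (π : (Fin (d + e) → (MvPolynomial (Fin (d + 2)) k ⧸
        (Ideal.span {f, g} : Ideal (MvPolynomial (Fin (d + 2)) k)))) →ₗ[MvPolynomial (Fin (d + 2)) k ⧸
        (Ideal.span {f, g} : Ideal (MvPolynomial (Fin (d + 2)) k))] E)
    (hsurj : Function.Surjective π)
    (hker : LinearMap.ker π = LinearMap.range φ.mulVecLin)
    (hGd : ∀ (p : Ideal (MvPolynomial (Fin (d + 2)) k ⧸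
        (Ideal.span {f, g} : Ideal (MvPolynomial (Fin (d + 2)) k)))) (_ : p.IsPrime) (c : ℕ),
      ringKrullDim (Localization.AtPrime p) = (c : WithBot ℕ∞) → 1 ≤ c → c ≤ d - 1 →
      ∃ s : Finset (LocalizedModule p.primeCompl E), s.card ≤ c + e - 1 ∧
        Submodule.span (Localization.AtPrime p)
          (s : Set (LocalizedModule p.primeCompl E)) = ⊤)
    (ℓ : Fin d → MvPolynomial (Fin (d + 2) ⊕ Fin (d + e)) k)
    (hℓ : ∀ i, ℓ i = ∑ j, (rename Sum.inl (ψ j i)) * X (Sum.inr j)) :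
    IsRegular (MvPolynomial (Fin (d + 2) ⊕ Fin (d + e)) k)
      (List.ofFn ℓ ++ [rename Sum.inl f, rename Sum.inl g]) := by
  apply graded_wreg
  · intro x hx
    refine ⟨2, by norm_num, ?_⟩
    rw [List.mem_append, List.mem_ofFn] at hx
    rcases hx with ⟨i, rfl⟩ | hx
    · rw [hℓ]
      refine IsHomogeneous.sum _ _ _ fun j _ => ?_
      have h1 := ((mem_homogeneousSubmodule _ _).mp (hψlin j i)).rename_isHomogeneous
        (f := (Sum.inl : _ → Fin (d + 2) ⊕ Fin (d + e)))
      exact h1.mul (isHomogeneous_X k _)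
    · simp only [List.mem_cons, List.not_mem_nil, or_false] at hx
      rcases hx with rfl | rfl
      · exact ((mem_homogeneousSubmodule _ _).mp hf).rename_isHomogeneous
      · exact ((mem_homogeneousSubmodule _ _).mp hg).rename_isHomogeneous
  · intro P hP hle
    obtain ⟨ε, hεC, hεX⟩ := exists_eps k (d + 2) (d + e)
    have hmem : ∀ x, ε x ∈ P.comap ε.symm ↔ x ∈ P := by
      intro x
      rw [Ideal.mem_comap]
      simp
    have hPl : ∀ x ∈ List.ofFn ℓ ++ [rename Sum.inl f, rename Sum.inl g], x ∈ P :=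
      fun x hx => hle (Ideal.subset_span hx)
    have := height_main d e f g hfg E ψ φ hφψ hinj π hsurj hker hGd
      (P.comap ε.symm) ?_ ?_ ?_
    · rw [RingEquiv.height_comap ε.symm P] at this
      simpa using this
    · rw [← hεC, hmem]
      exact hPl _ (by simp)
    · rw [← hεC, hmem]
      exact hPl _ (by simp)
    · intro i
      have h1 : lf (fun j => ψ j i) = ε (ℓ i) := by
        rw [hℓ, map_sum]
        simp only [lf, map_mul, hεC, hεX]
      rw [h1, hmem]
      exact hPl _ (by simp)

end

section
open RingTheory.Sequence Module MvPolynomial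


lemma rank_strand_aux {T W V : Type} [CommRing T] [IsDomain T] [AddCommGroup W] [Module T W]
    [AddCommGroup V] [Module T V] (N : Submodule T W) (ρ : W →ₗ[T] V) (c : T) (hc : c ≠ 0)
    (h1 : ∀ v, c • v ∈ LinearMap.range ρ) (h2 : ∀ w, ρ w = 0 → c • w ∈ N) :
    Module.rank T (W ⧸ N) + Module.rank T (N.map ρ) = Module.rank T V := by
  let Q := V ⧸ N.map ρ
  have hQ : Module.rank T Q + Module.rank T (N.map ρ) = Module.rank T V :=
    rank_quotient_add_rank_of_isDomain _
  let F : (W ⧸ N) →ₗ[T] Q := N.mapQ (N.map ρ) ρ (Submodule.map_le_iff_le_comap.mp le_rfl)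
  have hker : Module.rank T (LinearMap.ker F) = 0 := by
    rw [rank_eq_zero_iff]
    rintro ⟨x, hx⟩
    refine ⟨c, hc, ?_⟩
    obtain ⟨w, rfl⟩ := Submodule.Quotient.mk_surjective _ x
    rw [LinearMap.mem_ker, Submodule.mapQ_apply, Submodule.Quotient.mk_eq_zero] at hx
    obtain ⟨n, hn, hnw⟩ := hx
    ext
    show c • (Submodule.Quotient.mk w : W ⧸ N) = 0
    rw [← Submodule.Quotient.mk_smul, Submodule.Quotient.mk_eq_zero]
    have h3 := h2 (w - n) (by rw [map_sub, hnw, sub_self])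
    have h4 : c • w = c • (w - n) + c • n := by rw [← smul_add, sub_add_cancel]
    rw [h4]
    exact add_mem h3 (N.smul_mem _ hn)
  have hcok : Module.rank T (Q ⧸ LinearMap.range F) = 0 := by
    rw [rank_eq_zero_iff]
    intro x
    refine ⟨c, hc, ?_⟩
    obtain ⟨y, rfl⟩ := Submodule.Quotient.mk_surjective _ x
    obtain ⟨v, rfl⟩ := Submodule.Quotient.mk_surjective _ y
    rw [← Submodule.Quotient.mk_smul, Submodule.Quotient.mk_eq_zero]
    obtain ⟨w, hw⟩ := h1 v
    refine ⟨Submodule.Quotient.mk w, ?_⟩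
    rw [Submodule.mapQ_apply, hw, Submodule.Quotient.mk_smul]
  have e1 := rank_quotient_add_rank_of_isDomain (LinearMap.range F)
  have e2 := LinearMap.rank_range_add_rank_ker F
  rw [hcok, zero_add] at e1
  rw [hker, add_zero] at e2
  rw [← hQ, ← e2, e1]

lemma rank_homog_two {T : Type} [CommRing T] [Nontrivial T] (j : ℕ) :
    Module.rank T (homogeneousSubmodule (Fin 2) T j) = ((j + 1 : ℕ) : Cardinal) := by
  classical
  let ex : Fin (j + 1) → (Fin 2 →₀ ℕ) := fun i =>
    Finsupp.single 0 (i : ℕ) + Finsupp.single 1 (j - i)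
  have hex0 : ∀ i, ex i 0 = i := by intro i; simp [ex]
  have hex1 : ∀ i, ex i 1 = j - i := by intro i; simp [ex]
  have hexinj : Function.Injective ex := by
    intro a b h
    have := DFunLike.congr_fun h 0
    rw [hex0, hex0] at this
    exact Fin.ext this
  have hdeg : ∀ i, (ex i).degree = j := by
    intro i
    simp only [ex, map_add, Finsupp.degree_single]
    omega
  let F : (homogeneousSubmodule (Fin 2) T j) →ₗ[T] (Fin (j + 1) → T) :=
    LinearMap.pi fun i => (lcoeff T (ex i)).comp (Submodule.subtype _)
  have hF : Function.Bijective F := by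
    constructor
    · rw [injective_iff_map_eq_zero]
      rintro ⟨p, hp⟩ h
      ext m
      show coeff m p = 0
      by_contra hne
      have hm : m.degree = j := by
        have := (mem_homogeneousSubmodule _ _).mp hp hne
        rw [Finsupp.degree_eq_weight_one]; exact this
      have hm2 : m 0 + m 1 = j := by
        rw [← hm, Finsupp.degree_eq_sum]; simp
      have : m = ex ⟨m 0, by omega⟩ := by
        ext a
        fin_cases a
        · show m 0 = ex _ 0
          rw [hex0]
        · refine Eq.trans ?_ (hex1 _).symm
          show m 1 = j - m 0
          omega
      apply hne
      rw [this]
      exact congrFun h ⟨m 0, by omega⟩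
    · intro c
      refine ⟨⟨∑ i, monomial (ex i) (c i), ?_⟩, ?_⟩
      · rw [mem_homogeneousSubmodule]
        exact IsHomogeneous.sum _ _ _ fun i _ => isHomogeneous_monomial _ (hdeg i)
      · ext i
        show coeff (ex i) (∑ i, monomial (ex i) (c i)) = c i
        simp [coeff_sum, coeff_monomial, hexinj.eq_iff]
  rw [(LinearEquiv.ofBijective F hF).rank_eq, rank_fun']
  simp

attribute [local instance] MvPolynomial.gradedAlgebra

lemma hc_mul_zero {k : Type*} [CommRing k] {σ : Type*} (x a : MvPolynomial σ k) (n j : ℕ)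
    (hx : x.IsHomogeneous n) (hj : j < n) :
    homogeneousComponent j (x * a) = 0 := by
  have h := DirectSum.coe_decompose_mul_of_left_mem_of_not_le (homogeneousSubmodule σ k)
    (a := x) (b := a) (i := n) (n := j) hx (by omega)
  rwa [dec_eq] at h

lemma pair_deg {k : Type*} [CommRing k] {σ : Type*} (a b F : MvPolynomial σ k)
    (ha : a.IsHomogeneous 2) (hb : b.IsHomogeneous 2) (hF : F ∈ Ideal.span {a, b}) (j : ℕ)
    (hFj : F.IsHomogeneous j) : (j < 2 → F = 0) ∧ (j = 2 → ∃ s t : k, F = s • a + t • b) := by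
  obtain ⟨p, q, rfl⟩ := Ideal.mem_span_pair.mp hF
  have h : ∀ m, homogeneousComponent m (p * a + q * b) = if m = j then (p * a + q * b) else 0 :=
    fun m => homogeneousComponent_of_mem hFj
  constructor
  · intro hj
    have h2 := h j
    rw [if_pos rfl, map_add, mul_comm p, mul_comm q, hc_mul_zero _ _ _ _ ha hj,
      hc_mul_zero _ _ _ _ hb hj, add_zero] at h2
    rw [mul_comm p, mul_comm q]
    exact h2.symm
  · rintro rfl
    have h2 := h 2
    have h3 := hc_mul a p 2 0 ha
    have h4 := hc_mul b q 2 0 hb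
    rw [add_zero] at h3 h4
    rw [if_pos rfl, map_add, mul_comm p, mul_comm q, h3, h4] at h2
    refine ⟨coeff 0 p, coeff 0 q, ?_⟩
    rw [mul_comm p, mul_comm q, ← h2, homogeneousComponent_zero, homogeneousComponent_zero,
      smul_eq_C_mul, smul_eq_C_mul, mul_comm a, mul_comm b]

lemma wreg_const_indep {T : Type*} [CommRing T] {σ : Type*} {n : ℕ} (r : Fin n → MvPolynomial σ T)
    (h : IsWeaklyRegular (MvPolynomial σ T) (List.ofFn r)) (h0 : ∀ i, constantCoeff (r i) = 0)
    (a : Fin n → T) (ha : ∑ i, C (a i) * r i = 0) : ∀ i, a i = 0 := by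
  rw [wreg_iff] at h
  have key : ∀ m, ∀ i : Fin n, n ≤ i + m → a i = 0 := by
    intro m
    induction m with
    | zero => intro i hi; have := i.2; omega
    | succ m ih =>
      intro i hi
      have h1 := h i (by simp) (C (a i)) (by
        have h2 : r i * C (a i) = - ∑ x ∈ Finset.univ.erase i, C (a x) * r x := by
          rw [eq_neg_iff_add_eq_zero, ← ha, ← Finset.add_sum_erase _ _ (Finset.mem_univ i),
            mul_comm]
        simp only [List.getElem_ofFn]
        rw [h2]
        refine neg_mem (sum_mem fun x hx => ?_)
        have hne : x ≠ i := Finset.ne_of_mem_erase hx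
        rcases lt_or_gt_of_ne hne with hlt | hgt
        · refine Ideal.mul_mem_left _ _ (Ideal.subset_span ?_)
          show r x ∈ List.take i (List.ofFn r)
          rw [List.mem_take_iff_getElem]
          refine ⟨x, ?_, by simp⟩
          have : (x : ℕ) < i := hlt
          simp only [List.length_ofFn]; have := x.2; omega
        · have : (i : ℕ) < x := hgt
          rw [ih x (by omega)]
          simp)
      have h3 : Ideal.ofList (List.take i (List.ofFn r)) ≤
          RingHom.ker (constantCoeff : MvPolynomial σ T →+* T) := by
        rw [Ideal.ofList, Ideal.span_le]
        intro y hy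
        have := List.mem_of_mem_take (show y ∈ List.take i (List.ofFn r) from hy)
        rw [List.mem_ofFn] at this
        obtain ⟨x, rfl⟩ := this
        exact h0 x
      simpa [RingHom.mem_ker] using h3 h1
  intro i
  exact key n i (by omega)

end

section
open RingTheory.Sequence Module MvPolynomial


lemma exists_ext_matrix {T : Type} [CommRing T] [IsDomain T] (d : ℕ)
    (v : Fin d → (Fin (d + 2) → T)) (hv : LinearIndependent T v) :
    ∃ M : Matrix (Fin (d + 2)) (Fin (d + 2)) T, M.det ≠ 0 ∧
      ∀ i : Fin d, M (Fin.castAdd 2 i) = v i := by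
  obtain ⟨x, hx⟩ := exists_linearIndependent_snoc_of_lt_finrank hv (by simp)
  obtain ⟨y, hy⟩ := exists_linearIndependent_snoc_of_lt_finrank hx (by simp)
  refine ⟨Matrix.of (Fin.snoc (α := fun _ => Fin (d + 2) → T)
    (Fin.snoc (α := fun _ => Fin (d + 2) → T) v x) y), ?_, ?_⟩
  · intro h0
    obtain ⟨w, hw, hw0⟩ := Matrix.exists_vecMul_eq_zero_iff.mpr h0
    apply hw
    funext i
    refine Fintype.linearIndependent_iff.mp hy w ?_ i
    rw [← hw0]
    funext j
    simp [Matrix.vecMul, dotProduct]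
  · intro i
    have : (Fin.castAdd 2 i) = (i.castSucc).castSucc := rfl
    rw [this]
    show Fin.snoc (α := fun _ => Fin (d + 2) → T)
      (Fin.snoc (α := fun _ => Fin (d + 2) → T) v x) y (i.castSucc).castSucc = v i
    rw [Fin.snoc_castSucc, Fin.snoc_castSucc]

noncomputable def lsub {T : Type} [CommRing T] {m : ℕ} (M : Matrix (Fin m) (Fin m) T) :
    MvPolynomial (Fin m) T →ₐ[T] MvPolynomial (Fin m) T :=
  aeval (fun i => ∑ j, C (M i j) * X j)

lemma lsub_X {T : Type} [CommRing T] {m : ℕ} (M : Matrix (Fin m) (Fin m) T) (i : Fin m) :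
    lsub M (X i) = ∑ j, C (M i j) * X j := by
  simp [lsub]

lemma lsub_lsub {T : Type} [CommRing T] {m : ℕ} (M N : Matrix (Fin m) (Fin m) T)
    (F : MvPolynomial (Fin m) T) : lsub M (lsub N F) = lsub (N * M) F := by
  have : (lsub M).comp (lsub N) = lsub (N * M) := by
    apply MvPolynomial.algHom_ext
    intro i
    rw [AlgHom.comp_apply, lsub_X, lsub_X, map_sum]
    simp only [map_mul, lsub_X, Matrix.mul_apply, map_sum, Finset.sum_mul, Finset.mul_sum]
    rw [Finset.sum_comm]
    refine Finset.sum_congr rfl fun j _ => Finset.sum_congr rfl fun l _ => ?_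
    have h : lsub M (C (N i l)) = C (N i l) := (lsub M).commutes _
    rw [h, mul_assoc]
  exact DFunLike.congr_fun this F

lemma lsub_homog {T : Type} [CommRing T] {m : ℕ} (M : Matrix (Fin m) (Fin m) T)
    (F : MvPolynomial (Fin m) T) (j : ℕ) (hF : F.IsHomogeneous j) :
    (lsub M F).IsHomogeneous j := by
  have := hF.aeval (fun i => ∑ j, C (M i j) * X j) (n := 1) (fun i =>
    IsHomogeneous.sum _ _ _ fun l _ => by
      simpa using (isHomogeneous_C _ (M i l)).mul (isHomogeneous_X _ l))
  rwa [one_mul] at this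

lemma lsub_scalar {T : Type} [CommRing T] {m : ℕ} (c : T)
    (F : MvPolynomial (Fin m) T) (j : ℕ) (hF : F.IsHomogeneous j) :
    lsub (c • (1 : Matrix (Fin m) (Fin m) T)) F = c ^ j • F := by
  have hX : ∀ i, lsub (c • (1 : Matrix (Fin m) (Fin m) T)) (X i) = C c * X i := by
    intro i
    rw [lsub_X, Finset.sum_eq_single i]
    · simp
    · intro b _ hb; simp [Matrix.one_apply_ne hb.symm]
    · simp
  conv_lhs => rw [F.as_sum]
  conv_rhs => rw [F.as_sum]
  rw [map_sum, Finset.smul_sum]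
  refine Finset.sum_congr rfl fun μ hμ => ?_
  have hdeg : μ.degree = j := by
    rw [Finsupp.degree_eq_weight_one]; exact hF (mem_support_iff.mp hμ)
  rw [monomial_eq, map_mul, Finsupp.prod, map_prod]
  simp only [map_pow, hX, mul_pow]
  rw [Finset.prod_mul_distrib, Finset.prod_pow_eq_pow_sum]
  have h : lsub (c • (1 : Matrix (Fin m) (Fin m) T)) (C (coeff μ F)) = C (coeff μ F) :=
    (lsub _).commutes _
  have h2 : ∑ i ∈ μ.support, μ i = j := by rw [← hdeg]; rfl
  rw [h, h2, smul_eq_C_mul, C_pow]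
  ring

noncomputable def kill {T : Type} [CommRing T] (d : ℕ) :
    MvPolynomial (Fin (d + 2)) T →ₐ[T] MvPolynomial (Fin 2) T :=
  aeval (fun i => Fin.addCases (motive := fun _ => MvPolynomial (Fin 2) T) (fun _ => 0) X i)

lemma kill_castAdd {T : Type} [CommRing T] (d : ℕ) (i : Fin d) :
    kill (T := T) d (X (Fin.castAdd 2 i)) = 0 := by
  simp [kill]

lemma kill_natAdd {T : Type} [CommRing T] (d : ℕ) (i : Fin 2) :
    kill (T := T) d (X (Fin.natAdd d i)) = X i := by
  simp [kill]

lemma kill_rename {T : Type} [CommRing T] (d : ℕ) (v : MvPolynomial (Fin 2) T) :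
    kill (T := T) d (rename (Fin.natAdd d) v) = v := by
  have : (kill (T := T) d).comp (rename (Fin.natAdd d)) = AlgHom.id _ _ := by
    apply MvPolynomial.algHom_ext
    intro i
    simp [kill_natAdd]
  exact DFunLike.congr_fun this v

lemma kill_homog {T : Type} [CommRing T] (d : ℕ)
    (F : MvPolynomial (Fin (d + 2)) T) (j : ℕ) (hF : F.IsHomogeneous j) :
    (kill d F).IsHomogeneous j := by
  have := hF.aeval (fun i => Fin.addCases (motive := fun _ => MvPolynomial (Fin 2) T)
    (fun _ => 0) X i) (n := 1) (fun i => by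
      refine Fin.addCases (fun a => ?_) (fun a => ?_) i
      · simp only [Fin.addCases_left]; exact isHomogeneous_zero _ _ _
      · simp only [Fin.addCases_right]; exact isHomogeneous_X _ _)
  rwa [one_mul] at this

lemma kill_ker {T : Type} [CommRing T] (d : ℕ)
    (F : MvPolynomial (Fin (d + 2)) T) (h : kill d F = 0) :
    F ∈ Ideal.span (Set.range fun i : Fin d => (X (Fin.castAdd 2 i) :
      MvPolynomial (Fin (d + 2)) T)) := by
  set J := Ideal.span (Set.range fun i : Fin d => (X (Fin.castAdd 2 i) :
      MvPolynomial (Fin (d + 2)) T))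
  have : ((Ideal.Quotient.mkₐ T J).comp ((rename (Fin.natAdd d)).comp (kill d))) =
      Ideal.Quotient.mkₐ T J := by
    apply MvPolynomial.algHom_ext
    intro i
    refine Fin.addCases (fun a => ?_) (fun a => ?_) i
    · simp only [AlgHom.comp_apply, kill_castAdd, map_zero]
      symm
      exact Ideal.Quotient.eq_zero_iff_mem.mpr (Ideal.subset_span ⟨a, rfl⟩)
    · simp [kill_natAdd]
  have h2 := DFunLike.congr_fun this F
  simp only [AlgHom.comp_apply, h, map_zero] at h2
  exact Ideal.Quotient.eq_zero_iff_mem.mp h2.symm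

lemma exists_rho {T : Type} [CommRing T] [IsDomain T] (d : ℕ)
    (ℓ : Fin d → MvPolynomial (Fin (d + 2)) T) (hℓ : ∀ i, (ℓ i).IsHomogeneous 1)
    (hind : ∀ a : Fin d → T, ∑ i, C (a i) * ℓ i = 0 → ∀ i, a i = 0) :
    ∃ (ρ : MvPolynomial (Fin (d + 2)) T →ₐ[T] MvPolynomial (Fin 2) T)
      (s : MvPolynomial (Fin 2) T →ₐ[T] MvPolynomial (Fin (d + 2)) T) (c : T), c ≠ 0 ∧
      (∀ F j, IsHomogeneous F j → (ρ F).IsHomogeneous j) ∧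
      (∀ F j, IsHomogeneous F j → (s F).IsHomogeneous j) ∧
      (∀ i, ρ (ℓ i) = 0) ∧
      (∀ F j, IsHomogeneous F j → ρ F = 0 → c ^ j • F ∈ Ideal.span (Set.range ℓ)) ∧
      (∀ v j, IsHomogeneous v j → ρ (s v) = c ^ j • v) := by
  have hlin : ∀ i, ℓ i = ∑ j, C (coeff (Finsupp.single j 1) (ℓ i)) * X j := by
    intro i
    ext μ
    rw [coeff_sum]
    simp only [coeff_C_mul, coeff_X]
    by_cases hμ : μ.degree = 1
    · obtain ⟨j, rfl⟩ := (Finsupp.sum_eq_one_iff μ).mp hμ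
      rw [Finset.sum_eq_single j]
      · simp
      · intro b _ hb
        rw [if_neg, mul_zero]
        intro h
        exact hb (Finsupp.single_left_injective one_ne_zero h)
      · simp
    · rw [Finset.sum_eq_zero]
      · by_contra h
        apply hμ
        rw [Finsupp.degree_eq_weight_one]; exact hℓ i h
      · intro j _
        rw [if_neg, mul_zero]
        rintro rfl
        simp at hμ
  have hli : LinearIndependent T fun i : Fin d => fun j : Fin (d + 2) =>
      coeff (Finsupp.single j 1) (ℓ i) := by
    rw [Fintype.linearIndependent_iff]
    intro a ha
    apply hind
    rw [Finset.sum_congr rfl fun i _ => congrArg (C (a i) * ·) (hlin i)]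
    simp only [Finset.mul_sum]
    rw [Finset.sum_comm]
    refine Finset.sum_eq_zero fun j _ => ?_
    have := congrFun ha j
    simp only [Finset.sum_apply, Pi.smul_apply, smul_eq_mul, Pi.zero_apply] at this
    simp only [← mul_assoc, ← C_mul]
    rw [← Finset.sum_mul, ← map_sum, this]
    simp
  obtain ⟨M, hdet, hM⟩ := exists_ext_matrix d _ hli
  have hMℓ : ∀ i, lsub M (X (Fin.castAdd 2 i)) = ℓ i := by
    intro i
    rw [lsub_X, hM, ← hlin]
  refine ⟨(kill d).comp (lsub M.adjugate), (lsub M).comp (rename (Fin.natAdd d)), M.det, hdet,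
    ?_, ?_, ?_, ?_, ?_⟩
  · intro F j hF
    exact kill_homog _ _ _ (lsub_homog _ _ _ hF)
  · intro F j hF
    exact lsub_homog _ _ _ hF.rename_isHomogeneous
  · intro i
    rw [← hMℓ, AlgHom.comp_apply, lsub_lsub, Matrix.mul_adjugate,
      lsub_scalar _ _ 1 (isHomogeneous_X _ _), map_smul, kill_castAdd, smul_zero]
  · intro F j hF h
    have h1 := kill_ker d (lsub M.adjugate F) h
    have h2 := Ideal.mem_map_of_mem (lsub M) h1
    rw [lsub_lsub, Matrix.adjugate_mul, lsub_scalar _ _ j hF, Ideal.map_span] at h2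
    refine Ideal.span_mono ?_ h2
    rintro _ ⟨_, ⟨i, rfl⟩, rfl⟩
    exact ⟨i, (hMℓ i).symm⟩
  · intro v j hv
    rw [AlgHom.comp_apply, AlgHom.comp_apply, lsub_lsub, Matrix.mul_adjugate,
      lsub_scalar _ _ j hv.rename_isHomogeneous, map_smul, kill_rename]

end

section
open RingTheory.Sequence Module MvPolynomial


lemma strand_main {T : Type} [CommRing T] [IsDomain T] (d : ℕ)
    (ℓ : Fin d → MvPolynomial (Fin (d + 2)) T) (hℓ : ∀ i, (ℓ i).IsHomogeneous 1)
    (f g : MvPolynomial (Fin (d + 2)) T) (hf : f.IsHomogeneous 2) (hg : g.IsHomogeneous 2)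
    (hreg : IsWeaklyRegular (MvPolynomial (Fin (d + 2)) T) (List.ofFn ℓ ++ [f, g]))
    (L : Ideal (MvPolynomial (Fin (d + 2)) T)) (hL : L = Ideal.span (Set.range ℓ ∪ {f, g})) :
    Module.rank T (homogeneousSubmodule (Fin (d + 2)) T 1 ⧸
      (L.restrictScalars T).comap (homogeneousSubmodule (Fin (d + 2)) T 1).subtype) = 2 ∧
    Module.rank T (homogeneousSubmodule (Fin (d + 2)) T 2 ⧸
      (L.restrictScalars T).comap (homogeneousSubmodule (Fin (d + 2)) T 2).subtype) = 1 := by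
  have hcc : ∀ (F : MvPolynomial (Fin (d + 2)) T) j, 0 < j → F.IsHomogeneous j →
      constantCoeff F = 0 := by
    intro F j hj hF
    rw [constantCoeff_eq]
    exact hF.coeff_eq_zero (by simpa using hj.ne)
  have hind := wreg_const_indep ℓ ((isWeaklyRegular_append_iff _ _ _).mp hreg).1
    (fun i => hcc _ 1 one_pos (hℓ i))
  obtain ⟨ρ, s, c, hc, hρ, hs, hρℓ, hρker, hρs⟩ := exists_rho d ℓ hℓ hind
  have hρL : ∀ F ∈ L, ρ F ∈ Ideal.span {ρ f, ρ g} := by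
    intro F hF
    have h : L ≤ (Ideal.span {ρ f, ρ g}).comap ρ := by
      rw [hL, Ideal.span_le]
      rintro x (⟨i, rfl⟩ | hx)
      · show ρ (ℓ i) ∈ Ideal.span {ρ f, ρ g}
        rw [hρℓ]; exact zero_mem _
      · rcases hx with rfl | rfl
        · exact Ideal.subset_span (by simp)
        · exact Ideal.subset_span (by simp)
    exact h hF
  have hℓL : Ideal.span (Set.range ℓ) ≤ L := by
    rw [hL]; exact Ideal.span_mono Set.subset_union_left
  have hfL : f ∈ L := by rw [hL]; exact Ideal.subset_span (by simp)
  have hgL : g ∈ L := by rw [hL]; exact Ideal.subset_span (by simp)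
  let R : ∀ j, homogeneousSubmodule (Fin (d + 2)) T j →ₗ[T] homogeneousSubmodule (Fin 2) T j :=
    fun j => ρ.toLinearMap.restrict (fun F hF => hρ F j hF)
  have hR : ∀ j F, ((R j F : homogeneousSubmodule (Fin 2) T j) : MvPolynomial (Fin 2) T) = ρ F :=
    fun j F => rfl
  have aux : ∀ j, Module.rank T (homogeneousSubmodule (Fin (d + 2)) T j ⧸
      (L.restrictScalars T).comap (homogeneousSubmodule (Fin (d + 2)) T j).subtype) +
      Module.rank T (((L.restrictScalars T).comap
        (homogeneousSubmodule (Fin (d + 2)) T j).subtype).map (R j)) = ((j + 1 : ℕ) : Cardinal) := by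
    intro j
    rw [← rank_homog_two (T := T) j]
    refine rank_strand_aux _ (R j) (c ^ j) (pow_ne_zero _ hc) ?_ ?_
    · intro v
      refine ⟨⟨s v, hs _ _ v.2⟩, ?_⟩
      apply Subtype.ext
      rw [hR]
      exact hρs _ _ v.2
    · intro w hw
      have : ρ w = 0 := by rw [← hR, hw]; rfl
      exact hℓL (hρker _ _ w.2 this)
  have htd : List.take d (List.ofFn ℓ ++ [f, g]) = List.ofFn ℓ := by
    rw [List.take_append_of_le_length (by simp)]
    exact List.take_of_length_le (by simp)
  have htd1 : List.take (d + 1) (List.ofFn ℓ ++ [f, g]) = List.ofFn ℓ ++ [f] := by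
    rw [List.take_append]
    simp
  have hof : Ideal.ofList (List.ofFn ℓ) = Ideal.span (Set.range ℓ) := by
    rw [Ideal.ofList]; congr 1; ext x; simp [List.mem_ofFn]
  have h0 : Ideal.ofList (List.ofFn ℓ) ≤
      RingHom.ker (constantCoeff : MvPolynomial (Fin (d + 2)) T →+* T) := by
    rw [hof, Ideal.span_le]
    rintro _ ⟨i, rfl⟩
    exact hcc _ 1 one_pos (hℓ i)
  have h1 : Ideal.ofList (List.ofFn ℓ ++ [f]) ≤
      RingHom.ker (constantCoeff : MvPolynomial (Fin (d + 2)) T →+* T) := by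
    rw [Ideal.ofList_append, Ideal.ofList_singleton]
    refine sup_le h0 ?_
    rw [Ideal.span_singleton_le_iff_mem]
    exact hcc _ 2 two_pos hf
  rw [wreg_iff] at hreg
  have hindfg : ∀ a b : T, a • ρ f + b • ρ g = 0 → a = 0 ∧ b = 0 := by
    intro a b hab
    have h2 := hρker (a • f + b • g) 2 (((homogeneousSubmodule _ _ _).add_mem
      (Submodule.smul_mem _ _ hf) (Submodule.smul_mem _ _ hg)))
      (by rw [map_add, map_smul, map_smul, hab])
    rw [← hof] at h2
    have hb : b = 0 := by
      have h3 := hreg (d + 1) (by simp) (C (c ^ 2 * b)) (by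
        rw [htd1, Ideal.ofList_append, Ideal.ofList_singleton]
        have : (List.ofFn ℓ ++ [f, g])[d + 1]'(by simp) = g := by
          rw [List.getElem_append_right (by simp)]; simp
        rw [this]
        have h4 : g * C (c ^ 2 * b) = c ^ 2 • (a • f + b • g) + (- C (c ^ 2 * a)) * f := by
          simp only [smul_eq_C_mul, C_mul]; ring
        rw [h4]
        exact add_mem (Ideal.mem_sup_left h2) (Ideal.mem_sup_right
          (Ideal.mul_mem_left _ _ (Ideal.mem_span_singleton_self _))))
      rw [htd1] at h3
      have h5 := h1 h3
      rw [RingHom.mem_ker, constantCoeff_C] at h5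
      simpa [hc] using h5
    subst hb
    refine ⟨?_, rfl⟩
    have h3 := hreg d (by simp) (C (c ^ 2 * a)) (by
      rw [htd]
      have : (List.ofFn ℓ ++ [f, g])[d]'(by simp) = f := by
        rw [List.getElem_append_right (by simp)]; simp
      rw [this]
      have h4 : f * C (c ^ 2 * a) = c ^ 2 • (a • f + (0 : T) • g) := by
        simp only [smul_eq_C_mul, C_mul, C_0]; ring
      rw [h4]
      exact h2)
    rw [htd] at h3
    have h5 := h0 h3
    rw [RingHom.mem_ker, constantCoeff_C] at h5
    simpa [hc] using h5
  constructor
  · have h := aux 1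
    have hb : ((L.restrictScalars T).comap
        (homogeneousSubmodule (Fin (d + 2)) T 1).subtype).map (R 1) = ⊥ := by
      rw [eq_bot_iff]
      rintro _ ⟨w, hw, rfl⟩
      rw [Submodule.mem_bot]
      apply Subtype.ext
      rw [hR]
      exact (pair_deg (ρ f) (ρ g) (ρ w) (hρ _ _ hf) (hρ _ _ hg) (hρL _ hw) 1
        (hρ _ _ w.2)).1 (by norm_num)
    rw [hb, rank_bot, add_zero] at h
    rw [h]; norm_num
  · have h := aux 2
    let v : Fin 2 → homogeneousSubmodule (Fin 2) T 2 := ![R 2 ⟨f, hf⟩, R 2 ⟨g, hg⟩]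
    have hv : LinearIndependent T v := by
      rw [LinearIndependent.pair_iff]
      intro a b hab
      exact hindfg a b (congrArg Subtype.val hab)
    have hb : ((L.restrictScalars T).comap
        (homogeneousSubmodule (Fin (d + 2)) T 2).subtype).map (R 2) =
        Submodule.span T (Set.range v) := by
      apply le_antisymm
      · rintro _ ⟨w, hw, rfl⟩
        obtain ⟨a, b, hab⟩ := (pair_deg (ρ f) (ρ g) (ρ w) (hρ _ _ hf) (hρ _ _ hg) (hρL _ hw) 2
          (hρ _ _ w.2)).2 rfl
        have : R 2 w = a • R 2 ⟨f, hf⟩ + b • R 2 ⟨g, hg⟩ := Subtype.ext hab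
        rw [this]
        exact add_mem (Submodule.smul_mem _ _ (Submodule.subset_span ⟨0, rfl⟩))
          (Submodule.smul_mem _ _ (Submodule.subset_span ⟨1, rfl⟩))
      · rw [Submodule.span_le]
        rintro _ ⟨i, rfl⟩
        fin_cases i
        · exact ⟨⟨f, hf⟩, hfL, rfl⟩
        · exact ⟨⟨g, hg⟩, hgL, rfl⟩
    have hr : Module.rank T (Submodule.span T (Set.range v)) = ((2 : ℕ) : Cardinal) := by
      rw [rank_span hv]
      rw [Cardinal.mk_range_eq _ hv.injective]; simp
    rw [hb, hr] at h
    have h3 : ((2 + 1 : ℕ) : Cardinal) = 1 + ((2 : ℕ) : Cardinal) := by norm_num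
    rw [h3] at h
    exact (Cardinal.add_nat_inj 2).mp h

end

section
open RingTheory.Sequence Module MvPolynomial


lemma eps_inr {k : Type} [Field k] {m n : ℕ} (t : T k n) :
    sumAlgEquiv k (Fin m) (Fin n) (rename Sum.inr t) = C t :=
  DFunLike.congr_fun (sumAlgEquiv_comp_rename_inr k (Fin m) (Fin n)) t

lemma eps_symm_C {k : Type} [Field k] {m n : ℕ} (t : T k n) :
    (sumAlgEquiv k (Fin m) (Fin n)).symm (C t) = rename Sum.inr t := by
  rw [← eps_inr, AlgEquiv.symm_apply_apply]

lemma eps_homog {k : Type} [Field k] {m n : ℕ} (F : B k m n) (j : ℕ)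
    (hF : F.IsWeightedHomogeneous (wx m n) j) :
    (sumAlgEquiv k (Fin m) (Fin n) F).IsHomogeneous j := by
  rw [F.as_sum, map_sum]
  refine IsHomogeneous.sum _ _ _ fun μ hμ => ?_
  have hw := hF (mem_support_iff.mp hμ)
  rw [monomial_eq, map_mul, Finsupp.prod, map_prod, ← hw, Finsupp.weight_apply, Finsupp.sum,
    ← zero_add (∑ i ∈ _, _)]
  refine IsHomogeneous.mul ?_ (IsHomogeneous.prod _ _ _ fun i _ => ?_)
  · rw [sumAlgEquiv_C_inl]; exact isHomogeneous_C _ _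
  · rw [map_pow, smul_eq_mul, mul_comm]
    refine IsHomogeneous.pow ?_ _
    rcases i with i | i
    · rw [sumAlgEquiv_X_inl]; exact isHomogeneous_X _ _
    · rw [sumAlgEquiv_X_inr]; exact isHomogeneous_C _ _

lemma rename_inr_wh {k : Type} [Field k] {m n : ℕ} (t : T k n) :
    (rename Sum.inr t : B k m n).IsWeightedHomogeneous (wx m n) 0 := by
  intro μ hμ
  obtain ⟨u, rfl, -⟩ := coeff_rename_ne_zero _ _ _ hμ
  rw [Finsupp.weight_apply, Finsupp.sum_mapDomain_index (by simp) (by intros; simp [add_mul])]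
  simp [wx]

lemma eps_symm_homog {k : Type} [Field k] {m n : ℕ} (F : MvPolynomial (Fin m) (T k n)) (j : ℕ)
    (hF : F.IsHomogeneous j) :
    ((sumAlgEquiv k (Fin m) (Fin n)).symm F).IsWeightedHomogeneous (wx m n) j := by
  rw [F.as_sum, map_sum]
  refine (weightedHomogeneousSubmodule k (wx m n) j).sum_mem fun μ hμ => ?_
  rw [mem_weightedHomogeneousSubmodule]
  have hw := hF (mem_support_iff.mp hμ)
  rw [monomial_eq, map_mul, Finsupp.prod, map_prod, ← hw, Finsupp.weight_apply, Finsupp.sum,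
    ← zero_add (∑ i ∈ _, _)]
  refine IsWeightedHomogeneous.mul ?_ (IsWeightedHomogeneous.prod _ _ _ fun i _ => ?_)
  · rw [eps_symm_C]; exact rename_inr_wh _
  · rw [map_pow, sumAlgEquiv_symm_X]
    exact (isWeightedHomogeneous_X _ _ _).pow _

lemma smul_B {k : Type} [Field k] {m n : ℕ} (t : T k n) (b : B k m n) :
    t • b = rename Sum.inr t * b := rfl

noncomputable def epsL (k : Type) [Field k] (m n : ℕ) :
    MvPolynomial (Fin m) (T k n) →ₗ[T k n] B k m n where
  toFun F := (sumAlgEquiv k (Fin m) (Fin n)).symm F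
  map_add' a b := map_add _ a b
  map_smul' t F := by
    rw [smul_eq_C_mul, map_mul, eps_symm_C, smul_B]; rfl

noncomputable def stPhi {k : Type} [Field k] {m n : ℕ} (L : Ideal (B k m n)) (j : ℕ) :
    homogeneousSubmodule (Fin m) (T k n) j →ₗ[T k n] B k m n ⧸ L :=
  (Ideal.Quotient.mkₐ (T k n) L).toLinearMap.comp ((epsL k m n).comp (Submodule.subtype _))

lemma stPhi_apply {k : Type} [Field k] {m n : ℕ} (L : Ideal (B k m n)) (j : ℕ)
    (F : homogeneousSubmodule (Fin m) (T k n) j) :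
    stPhi L j F = Ideal.Quotient.mk L
      ((sumAlgEquiv k (Fin m) (Fin n)).symm (F : MvPolynomial (Fin m) (T k n))) := rfl

lemma stPhi_range {k : Type} [Field k] {m n : ℕ} (L : Ideal (B k m n)) (j : ℕ) :
    LinearMap.range (stPhi L j) = SxDeg k m n L j := by
  apply le_antisymm
  · rintro _ ⟨F, rfl⟩
    exact Submodule.subset_span ⟨_, eps_symm_homog _ _ F.2, rfl⟩
  · rw [SxDeg, Submodule.span_le]
    rintro _ ⟨F, hF, rfl⟩
    refine ⟨⟨sumAlgEquiv k (Fin m) (Fin n) F, eps_homog _ _ hF⟩, ?_⟩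
    rw [stPhi_apply, AlgEquiv.symm_apply_apply]

lemma wreg_equiv {A A' : Type*} [CommRing A] [CommRing A'] (ε : A ≃+* A') (rs : List A)
    (h : IsWeaklyRegular A rs) : IsWeaklyRegular A' (rs.map ε) := by
  rw [wreg_iff] at h ⊢
  intro i hi a ha
  have hi' : i < rs.length := by simpa using hi
  have e1 : Ideal.ofList (List.take i (rs.map ε)) = Ideal.map ε (Ideal.ofList (rs.take i)) := by
    rw [← List.map_take]
    exact (Ideal.map_ofList (ε : A →+* A') _).symm
  rw [e1] at ha ⊢
  obtain ⟨b, rfl⟩ := ε.surjective a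
  rw [List.getElem_map, ← map_mul] at ha
  have hmem : ∀ x, ε x ∈ Ideal.map ε (Ideal.ofList (rs.take i)) ↔ x ∈ Ideal.ofList (rs.take i) := by
    intro x
    rw [← Ideal.comap_symm, Ideal.mem_comap]
    simp
  exact (hmem b).mpr (h i hi' b ((hmem _).mp ha))

lemma strand_range {T Q : Type} [CommRing T] [IsDomain T] [AddCommGroup Q] [Module T Q] (d : ℕ)
    (ℓ : Fin d → MvPolynomial (Fin (d + 2)) T) (hℓ : ∀ i, (ℓ i).IsHomogeneous 1)
    (f g : MvPolynomial (Fin (d + 2)) T) (hf : f.IsHomogeneous 2) (hg : g.IsHomogeneous 2)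
    (hreg : IsWeaklyRegular (MvPolynomial (Fin (d + 2)) T) (List.ofFn ℓ ++ [f, g]))
    (L : Ideal (MvPolynomial (Fin (d + 2)) T)) (hL : L = Ideal.span (Set.range ℓ ∪ {f, g}))
    (Φ₁ : homogeneousSubmodule (Fin (d + 2)) T 1 →ₗ[T] Q)
    (h₁ : ∀ F, Φ₁ F = 0 ↔ (F : MvPolynomial (Fin (d + 2)) T) ∈ L)
    (Φ₂ : homogeneousSubmodule (Fin (d + 2)) T 2 →ₗ[T] Q)
    (h₂ : ∀ F, Φ₂ F = 0 ↔ (F : MvPolynomial (Fin (d + 2)) T) ∈ L) :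
    Module.rank T (LinearMap.range Φ₁) = 2 ∧ Module.rank T (LinearMap.range Φ₂) = 1 := by
  have h := strand_main d ℓ hℓ f g hf hg hreg L hL
  have k₁ : LinearMap.ker Φ₁ = (L.restrictScalars T).comap
          (homogeneousSubmodule (Fin (d + 2)) T 1).subtype := by
    ext F
    rw [LinearMap.mem_ker, h₁]
    rfl
  have k₂ : LinearMap.ker Φ₂ = (L.restrictScalars T).comap
          (homogeneousSubmodule (Fin (d + 2)) T 2).subtype := by
    ext F
    rw [LinearMap.mem_ker, h₂]
    rfl
  rw [← k₁, ← k₂] at h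
  rwa [(LinearMap.quotKerEquivRange Φ₁).rank_eq, (LinearMap.quotKerEquivRange Φ₂).rank_eq] at h

lemma rank_SxDeg {k : Type} [Field k] {d n : ℕ} (L : Ideal (B k (d + 2) n))
    (ℓ : Fin d → B k (d + 2) n) (hℓ : ∀ i, (ℓ i).IsWeightedHomogeneous (wx (d + 2) n) 1)
    (f g : B k (d + 2) n) (hf : f.IsWeightedHomogeneous (wx (d + 2) n) 2)
    (hg : g.IsWeightedHomogeneous (wx (d + 2) n) 2)
    (hreg : IsWeaklyRegular (B k (d + 2) n) (List.ofFn ℓ ++ [f, g]))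
    (hL : L = Ideal.span (Set.range ℓ ∪ {f, g})) :
    Module.rank (T k n) (SxDeg k (d + 2) n L 1) = 2 ∧
    Module.rank (T k n) (SxDeg k (d + 2) n L 2) = 1 := by
  rw [← stPhi_range, ← stPhi_range]
  let ε := sumAlgEquiv k (Fin (d + 2)) (Fin n)
  have hmem : ∀ F, (sumAlgEquiv k (Fin (d + 2)) (Fin n)).symm F ∈ L ↔ F ∈ L.comap ε.symm.toRingHom :=
    fun F => Iff.rfl
  refine strand_range d (fun i => ε (ℓ i)) (fun i => eps_homog _ _ (hℓ i)) (ε f) (ε g)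
    (eps_homog _ _ hf) (eps_homog _ _ hg) ?_ (L.comap ε.symm.toRingHom) ?_ _ ?_ _ ?_
  · have := wreg_equiv ε.toRingEquiv _ hreg
    rw [List.map_append, List.map_ofFn] at this
    exact this
  · apply le_antisymm
    · intro F hF
      have h1 : ε.symm F ∈ L := hF
      have h2 := Ideal.mem_map_of_mem ε.toRingEquiv.toRingHom h1
      have h3 : ε.toRingEquiv.toRingHom (ε.symm F) = F := ε.apply_symm_apply F
      rw [h3, hL, Ideal.map_span] at h2
      refine Ideal.span_mono ?_ h2
      rintro _ ⟨x, (⟨i, rfl⟩ | rfl | rfl), rfl⟩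
      · exact Or.inl ⟨i, rfl⟩
      · exact Or.inr (Or.inl rfl)
      · exact Or.inr (Or.inr rfl)
    · rw [Ideal.span_le]
      rintro _ (⟨i, rfl⟩ | rfl | rfl)
      · show ε.symm (ε (ℓ i)) ∈ L
        rw [ε.symm_apply_apply, hL]; exact Ideal.subset_span (Or.inl ⟨i, rfl⟩)
      · show ε.symm (ε f) ∈ L
        rw [ε.symm_apply_apply, hL]; exact Ideal.subset_span (by simp)
      · show ε.symm (ε g) ∈ L
        rw [ε.symm_apply_apply, hL]; exact Ideal.subset_span (by simp)
  · intro F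
    rw [stPhi_apply, Ideal.Quotient.eq_zero_iff_mem]; rfl
  · intro F
    rw [stPhi_apply, Ideal.Quotient.eq_zero_iff_mem]; rfl

lemma SxDeg_zero {k : Type} [Field k] {m n : ℕ} (L : Ideal (B k m n))
    (hL : ∀ F ∈ L, constantCoeff (sumAlgEquiv k (Fin m) (Fin n) F) = 0) :
    Nonempty ((SxDeg k m n L 0) ≃ₗ[T k n] T k n) := by
  let Ψ : T k n →ₗ[T k n] B k m n ⧸ L := LinearMap.toSpanSingleton _ _ 1
  have hΨ : ∀ t, Ψ t = Ideal.Quotient.mk L (rename Sum.inr t) := by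
    intro t
    show t • (Ideal.Quotient.mk L 1 : B k m n ⧸ L) = _
    have : t • (Ideal.Quotient.mk L 1 : B k m n ⧸ L) = Ideal.Quotient.mk L (t • (1 : B k m n)) :=
      rfl
    rw [this, smul_B, mul_one]
  have hinj : Function.Injective Ψ := by
    rw [injective_iff_map_eq_zero]
    intro t ht
    rw [hΨ, Ideal.Quotient.eq_zero_iff_mem] at ht
    have := hL _ ht
    rwa [eps_inr, constantCoeff_C] at this
  have hr : LinearMap.range Ψ = SxDeg k m n L 0 := by
    rw [← stPhi_range]
    apply le_antisymm
    · rintro _ ⟨t, rfl⟩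
      refine ⟨⟨C t, isHomogeneous_C _ _⟩, ?_⟩
      rw [stPhi_apply, eps_symm_C, hΨ]
    · rintro _ ⟨⟨F, hF⟩, rfl⟩
      have hF' : F = C (coeff 0 F) :=
        totalDegree_eq_zero_iff_eq_C.mp ((totalDegree_zero_iff_isHomogeneous _).mpr hF)
      refine ⟨coeff 0 F, ?_⟩
      rw [stPhi_apply, hΨ, ← eps_symm_C, ← hF']
  rw [← hr]
  exact ⟨(LinearEquiv.ofInjective Ψ hinj).symm⟩

end

section
open RingTheory.Sequence Module MvPolynomial


lemma rename_inl_wh {k : Type} [Field k] {m n : ℕ} {A : Type} [AddCommMonoid A]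
    (w : Fin m ⊕ Fin n → A) (c : A) (hw : ∀ i, w (Sum.inl i) = c)
    (p : MvPolynomial (Fin m) k) (j : ℕ) (hp : p.IsHomogeneous j) :
    (rename Sum.inl p : B k m n).IsWeightedHomogeneous w (j • c) := by
  intro μ hμ
  obtain ⟨u, rfl, hu⟩ := coeff_rename_ne_zero _ _ _ hμ
  have h := hp hu
  rw [Finsupp.weight_apply, Finsupp.sum_mapDomain_index (by simp) (by intros; simp [add_smul])]
  rw [Finsupp.weight_apply] at h
  simp only [hw, Finsupp.sum, ← Finset.sum_smul]
  simp only [Finsupp.sum, Pi.one_apply, smul_eq_mul, mul_one] at h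
  rw [h]

lemma ell_wh {k : Type} [Field k] {m n d : ℕ} {A : Type} [AddCommMonoid A]
    (w : Fin m ⊕ Fin n → A) (c c' : A) (hw : ∀ i, w (Sum.inl i) = c) (hw' : ∀ i, w (Sum.inr i) = c')
    (ψ : Matrix (Fin n) (Fin d) (MvPolynomial (Fin m) k))
    (hψ : ∀ i j, (ψ i j).IsHomogeneous 1) (i : Fin d) :
    (∑ j, (rename Sum.inl (ψ j i)) * X (Sum.inr j) : B k m n).IsWeightedHomogeneous w (c + c') := by
  refine (weightedHomogeneousSubmodule k w (c + c')).sum_mem fun j _ => ?_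
  rw [mem_weightedHomogeneousSubmodule]
  have h := (rename_inl_wh (n := n) w c hw (ψ j i) 1 (hψ j i)).mul
    (isWeightedHomogeneous_X k w (Sum.inr j))
  rwa [one_smul, hw'] at h

lemma reg_pair_ne {A : Type} [CommRing A] (f g : A) [IsDomain A]
    (h : IsRegular A [f, g]) : f ≠ 0 ∧ g ≠ 0 := by
  have hw := (wreg_iff _).mp h.toIsWeaklyRegular
  have ht : Ideal.ofList [f, g] ≠ ⊤ := by
    intro h2
    apply h.top_ne_smul
    rw [h2]; simp
  have hf : f ≠ 0 := by
    rintro rfl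
    have := hw 0 (by simp) 1 (by simp)
    simp at this
  refine ⟨hf, ?_⟩
  rintro rfl
  have h1 := hw 1 (by simp) 1 (by simp)
  apply ht
  rw [Ideal.eq_top_iff_one]
  have h3 : Ideal.ofList (List.take 1 [f, 0]) ≤ Ideal.ofList [f, 0] :=
    Ideal.span_mono fun x hx => List.mem_of_mem_take hx
  exact h3 h1

end

set_option synthInstance.maxHeartbeats 1000000
set_option maxHeartbeats 3000000

theorem ci_strand_ranks
    (d e : ℕ) (hd : 2 ≤ d)
    -- `f, g`: a homogeneous `S`-regular sequence of quadrics in `S = k[x_1,…,x_{d+2}]`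
    (f g : MvPolynomial (Fin (d + 2)) k)
    (hf : f ∈ homogeneousSubmodule (Fin (d + 2)) k 2)
    (hg : g ∈ homogeneousSubmodule (Fin (d + 2)) k 2)
    (hfg : RingTheory.Sequence.IsRegular (MvPolynomial (Fin (d + 2)) k) [f, g])
    -- `E`: a module over `R = S/(f,g)`
    (E : Type) [AddCommGroup E]
    [Module (MvPolynomial (Fin (d + 2)) k ⧸
      (Ideal.span {f, g} : Ideal (MvPolynomial (Fin (d + 2)) k))) E]
    [Module.Finite (MvPolynomial (Fin (d + 2)) k ⧸
      (Ideal.span {f, g} : Ideal (MvPolynomial (Fin (d + 2)) k))) E]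
    -- `E` is torsion-free
    (htf : Submodule.torsion (MvPolynomial (Fin (d + 2)) k ⧸
      (Ideal.span {f, g} : Ideal (MvPolynomial (Fin (d + 2)) k))) E = ⊥)
    -- `ψ`: the matrix of linear forms over `S` lifting the presentation matrix `φ`
    (ψ : Matrix (Fin (d + e)) (Fin d) (MvPolynomial (Fin (d + 2)) k))
    (hψlin : ∀ i j, ψ i j ∈ homogeneousSubmodule (Fin (d + 2)) k 1)
    (φ : Matrix (Fin (d + e)) (Fin d) (MvPolynomial (Fin (d + 2)) k ⧸
      (Ideal.span {f, g} : Ideal (MvPolynomial (Fin (d + 2)) k))))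
    (hφψ : ∀ i j, φ i j = Ideal.Quotient.mk _ (ψ i j))
    -- `0 → R^d →φ R^{d+e} →π E → 0` is a (minimal) free resolution, so `pd_R E = 1`
    -- and `rank E = e`
    (hinj : Function.Injective φ.mulVecLin)
    (π : (Fin (d + e) → (MvPolynomial (Fin (d + 2)) k ⧸
        (Ideal.span {f, g} : Ideal (MvPolynomial (Fin (d + 2)) k)))) →ₗ[MvPolynomial (Fin (d + 2)) k ⧸
        (Ideal.span {f, g} : Ideal (MvPolynomial (Fin (d + 2)) k))] E)
    (hsurj : Function.Surjective π)
    (hker : LinearMap.ker π = LinearMap.range φ.mulVecLin)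
    -- `I_1(φ) = (x_1,…,x_{d+2})R`
    (hI1 : Ideal.span {r | ∃ i j, φ i j = r} =
      Ideal.span (Set.range fun t : Fin (d + 2) => Ideal.Quotient.mk _ (X t)))
    -- `E` is minimally generated by `μ(E) = d+e` elements
    (hμ : ∀ s : Finset E,
      Submodule.span (MvPolynomial (Fin (d + 2)) k ⧸
        (Ideal.span {f, g} : Ideal (MvPolynomial (Fin (d + 2)) k))) (s : Set E) = ⊤ →
      d + e ≤ s.card)
    -- `E` satisfies `G_d`
    (hGd : ∀ (p : Ideal (MvPolynomial (Fin (d + 2)) k ⧸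
        (Ideal.span {f, g} : Ideal (MvPolynomial (Fin (d + 2)) k)))) (_ : p.IsPrime) (c : ℕ),
      ringKrullDim (Localization.AtPrime p) = (c : WithBot ℕ∞) → 1 ≤ c → c ≤ d - 1 →
      ∃ s : Finset (LocalizedModule p.primeCompl E), s.card ≤ c + e - 1 ∧
        Submodule.span (Localization.AtPrime p)
          (s : Set (LocalizedModule p.primeCompl E)) = ⊤)
    -- the defining ideal `L = (ℓ_1,…,ℓ_d,f,g)` of `S(E)` as a quotient of
    -- `B = S ⊗_k T`, with `[ℓ_1 … ℓ_d] = [y_1 … y_{d+e}]·ψ`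
    (ℓ : Fin d → B k (d + 2) (d + e))
    (hℓ : ∀ i, ℓ i = ∑ j, (rename Sum.inl (ψ j i)) * X (Sum.inr j))
    (L : Ideal (B k (d + 2) (d + e)))
    (hL : L = Ideal.span (Set.range ℓ ∪ {rename Sum.inl f, rename Sum.inl g})) :
    -- `L` is generated by the `B`-regular sequence `ℓ_1,…,ℓ_d,f,g`
    RingTheory.Sequence.IsRegular (B k (d + 2) (d + e))
      (List.ofFn ℓ ++ [rename Sum.inl f, rename Sum.inl g]) ∧
    -- `δ = 2` and `τ = d` in the duality theorem applied to `ℓ_1,…,ℓ_d,f,g`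
    (∀ (α β : Fin d → ℕ) (αf βf αg βg : ℕ),
      (∀ i, ℓ i ≠ 0 ∧ ℓ i ∈ weightedHomogeneousSubmodule k (bwt (d + 2) (d + e)) (α i, β i)) →
      (rename Sum.inl f : B k (d + 2) (d + e)) ∈
        weightedHomogeneousSubmodule k (bwt (d + 2) (d + e)) (αf, βf) →
      (rename Sum.inl g : B k (d + 2) (d + e)) ∈
        weightedHomogeneousSubmodule k (bwt (d + 2) (d + e)) (αg, βg) →
      ((∑ i, α i) + αf + αg) = (d + 2) + 2 ∧ ((∑ i, β i) + βf + βg) = d) ∧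
    -- `S(E)_0` is free of rank one over `T`
    Nonempty ((SxDeg k (d + 2) (d + e) L 0) ≃ₗ[T k (d + e)] T k (d + e)) ∧
    -- `rank_T S(E)_1 = 2`
    Module.rank (T k (d + e)) (SxDeg k (d + 2) (d + e) L 1) = 2 ∧
    -- `rank_T S(E)_2 = 1`
    Module.rank (T k (d + e)) (SxDeg k (d + 2) (d + e) L 2) = 1 := by
  have hψ : ∀ i j, (ψ i j).IsHomogeneous 1 := hψlin
  have hreg := reg_main d e f g hf hg hfg E ψ hψlin φ hφψ hinj π hsurj hker hGd ℓ hℓ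
  have hℓx : ∀ i, (ℓ i).IsWeightedHomogeneous (wx (d + 2) (d + e)) 1 := by
    intro i
    rw [hℓ]
    exact ell_wh (wx (d + 2) (d + e)) 1 0 (fun _ => rfl) (fun _ => rfl) ψ hψ i
  have hfx : (rename Sum.inl f : B k (d + 2) (d + e)).IsWeightedHomogeneous
      (wx (d + 2) (d + e)) 2 :=
    rename_inl_wh (wx (d + 2) (d + e)) 1 (fun _ => rfl) f 2 hf
  have hgx : (rename Sum.inl g : B k (d + 2) (d + e)).IsWeightedHomogeneous
      (wx (d + 2) (d + e)) 2 :=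
    rename_inl_wh (wx (d + 2) (d + e)) 1 (fun _ => rfl) g 2 hg
  refine ⟨hreg, ?_, ?_, ?_⟩
  · intro α β αf βf αg βg h1 h2 h3
    obtain ⟨hf0, hg0⟩ := reg_pair_ne f g hfg
    have e1 : ∀ i, (α i, β i) = ((1, 0) + (0, 1) : ℕ × ℕ) := by
      intro i
      refine IsWeightedHomogeneous.inj_right (h1 i).1 (h1 i).2 ?_
      rw [hℓ]
      exact ell_wh (bwt (d + 2) (d + e)) (1, 0) (0, 1) (fun _ => rfl) (fun _ => rfl) ψ hψ i
    have hinl : Function.Injective (rename Sum.inl :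
        MvPolynomial (Fin (d + 2)) k → B k (d + 2) (d + e)) :=
      rename_injective _ Sum.inl_injective
    have e2 : (αf, βf) = 2 • ((1, 0) : ℕ × ℕ) :=
      IsWeightedHomogeneous.inj_right (by rw [Ne, ← map_zero (rename Sum.inl), hinl.eq_iff]; exact hf0)
        h2 (rename_inl_wh (bwt (d + 2) (d + e)) (1, 0) (fun _ => rfl) f 2 hf)
    have e3 : (αg, βg) = 2 • ((1, 0) : ℕ × ℕ) :=
      IsWeightedHomogeneous.inj_right (by rw [Ne, ← map_zero (rename Sum.inl), hinl.eq_iff]; exact hg0)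
        h3 (rename_inl_wh (bwt (d + 2) (d + e)) (1, 0) (fun _ => rfl) g 2 hg)
    have a1 : ∀ i, α i = 1 := fun i => by simpa using congrArg Prod.fst (e1 i)
    have b1 : ∀ i, β i = 1 := fun i => by simpa using congrArg Prod.snd (e1 i)
    have a2 : αf = 2 := by simpa using congrArg Prod.fst e2
    have b2 : βf = 0 := by simpa using congrArg Prod.snd e2
    have a3 : αg = 2 := by simpa using congrArg Prod.fst e3
    have b3 : βg = 0 := by simpa using congrArg Prod.snd e3
    simp [a1, b1, a2, b2, a3, b3]
  · apply SxDeg_zero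
    intro F hF
    have hcc : ∀ (G : B k (d + 2) (d + e)) j, 0 < j →
        G.IsWeightedHomogeneous (wx (d + 2) (d + e)) j →
        constantCoeff (sumAlgEquiv k (Fin (d + 2)) (Fin (d + e)) G) = 0 := by
      intro G j hj hG
      rw [constantCoeff_eq]
      exact (eps_homog _ _ hG).coeff_eq_zero (by simpa using hj.ne)
    have hle : L ≤ RingHom.ker ((constantCoeff : MvPolynomial (Fin (d + 2)) (T k (d + e)) →+* _).comp
        (sumAlgEquiv k (Fin (d + 2)) (Fin (d + e))).toRingEquiv.toRingHom) := by
      rw [hL, Ideal.span_le]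
      rintro _ (⟨i, rfl⟩ | rfl | rfl)
      · exact hcc _ 1 one_pos (hℓx i)
      · exact hcc _ 2 two_pos hfx
      · exact hcc _ 2 two_pos hgx
    exact hle hF
  · exact rank_SxDeg L ℓ hℓx _ _ hfx hgx hreg.toIsWeaklyRegular hL

end Stmt12
end
end

section
/- Let S = k[x_1,…,x_{d+2}] with d ≥ 2 and R = S/(f,g) where f,g is a homogeneous S-regular sequence of degree-2 forms. Let E be a torsion-free R-module of rank e and projective dimension one with μ(E) = d+e, minimal free resolution 0 → R^d →φ R^{d+e} → E → 0 with φ consisting of linear entries, E satisfying G_d and I_1(φ) = (x_1,…,x_{d+2})R. Let ψ be the (d+e)×d matrix of linear forms over S lifting φ, and let σ = B(ψ) be the (d+2)×d Jacobian dual, i.e. the matrix of linear forms in T = k[y_1,…,y_{d+e}] with [y_1 … y_{d+e}]·ψ = [x_1 … x_{d+2}]·σ. Then ht I(σ) ≥ 2, where I(σ) = I_d(σ) is the ideal of rank-sized minors. -/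
/-!
STATEMENT 13: With `S`, `R = S/(f,g)`, `E`, `ψ` as in Statement 12, let `σ = B(ψ)` be
the `(d+2)×d` Jacobian dual: the matrix of linear forms in `T` with
`[y_1 … y_{d+e}]·ψ = [x_1 … x_{d+2}]·σ`.  Then `ht I(σ) ≥ 2`, where `I(σ) = I_d(σ)`.
-/

open MvPolynomial

noncomputable section

namespace Stmt13

variable (k : Type) [Field k] (d n : ℕ)

/-- `B = R ⊗_k T = k[x_1,…,x_d,y_1,…,y_n]`. -/
abbrev B := MvPolynomial (Fin d ⊕ Fin n) k

/-- `T = k[y_1,…,y_n]`. -/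
abbrev T := MvPolynomial (Fin n) k

/-- `B` is a `T`-algebra via `y_j ↦ y_j`. -/
instance : Algebra (T k n) (B k d n) :=
  ((rename Sum.inr : T k n →ₐ[k] B k d n).toRingHom).toAlgebra

/-- The bigrading weight: `bideg x_i = (1,0)`, `bideg y_j = (0,1)`. -/
def bwt : (Fin d ⊕ Fin n) → ℕ × ℕ := Sum.elim (fun _ => (1, 0)) (fun _ => (0, 1))

/-- The `x`-degree weight. -/
def wx : (Fin d ⊕ Fin n) → ℕ := Sum.elim (fun _ => 1) (fun _ => 0)

/-- The ideal `m = (x_1,…,x_d)B`. -/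
def mxB : Ideal (B k d n) := Ideal.span (Set.range fun i : Fin d => (X (Sum.inl i) : B k d n))

variable (I : Ideal (B k d n))

/-- `A = H⁰_m(S)`: elements of `S = B/I` annihilated by a power of `m`. -/
def H0 : Submodule (B k d n) (B k d n ⧸ I) :=
  ⨆ N : ℕ, Submodule.torsionBySet (B k d n) (B k d n ⧸ I)
    ((mxB k d n ^ N : Ideal (B k d n)) : Set (B k d n))

/-- The bigraded component of `S = B/I` in bidegree `p`. -/
def Scomp (p : ℕ × ℕ) : Submodule k (B k d n ⧸ I) :=
  (weightedHomogeneousSubmodule k (bwt d n) p).map (Ideal.Quotient.mkₐ k I).toLinearMap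

/-- The graded strand `S_j = ⊕_b S_{(j,b)}` of `S` in `x`-degree `j`, as a `T`-module. -/
def SxDeg (j : ℕ) : Submodule (T k n) (B k d n ⧸ I) :=
  Submodule.span (T k n) ((Ideal.Quotient.mk I) '' {g : B k d n | g.IsWeightedHomogeneous (wx d n) j})

/-- The graded strand of `S` in (possibly negative) `x`-degree `i : ℤ`. -/
def SxDegZ (i : ℤ) : Submodule (T k n) (B k d n ⧸ I) :=
  if 0 ≤ i then SxDeg k d n I i.toNat else ⊥

/-- The graded strand `A_i = ⊕_b A_{(i,b)}` of `A = H⁰_m(S)`, as a `T`-module. -/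
def AcompZ (i : ℤ) : Submodule (T k n) (B k d n ⧸ I) :=
  (H0 k d n I).restrictScalars (T k n) ⊓ SxDegZ k d n I i

/-- The graded component of `T` in (possibly negative) degree `j`. -/
def TcompZ (j : ℤ) : Submodule k (T k n) :=
  if 0 ≤ j then homogeneousSubmodule (Fin n) k j.toNat else ⊥

/-- The ideal of `t × t` minors of a matrix. -/
def minorsIdeal {R : Type} [CommRing R] {m' n' : Type} (M : Matrix m' n' R) (t : ℕ) :
    Ideal R :=
  Ideal.span {x | ∃ (f : Fin t → m') (g : Fin t → n'), x = (M.submatrix f g).det}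

/-- `ht I ≥ c`: every prime containing `I` has height (= dimension of the localization)
at least `c`. -/
def htGE {R : Type} [CommRing R] (I : Ideal R) (c : ℕ) : Prop :=
  ∀ (p : Ideal R) (_ : p.IsPrime), I ≤ p →
    (c : WithBot ℕ∞) ≤ ringKrullDim (Localization.AtPrime p)

set_option synthInstance.maxHeartbeats 1000000
set_option maxHeartbeats 3000000

end Stmt13

namespace JD


/-- The linear form with coefficient vector `v`. -/
def lin {ι A : Type} [Fintype ι] [CommRing A] (v : ι → A) : MvPolynomial ι A :=
  ∑ i, C (v i) * X i

section field
variable {ι K : Type} [Fintype ι] [Field K]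

lemma lin_add {ι A : Type} [Fintype ι] [CommRing A] (v w : ι → A) : lin (v + w) = lin v + lin w := by
  simp [lin, add_mul, Finset.sum_add_distrib]

lemma lin_smul {ι A : Type} [Fintype ι] [CommRing A] (a : A) (v : ι → A) :
    lin (a • v) = C a * lin v := by
  simp [lin, Finset.mul_sum, mul_assoc]

/-- `lin` as a linear map. -/
def linL (ι A : Type) [Fintype ι] [CommRing A] : (ι → A) →ₗ[A] MvPolynomial ι A where
  toFun := lin
  map_add' := lin_add
  map_smul' a v := by simp [lin_smul, MvPolynomial.smul_eq_C_mul]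

lemma lin_single {ι A : Type} [Fintype ι] [DecidableEq ι] [CommRing A] (i : ι) :
    lin (Pi.single i (1 : A)) = X i := by
  simp [lin, Pi.single_apply]

lemma lin_map {ι A B : Type} [Fintype ι] [CommRing A] [CommRing B] (f : A →+* B) (v : ι → A) :
    MvPolynomial.map f (lin v) = lin (fun i => f (v i)) := by
  simp [lin]

lemma lin_eq_zero {ι A : Type} [Fintype ι] [CommRing A] (v : ι → A) (h : lin v = 0) : v = 0 := by
  classical
  funext i
  have := congrArg (coeff (Finsupp.single i 1)) h
  simpa [lin, coeff_sum, coeff_C_mul, coeff_X, Finsupp.single_left_inj] using this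

/-- ideal generated by the linear forms in `V` -/
def IV (V : Submodule K (ι → K)) : Ideal (MvPolynomial ι K) := Ideal.span (lin '' (V : Set (ι → K)))

lemma IV_spec (V : Submodule K (ι → K)) : (IV V).IsPrime ∧ ∀ v, lin v ∈ IV V → v ∈ V := by
  classical
  let b := Module.finBasis K ((ι → K) ⧸ V)
  let u : (ι → K) →ₗ[K] (Fin (Module.finrank K ((ι → K) ⧸ V)) → K) :=
    b.equivFun.toLinearMap ∘ₗ V.mkQ
  have hu : ∀ v, u v = 0 ↔ v ∈ V := by
    intro v
    simp only [u, LinearMap.comp_apply, LinearEquiv.coe_coe, LinearEquiv.map_eq_zero_iff]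
    simp
  have hus : Function.Surjective u := by
    have := b.equivFun.surjective.comp V.mkQ_surjective
    exact this
  obtain ⟨s, hs⟩ := LinearMap.exists_rightInverse_of_surjective u (LinearMap.range_eq_top.2 hus)
  let θ : MvPolynomial ι K →ₐ[K] MvPolynomial (Fin (Module.finrank K ((ι → K) ⧸ V))) K :=
    aeval (fun i => lin (u (Pi.single i 1)))
  let η : MvPolynomial (Fin (Module.finrank K ((ι → K) ⧸ V))) K →ₐ[K] MvPolynomial ι K :=
    aeval (fun a => lin (s (Pi.single a 1)))
  have hθ : ∀ v, θ (lin v) = lin (u v) := by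
    intro v
    have : θ.toLinearMap ∘ₗ linL ι K = linL _ K ∘ₗ u := by
      apply LinearMap.pi_ext'
      intro i
      ext1
      simp [linL, lin_single, θ]
    exact LinearMap.congr_fun this v
  have hη : ∀ v, η (lin v) = lin (s v) := by
    intro v
    have : η.toLinearMap ∘ₗ linL _ K = linL _ K ∘ₗ s := by
      apply LinearMap.pi_ext'
      intro i
      ext1
      simp [linL, lin_single, η]
    exact LinearMap.congr_fun this v
  have hle : IV V ≤ RingHom.ker θ := by
    rw [IV, Ideal.span_le]
    rintro _ ⟨v, hv, rfl⟩
    simp only [SetLike.mem_coe, RingHom.mem_ker, hθ, (hu v).2 hv]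
    simp [lin]
  have hge : RingHom.ker θ ≤ IV V := by
    intro x hx
    have key : (Ideal.Quotient.mkₐ K (IV V)).comp (η.comp θ) = Ideal.Quotient.mkₐ K (IV V) := by
      ext i
      simp only [AlgHom.comp_apply]
      rw [← lin_single (A := K) i, hθ, hη]
      simp only [Ideal.Quotient.mkₐ_eq_mk]
      rw [Ideal.Quotient.eq]
      apply Ideal.subset_span
      refine ⟨s (u (Pi.single i 1)) - Pi.single i 1, ?_, (linL ι K).map_sub _ _⟩
      rw [SetLike.mem_coe, ← hu, map_sub]
      have := LinearMap.congr_fun hs (u (Pi.single i 1))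
      simp only [LinearMap.comp_apply, LinearMap.id_apply] at this
      rw [this, sub_self]
    have := AlgHom.congr_fun key x
    rw [RingHom.mem_ker] at hx
    simp only [AlgHom.comp_apply, hx, map_zero] at this
    exact Ideal.Quotient.eq_zero_iff_mem.1 this.symm
  have heq := le_antisymm hle hge
  refine ⟨heq ▸ RingHom.ker_isPrime θ, fun v hv => ?_⟩
  have := hle hv
  rw [RingHom.mem_ker, hθ] at this
  exact (hu v).1 (lin_eq_zero _ this)

end field

section gen
variable {ι A : Type} [Fintype ι] [CommRing A] (p : Ideal A) [p.IsPrime]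
  (V : Submodule p.ResidueField (ι → p.ResidueField))

/-- reduction of a vector -/
def red (w : ι → A) : ι → p.ResidueField := fun i => algebraMap A p.ResidueField (w i)

/-- The prime of `A[X]` over `p` generated generically by `V`. -/
def GV : Ideal (MvPolynomial ι A) := (IV V).comap (MvPolynomial.map (algebraMap A p.ResidueField))

instance GV_prime : (GV p V).IsPrime := by
  have := (IV_spec V).1
  unfold GV
  infer_instance

lemma GV_comap : (GV p V).comap C = p := by
  have := (IV_spec V).1
  ext a
  simp only [GV, Ideal.mem_comap, map_C]
  constructor
  · intro h
    by_contra ha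
    have h0 : algebraMap A p.ResidueField a ≠ 0 := fun h => ha (Ideal.algebraMap_residueField_eq_zero.1 h)
    apply this.ne_top
    exact Ideal.eq_top_of_isUnit_mem _ h ((IsUnit.mk0 _ h0).map C)
  · intro h
    rw [Ideal.algebraMap_residueField_eq_zero.2 h]
    simp

lemma lin_mem_GV (w : ι → A) : lin w ∈ GV p V ↔ red p w ∈ V := by
  rw [GV, Ideal.mem_comap, lin_map]
  exact ⟨(IV_spec V).2 _, fun h => Ideal.subset_span ⟨_, h, rfl⟩⟩

lemma GV_le (P : Ideal (MvPolynomial ι A)) [hP : P.IsPrime] (hPp : P.comap C = p) (W : Set (ι → A))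
    (hV : V ≤ Submodule.span _ (red p '' W)) (hW : ∀ w ∈ W, lin w ∈ P) : GV p V ≤ P := by
  let F := FractionRing (MvPolynomial ι A ⧸ P)
  let q : MvPolynomial ι A →+* F := (algebraMap (MvPolynomial ι A ⧸ P) F).comp (Ideal.Quotient.mk P)
  have hq : ∀ x, q x = 0 ↔ x ∈ P := by
    intro x
    simp only [q, RingHom.comp_apply]
    rw [FaithfulSMul.algebraMap_eq_zero_iff, Ideal.Quotient.eq_zero_iff_mem]
  let h : p.ResidueField →+* F := Ideal.ResidueField.lift p (q.comp C)
    (by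
      intro a ha
      rw [RingHom.mem_ker, RingHom.comp_apply, hq]
      rw [← hPp] at ha; exact ha)
    (by
      intro a ha
      rw [Submonoid.mem_comap, IsUnit.mem_submonoid_iff]
      refine IsUnit.mk0 _ ?_
      rw [RingHom.comp_apply, Ne, hq]
      intro h
      apply ha
      rw [← hPp]; exact h)
  let η : MvPolynomial ι p.ResidueField →+* F := eval₂Hom h (fun i => q (X i))
  have hη : η.comp (MvPolynomial.map (algebraMap A p.ResidueField)) = q := by
    apply MvPolynomial.ringHom_ext
    · intro a
      simp [η, h, Ideal.ResidueField.lift_algebraMap]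
    · intro i
      simp [η]
  have hlin : ∀ v ∈ Submodule.span p.ResidueField (red p '' W), η (lin v) = 0 := by
    intro v hv
    induction hv using Submodule.span_induction with
    | mem x hx =>
      obtain ⟨w, hw, rfl⟩ := hx
      have := congrArg (fun t => t (lin w)) hη
      simp only [RingHom.comp_apply, lin_map] at this
      exact this.trans ((hq _).2 (hW w hw))
    | zero => simp [lin]
    | add x y _ _ hx hy => rw [lin_add, map_add, hx, hy, add_zero]
    | smul a x _ hx => rw [lin_smul, map_mul, hx, mul_zero]
  intro x hx
  rw [← hq, ← hη, RingHom.comp_apply]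
  have : IV V ≤ RingHom.ker η := by
    rw [IV, Ideal.span_le]
    rintro _ ⟨v, hv, rfl⟩
    exact hlin v (hV hv)
  exact this hx

lemma clear_denom (v : ι → p.ResidueField) : ∃ (w : ι → A) (a : p.ResidueField), a ≠ 0 ∧ red p w = a • v := by
  classical
  obtain ⟨s, hs⟩ := IsLocalization.exist_integer_multiples_of_finite (nonZeroDivisors (A ⧸ p)) v
  choose w hw using hs
  choose w' hw' using fun i => Ideal.Quotient.mk_surjective (w i)
  refine ⟨w', algebraMap (A ⧸ p) p.ResidueField s, ?_, ?_⟩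
  · simp 
  · funext i
    have h1 := hw i
    simp only [red, Pi.smul_apply, smul_eq_mul]
    rw [← hw' i, Algebra.smul_def] at h1
    rw [← h1]
    rfl

lemma GV_lower [IsNoetherianRing A] : ∀ (m : ℕ) (V : Submodule p.ResidueField (ι → p.ResidueField)),
    Module.finrank p.ResidueField V = m → p.height + m ≤ (GV p V).height := by
  intro m
  induction m with
  | zero =>
    intro V hV
    have : (GV p V).LiesOver p := ⟨by
      rw [Ideal.under_def]; exact (GV_comap p V).symm⟩
    rw [Ideal.height_eq_height_add_of_liesOver_of_hasGoingDown p (GV p V)]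
    simp
  | succ m ih =>
    intro V hV
    have b := Module.finBasisOfFinrankEq p.ResidueField V hV
    let u : Fin m → (ι → p.ResidueField) := fun i => (b i.castSucc : ι → p.ResidueField)
    have hli : LinearIndependent p.ResidueField (fun i => (b i : ι → p.ResidueField)) :=
      b.linearIndependent.map' V.subtype (by simp)
    have hu : LinearIndependent p.ResidueField u := hli.comp _ (Fin.castSucc_injective m)
    let V' := Submodule.span p.ResidueField (Set.range u)
    have hV' : Module.finrank p.ResidueField V' = m := by
      simpa using finrank_span_eq_card hu
    have hle : V' ≤ V := by
      rw [Submodule.span_le]; rintro _ ⟨i, rfl⟩; exact (b i.castSucc).2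
    have hlt : GV p V' < GV p V := by
      refine lt_of_le_of_ne (Ideal.comap_mono (Ideal.span_mono (Set.image_mono hle))) ?_
      intro heq
      have hne : ¬ V ≤ V' := by
        intro h
        have := le_antisymm hle h
        rw [this] at hV'
        omega
      apply hne
      intro v hv
      obtain ⟨w, a, ha, hw⟩ := clear_denom p v
      have h1 : lin w ∈ GV p V := (lin_mem_GV p V w).2 (hw ▸ V.smul_mem a hv)
      rw [← heq, lin_mem_GV, hw] at h1
      exact (Submodule.smul_mem_iff _ ha).1 h1
    have h1 := ih V' hV'
    have h2 := Ideal.height_add_one_le_of_lt_of_isPrime hlt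
    calc p.height + ((m + 1 : ℕ) : ℕ∞) = p.height + m + 1 := by push_cast; rw [add_assoc]
      _ ≤ _ := (add_le_add_left h1 1).trans h2

lemma exists_lift_span (V : Submodule p.ResidueField (ι → p.ResidueField)) :
    ∃ w : Fin (Module.finrank p.ResidueField V) → (ι → A),
      Submodule.span p.ResidueField (red p '' Set.range w) = V := by
  have b := Module.finBasis p.ResidueField V
  choose w a ha hw using fun i => clear_denom p (b i : ι → p.ResidueField)
  refine ⟨w, le_antisymm ?_ ?_⟩
  · rw [Submodule.span_le]
    rintro _ ⟨_, ⟨i, rfl⟩, rfl⟩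
    rw [hw]
    exact V.smul_mem _ (b i).2
  · have h1 : V = (Submodule.span p.ResidueField (Set.range b)).map V.subtype := by
      rw [b.span_eq]; simp
    conv_lhs => rw [h1]
    rw [Submodule.map_span, Submodule.span_le]
    rintro _ ⟨_, ⟨i, rfl⟩, rfl⟩
    have : (a i)⁻¹ • red p (w i) = V.subtype (b i) := by
      rw [hw, smul_smul, inv_mul_cancel₀ (ha i), one_smul]; rfl
    rw [← this]
    exact Submodule.smul_mem _ _ (Submodule.subset_span ⟨_, ⟨i, rfl⟩, rfl⟩)

lemma GV_upper [IsNoetherianRing A] (V : Submodule p.ResidueField (ι → p.ResidueField)) :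
    (GV p V).height ≤ p.height + Module.finrank p.ResidueField V := by
  classical
  obtain ⟨s, hs, hcard⟩ := Ideal.exists_finset_card_eq_height_of_isNoetherianRing p
  obtain ⟨w, hw⟩ := exists_lift_span p V
  let t : Finset (MvPolynomial ι A) := s.image C ∪ Finset.univ.image (fun i => lin (w i))
  have ht : (GV p V) ∈ (Ideal.span (t : Set (MvPolynomial ι A))).minimalPrimes := by
    refine ⟨⟨inferInstance, ?_⟩, ?_⟩
    · rw [Ideal.span_le]
      intro x hx
      simp only [t, Finset.coe_union, Finset.coe_image, Set.mem_union, Set.mem_image] at hx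
      rcases hx with ⟨a, ha, rfl⟩ | ⟨i, -, rfl⟩
      · have : a ∈ p := hs.1.2 (Ideal.subset_span ha)
        rw [← GV_comap p V] at this
        exact this
      · rw [SetLike.mem_coe, lin_mem_GV, ← hw]
        exact Submodule.subset_span ⟨_, ⟨i, rfl⟩, rfl⟩
    · rintro P ⟨hP, hPt⟩ hle
      rw [Ideal.span_le] at hPt
      have hPp : P.comap C = p := by
        apply le_antisymm
        · rw [← GV_comap p V]; exact Ideal.comap_mono hle
        · refine hs.2 ⟨inferInstance, ?_⟩ ?_
          · rw [Ideal.span_le]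
            intro a ha
            apply hPt
            simp only [t, Finset.coe_union, Finset.coe_image, Set.mem_union]
            exact Or.inl ⟨a, ha, rfl⟩
          · rw [← GV_comap p V]; exact Ideal.comap_mono hle
      refine GV_le p V P hPp (Set.range w) hw.ge ?_
      rintro _ ⟨i, rfl⟩
      apply hPt
      simp only [t, Finset.coe_union, Finset.coe_image, Set.mem_union]
      exact Or.inr ⟨i, by simp, rfl⟩
  have h1 := Ideal.height_le_card_of_mem_minimalPrimes_span_finset ht
  refine h1.trans ?_
  rw [← hcard]
  have h2 : t.card ≤ s.card + Module.finrank p.ResidueField V := by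
    refine (Finset.card_union_le _ _).trans (add_le_add Finset.card_image_le ?_)
    exact Finset.card_image_le.trans (by simp)
  exact_mod_cast h2

lemma exists_X_notMem (V : Submodule p.ResidueField (ι → p.ResidueField))
    (hV : Module.finrank p.ResidueField V < Fintype.card ι) : ∃ i, (X i : MvPolynomial ι A) ∉ GV p V := by
  classical
  by_contra! h
  have : V = ⊤ := by
    rw [eq_top_iff, ← (Pi.basisFun p.ResidueField ι).span_eq, Submodule.span_le]
    rintro _ ⟨i, rfl⟩
    have := h i
    rw [← lin_single, lin_mem_GV] at this
    have hr : red p (Pi.single i 1) = Pi.basisFun p.ResidueField ι i := by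
      funext j
      by_cases hj : j = i
      · subst hj; simp [red]
      · simp [red, hj]
    rw [← hr]
    exact this
  rw [this] at hV
  simp at hV

end gen

section matrices
variable {m n : Type} [Fintype m] [Fintype n]

lemma exists_rows {K : Type} [Field K] {m n : Type} [Fintype m] [Fintype n] (M : Matrix m n K)
    (s : ℕ) (hs : s ≤ M.rank) :
    ∃ f : Fin s → m, LinearIndependent K (M.submatrix f id).row := by
  rw [Matrix.rank_eq_finrank_span_row] at hs
  obtain ⟨h, h1, -, h3⟩ := Submodule.exists_fun_fin_finrank_span_eq K (Set.range M.row)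
  choose f hf using h1
  refine ⟨fun i => f (Fin.castLE hs i), ?_⟩
  have : (M.submatrix (fun i => f (Fin.castLE hs i)) id).row = h ∘ Fin.castLE hs := by
    funext i
    rw [Function.comp_apply, ← hf]
    rfl
  rw [this]
  exact h3.comp _ (Fin.castLE_injective hs)

lemma exists_minor {K : Type} [Field K] {m n : Type} [Fintype m] [Fintype n] (M : Matrix m n K)
    (s : ℕ) (hs : s ≤ M.rank) :
    ∃ (f : Fin s → m) (g : Fin s → n), (M.submatrix f g).det ≠ 0 := by
  obtain ⟨f, hf⟩ := exists_rows M s hs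
  have hr : s ≤ (M.submatrix f id).transpose.rank := by
    rw [Matrix.rank_transpose, LinearIndependent.rank_matrix hf, Fintype.card_fin]
  obtain ⟨g, hg⟩ := exists_rows _ s hr
  refine ⟨f, g, ?_⟩
  have h2 := Matrix.linearIndependent_rows_iff_isUnit.1 hg
  rw [Matrix.isUnit_iff_isUnit_det] at h2
  have h3 := h2.ne_zero
  rw [← Matrix.det_transpose] at h3
  exact h3

/-- column span over the residue field. -/
def colV {m n A : Type} [CommRing A] (p : Ideal A) [p.IsPrime] (M : Matrix m n A) :
    Submodule p.ResidueField (m → p.ResidueField) :=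
  Submodule.span _ (red p '' Set.range M.col)

lemma finrank_colV {A : Type} [CommRing A] (p : Ideal A) [p.IsPrime] (M : Matrix m n A) :
    Module.finrank p.ResidueField (colV p M) = (M.map (algebraMap A p.ResidueField)).rank := by
  rw [Matrix.rank_eq_finrank_span_cols, colV]
  rw [← Set.range_comp]
  rfl

lemma minors_le_iff {A : Type} [CommRing A] (p : Ideal A) [p.IsPrime] (M : Matrix m n A) (s : ℕ) :
    Stmt13.minorsIdeal M s ≤ p ↔ Module.finrank p.ResidueField (colV p M) < s := by
  rw [finrank_colV, Stmt13.minorsIdeal, Ideal.span_le]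
  have hdet : ∀ (f : Fin s → m) (g : Fin s → n),
      algebraMap A p.ResidueField (M.submatrix f g).det =
        ((M.map (algebraMap A p.ResidueField)).submatrix f g).det := by
    intro f g
    rw [RingHom.map_det]; rfl
  constructor
  · intro h
    by_contra! hs
    obtain ⟨f, g, hfg⟩ := exists_minor _ s hs
    rw [← hdet] at hfg
    exact hfg (Ideal.algebraMap_residueField_eq_zero.2 (h ⟨f, g, rfl⟩))
  · rintro h _ ⟨f, g, rfl⟩
    rw [SetLike.mem_coe, ← Ideal.algebraMap_residueField_eq_zero, hdet]
    by_contra hne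
    have h1 := Matrix.rank_of_det_ne_zero hne
    have h2 := Matrix.rank_submatrix_le (M.map (algebraMap A p.ResidueField)) f g
    rw [h1, Fintype.card_fin] at h2
    omega

end matrices

section dimension
open Algebra

lemma trdeg_poly {k A : Type} [Field k] [CommRing A] [IsDomain A] [Algebra k A] :
    Algebra.trdeg k (Polynomial A) = Algebra.trdeg k A + 1 := by
  rw [← trdeg_add_eq k A (A := Polynomial A), Polynomial.trdeg_of_isDomain]

lemma poly_step {k A : Type} [Field k] [CommRing A] [IsNoetherianRing A] [Algebra k A]
    (P : Ideal (Polynomial A)) [P.IsPrime] (N h : ℕ)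
    (ih : ∀ (q : Ideal A) [q.IsPrime] (h : ℕ), q.height ≤ h → (N : Cardinal) ≤ h + Algebra.trdeg k (A ⧸ q))
    (hP : P.height ≤ h) : ((N + 1 : ℕ) : Cardinal) ≤ h + Algebra.trdeg k (Polynomial A ⧸ P) := by
  set q := P.comap Polynomial.C with hq
  have hqP : q.map Polynomial.C ≤ P := Ideal.map_comap_le
  have : P.LiesOver q := ⟨rfl⟩
  have hht := Ideal.height_eq_height_add_of_liesOver_of_hasGoingDown q P
  have hprime : (q.map Polynomial.C).IsPrime := Ideal.isPrime_map_C_of_isPrime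
  by_cases hc : P = q.map Polynomial.C
  · have h1 := ih q h (le_trans (by rw [hht]; simp) hP)
    let e : Polynomial (A ⧸ q) ≃ₐ[k] (Polynomial A ⧸ P) := by
      rw [hc]
      exact AlgEquiv.ofRingEquiv (f := Ideal.polynomialQuotientEquivQuotientPolynomial q) (by
        intro r
        have := Ideal.polynomialQuotientEquivQuotientPolynomial_map_mk q (algebraMap k (Polynomial A) r)
        rw [IsScalarTower.algebraMap_apply k A (Polynomial A), Polynomial.algebraMap_eq,
          Polynomial.map_C] at this
        exact this)
    rw [← e.trdeg_eq, trdeg_poly, ← add_assoc]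
    push_cast
    exact add_le_add_left h1 1
  · have hlt : q.map Polynomial.C < P := lt_of_le_of_ne hqP (Ne.symm hc)
    have h1 : q.height + 1 ≤ P.height := by
      refine le_trans ?_ (Ideal.height_add_one_le_of_lt_of_isPrime hlt)
      refine add_le_add_left ?_ 1
      have : (q.map Polynomial.C).LiesOver q := ⟨by
        apply le_antisymm
        · exact Ideal.le_comap_map
        · exact Ideal.comap_mono hqP⟩
      rw [Ideal.height_eq_height_add_of_liesOver_of_hasGoingDown q (q.map Polynomial.C)]
      simp
    obtain ⟨h', rfl⟩ : ∃ h', h = h' + 1 := by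
      rcases h with _ | h'
      · have := h1.trans hP
        simp at this
      · exact ⟨h', rfl⟩
    have h2 : q.height ≤ h' := by
      have := h1.trans hP
      push_cast at this
      exact (ENat.add_le_add_iff_right (by simp)).1 this
    have h3 := ih q h' h2
    let j : (A ⧸ q) →ₐ[k] (Polynomial A ⧸ P) :=
      Ideal.quotientMapₐ P (Polynomial.CAlgHom (R := k) (A := A)) le_rfl
    have hj : Function.Injective j := Ideal.quotientMap_injective
    have h4 := trdeg_le_of_injective j hj
    calc ((N + 1 : ℕ) : Cardinal) = N + 1 := by push_cast; rfl
      _ ≤ (h' + Algebra.trdeg k (A ⧸ q)) + 1 := add_le_add_left h3 1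
      _ ≤ (h' + Algebra.trdeg k (Polynomial A ⧸ P)) + 1 := by gcongr
      _ = _ := by push_cast; ring

lemma dim_lower {k : Type} [Field k] : ∀ (N : ℕ) (p : Ideal (MvPolynomial (Fin N) k)) [p.IsPrime] (h : ℕ),
    p.height ≤ h → (N : Cardinal) ≤ h + Algebra.trdeg k (MvPolynomial (Fin N) k ⧸ p) := by
  intro N
  induction N with
  | zero => intro p _ h _; simp
  | succ N ih =>
    intro p _ h hp
    let e := finSuccEquiv k N
    let P : Ideal (Polynomial (MvPolynomial (Fin N) k)) := p.comap e.symm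
    have hP : P.height ≤ h := by
      have := RingEquiv.height_comap e.symm.toRingEquiv p
      exact le_trans this.le hp
    have h1 := poly_step (k := k) P N h (fun q _ h hq => ih q h hq) hP
    have e2 := Ideal.quotientEquivAlg P p e.symm (by
      change p = Ideal.map e.symm.toRingEquiv (Ideal.comap e.symm.toRingEquiv p)
      exact (Ideal.map_comap_of_surjective e.symm.toRingEquiv e.symm.toRingEquiv.surjective p).symm)
    rwa [e2.trdeg_eq] at h1

lemma max_height {k : Type} [Field k] : ∀ (N : ℕ) (p : Ideal (MvPolynomial (Fin N) k)) [p.IsMaximal],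
    (N : ℕ∞) ≤ p.height := by
  intro N
  induction N with
  | zero => intro p _; simp
  | succ N ih =>
    intro p hp
    let e := finSuccEquiv k N
    let P : Ideal (Polynomial (MvPolynomial (Fin N) k)) := p.comap e.symm.toRingEquiv
    have hP : P.height = p.height := RingEquiv.height_comap e.symm.toRingEquiv p
    have : P.IsMaximal := Ideal.comap_isMaximal_of_equiv e.symm.toRingEquiv
    have hq : (P.comap Polynomial.C).IsMaximal := Polynomial.isMaximal_comap_C_of_isJacobsonRing P
    have : P.LiesOver (P.comap Polynomial.C) := ⟨rfl⟩
    rw [← hP, Polynomial.height_eq_height_add_one (P.comap Polynomial.C) P]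
    push_cast
    exact add_le_add_left (ih _) 1

lemma max_height_domain {k D : Type} [Field k] [CommRing D] [IsDomain D] [Algebra k D]
    [Algebra.FiniteType k D] (M : Ideal D) [M.IsMaximal] (t : ℕ) (ht : (t : Cardinal) ≤ Algebra.trdeg k D) :
    (t : ℕ∞) ≤ M.height := by
  obtain ⟨s, g, hg, hintegral⟩ := exists_integral_inj_algHom_of_fg k D
  let _ : Algebra (MvPolynomial (Fin s) k) D := g.toRingHom.toAlgebra
  have : IsScalarTower k (MvPolynomial (Fin s) k) D := IsScalarTower.of_algebraMap_eq (fun r => (g.commutes r).symm)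
  have : FaithfulSMul (MvPolynomial (Fin s) k) D := (faithfulSMul_iff_algebraMap_injective _ _).2 hg
  have : Algebra.IsIntegral (MvPolynomial (Fin s) k) D := ⟨hintegral⟩
  have h1 : Algebra.trdeg k D = s := by
    rw [← trdeg_add_eq k (MvPolynomial (Fin s) k) (A := D), trdeg_eq_zero (R := MvPolynomial (Fin s) k),
      MvPolynomial.trdeg_of_isDomain]
    simp
  rw [h1] at ht
  have h2 : t ≤ s := by exact_mod_cast ht
  have hm : (M.comap (algebraMap (MvPolynomial (Fin s) k) D)).IsMaximal :=
    Ideal.isMaximal_comap_of_isIntegral_of_isMaximal M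
  have : M.LiesOver (M.comap (algebraMap (MvPolynomial (Fin s) k) D)) := ⟨rfl⟩
  have : IsNoetherianRing D := Algebra.FiniteType.isNoetherianRing k D
  rw [Ideal.height_eq_height_add_of_liesOver_of_hasGoingDown
    (M.comap (algebraMap (MvPolynomial (Fin s) k) D)) M]
  refine le_trans ?_ (le_add_right (max_height s _))
  exact_mod_cast h2

lemma quot_height {k : Type} [Field k] {N : ℕ} (p m : Ideal (MvPolynomial (Fin N) k)) [p.IsPrime] [m.IsMaximal]
    (hpm : p ≤ m) (h t : ℕ) (hp : p.height ≤ h) (ht : t + h ≤ N) :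
    (t : ℕ∞) ≤ (m.map (Ideal.Quotient.mk p)).height := by
  have h1 := dim_lower N p h hp
  have : (m.map (Ideal.Quotient.mk p)).IsMaximal :=
    Ideal.IsMaximal.map_of_surjective_of_ker_le Ideal.Quotient.mk_surjective (by rwa [Ideal.mk_ker])
  apply max_height_domain (k := k)
  have h2 : ((t + h : ℕ) : Cardinal) ≤ h + Algebra.trdeg k (MvPolynomial (Fin N) k ⧸ p) :=
    le_trans (by exact_mod_cast ht) h1
  push_cast at h2
  rw [add_comm] at h2
  exact (Cardinal.add_le_add_iff_of_lt_aleph0 (Cardinal.natCast_lt_aleph0 (n := h))).1 (by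
    rwa [add_comm (Algebra.trdeg _ _), add_comm (t : Cardinal)])

end dimension

section descend

lemma exists_chain {R R' : Type} [CommRing R] [CommRing R'] (ρ : R →+* R') (hρ : Function.Surjective ρ) :
    ∀ (r : ℕ) (M' : Ideal R') [M'.IsPrime], (r : ℕ∞) ≤ M'.height →
      ∃ q : Ideal R', q.IsPrime ∧ r + (q.comap ρ).height ≤ (M'.comap ρ).height := by
  intro r
  induction r with
  | zero => intro M' hM _; exact ⟨M', hM, by simp⟩
  | succ r ih =>
    intro M' hM h
    have h1 : ¬ M'.height ≤ r := by
      intro h2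
      have := h.trans h2
      norm_cast at this
      omega
    rw [Ideal.height_le_iff] at h1
    push Not at h1
    obtain ⟨q, hq, hlt, hr⟩ := h1
    obtain ⟨q', hq', hle⟩ := ih q hr
    refine ⟨q', hq', ?_⟩
    have hlt' : q.comap ρ < M'.comap ρ := lt_of_le_of_ne (Ideal.comap_mono hlt.le)
      (fun h => hlt.ne (Ideal.comap_injective_of_surjective ρ hρ h))
    have := Ideal.height_add_one_le_of_lt_of_isPrime hlt'
    refine le_trans ?_ this
    push_cast
    rw [add_right_comm]
    exact add_le_add_left hle 1

variable {k : Type} [Field k] {N : ℕ}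

/-- The irrelevant ideal. -/
def irr (k : Type) [Field k] (N : ℕ) : Ideal (MvPolynomial (Fin N) k) :=
  RingHom.ker (constantCoeff : MvPolynomial (Fin N) k →+* k)

instance irr_max : (irr k N).IsMaximal :=
  RingHom.ker_isMaximal_of_surjective _ (fun a => ⟨C a, by simp⟩)

lemma dim_le (d : ℕ) (f g : MvPolynomial (Fin (d + 2)) k)
    (hfg : RingTheory.Sequence.IsRegular (MvPolynomial (Fin (d + 2)) k) [f, g]) :
    ringKrullDim (MvPolynomial (Fin (d + 2)) k ⧸
      (Ideal.span {f, g} : Ideal (MvPolynomial (Fin (d + 2)) k))) ≤ (d : WithBot ℕ∞) := by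
  have h1 := hfg.1
  rw [RingTheory.Sequence.isWeaklyRegular_cons_iff, RingTheory.Sequence.isWeaklyRegular_cons_iff] at h1
  obtain ⟨hf, hg, -⟩ := h1
  have hf' : f ∈ nonZeroDivisors (MvPolynomial (Fin (d + 2)) k) := by
    rw [mem_nonZeroDivisors_iff_right]
    intro x hx
    apply hf
    change f • x = f • 0
    rw [smul_eq_mul, mul_comm, hx, smul_zero]
  have hg' : Ideal.Quotient.mk (Ideal.span {f}) g ∈
      nonZeroDivisors (MvPolynomial (Fin (d + 2)) k ⧸ Ideal.span {f}) := by
    rw [mem_nonZeroDivisors_iff_right]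
    intro x hx
    obtain ⟨x, rfl⟩ := Ideal.Quotient.mk_surjective x
    rw [← map_mul, Ideal.Quotient.eq_zero_iff_mem, Ideal.mem_span_singleton'] at hx
    obtain ⟨a, ha⟩ := hx
    have : (Submodule.Quotient.mk x : QuotSMulTop f (MvPolynomial (Fin (d + 2)) k)) = 0 := by
      apply hg
      change _ = g • 0
      rw [smul_zero]
      change (Submodule.Quotient.mk (g • x) : QuotSMulTop f (MvPolynomial (Fin (d + 2)) k)) = 0
      rw [Submodule.Quotient.mk_eq_zero, Submodule.mem_smul_pointwise_iff_exists]
      exact ⟨a, trivial, by rw [smul_eq_mul, smul_eq_mul, mul_comm, ha, mul_comm]⟩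
    rw [Submodule.Quotient.mk_eq_zero, Submodule.mem_smul_pointwise_iff_exists] at this
    obtain ⟨b, -, hb⟩ := this
    rw [Ideal.Quotient.eq_zero_iff_mem, Ideal.mem_span_singleton']
    exact ⟨b, by rw [← hb, smul_eq_mul, mul_comm]⟩
  have h2 := ringKrullDim_quotient_succ_le_of_nonZeroDivisor hf'
  let F : (MvPolynomial (Fin (d + 2)) k ⧸ Ideal.span {f}) →+* (MvPolynomial (Fin (d + 2)) k ⧸
      (Ideal.span {f, g} : Ideal (MvPolynomial (Fin (d + 2)) k))) :=
    Ideal.Quotient.factor (Ideal.span_mono (by simp))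
  have h3 := ringKrullDim_succ_le_of_surjective F (Ideal.Quotient.factor_surjective _) hg' (by
    simp only [F, Ideal.Quotient.factor_mk]
    rw [Ideal.Quotient.eq_zero_iff_mem]
    exact Ideal.subset_span (by simp))
  have h4 : ringKrullDim (MvPolynomial (Fin (d + 2)) k) = ((d + 2 : ℕ) : WithBot ℕ∞) := by
    rw [MvPolynomial.ringKrullDim_of_isNoetherianRing, ringKrullDim_eq_zero_of_field]
    simp
  rw [h4] at h2
  have h5 := (add_le_add_left h3 1).trans h2
  revert h5
  generalize ringKrullDim (MvPolynomial (Fin (d + 2)) k ⧸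
      (Ideal.span {f, g} : Ideal (MvPolynomial (Fin (d + 2)) k))) = x
  intro h5
  induction x using WithBot.recBotCoe with
  | bot => exact bot_le
  | coe x =>
    induction x using ENat.recTopCoe with
    | top =>
      exfalso
      have h6 : (((⊤ : ℕ∞) + 1 + 1 : ℕ∞) : WithBot ℕ∞) ≤ (((d + 2 : ℕ) : ℕ∞) : WithBot ℕ∞) := h5
      rw [WithBot.coe_le_coe] at h6
      simp only [top_add, top_le_iff] at h6
      exact ENat.natCast_ne_top _ h6
    | coe x =>
      have h6 : ((x + 1 + 1 : ℕ) : WithBot ℕ∞) ≤ ((d + 2 : ℕ) : WithBot ℕ∞) := by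
        push_cast
        push_cast at h5
        exact h5
      have h7 : x + 1 + 1 ≤ d + 2 := by exact_mod_cast h6
      have h8 : x ≤ d := by omega
      exact_mod_cast h8

lemma descend_aux {S : Type} [CommRing S] [IsNoetherianRing S] (d r : ℕ) (f g : S)
    (hdim : ringKrullDim (S ⧸ (Ideal.span {f, g} : Ideal S)) ≤ (d : WithBot ℕ∞))
    (p m : Ideal S) [p.IsPrime] [m.IsMaximal] (hf : f ∈ m) (hg : g ∈ m) (hp : p ≤ m)
    (hM : ((r + 2 : ℕ) : ℕ∞) ≤ (m.map (Ideal.Quotient.mk p)).height) :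
    ∃ P : Ideal (S ⧸ (Ideal.span {f, g} : Ideal S)), P.IsPrime ∧
      p ≤ P.comap (Ideal.Quotient.mk _) ∧ r + P.height ≤ d := by
  classical
  set M := m.map (Ideal.Quotient.mk p) with hMdef
  have hMmax : M.IsMaximal :=
    Ideal.IsMaximal.map_of_surjective_of_ker_le Ideal.Quotient.mk_surjective (by rwa [Ideal.mk_ker])
  let s : Set (S ⧸ p) := {Ideal.Quotient.mk p f, Ideal.Quotient.mk p g}
  have hs : s ⊆ M := by
    rintro _ (rfl | rfl)
    · exact Ideal.mem_map_of_mem _ hf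
    · exact Ideal.mem_map_of_mem _ hg
  have h1 := Ideal.height_le_height_add_encard_of_subset s hs
  set M' := M.map (Ideal.Quotient.mk (Ideal.span s)) with hM'def
  have hM'max : M'.IsMaximal :=
    Ideal.IsMaximal.map_of_surjective_of_ker_le Ideal.Quotient.mk_surjective (by
      rw [Ideal.mk_ker, Ideal.span_le]; exact hs)
  have h2 : (r : ℕ∞) ≤ Ideal.height (R := (S ⧸ p) ⧸ Ideal.span s) M' := by
    have h3 : s.encard ≤ 2 := (Set.encard_insert_le _ _).trans (by rw [Set.encard_singleton]; norm_num)
    have h4 : ((r + 2 : ℕ) : ℕ∞) ≤ Ideal.height (R := (S ⧸ p) ⧸ Ideal.span s) M' + 2 := hM.trans (h1.trans (by gcongr))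
    push_cast at h4
    exact (ENat.add_le_add_iff_right (by simp)).1 h4
  let ρ : (S ⧸
      (Ideal.span {f, g} : Ideal (S))) →+* (_ ⧸ Ideal.span s) :=
    Ideal.Quotient.lift _ ((Ideal.Quotient.mk (Ideal.span s)).comp (Ideal.Quotient.mk p)) (by
      intro a ha
      have : Ideal.span {f, g} ≤ RingHom.ker
          ((Ideal.Quotient.mk (Ideal.span s)).comp (Ideal.Quotient.mk p)) := by
        rw [Ideal.span_le]
        rintro _ (rfl | rfl)
        · simp only [SetLike.mem_coe, RingHom.mem_ker, RingHom.comp_apply]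
          rw [Ideal.Quotient.eq_zero_iff_mem]
          exact Ideal.subset_span (Or.inl rfl)
        · simp only [SetLike.mem_coe, RingHom.mem_ker, RingHom.comp_apply]
          rw [Ideal.Quotient.eq_zero_iff_mem]
          exact Ideal.subset_span (Or.inr rfl)
      exact this ha)
  have hρ : Function.Surjective ρ :=
    Ideal.Quotient.lift_surjective_of_surjective _ _
      (Ideal.Quotient.mk_surjective.comp Ideal.Quotient.mk_surjective)
  obtain ⟨q, hq, hle⟩ := exists_chain ρ hρ r M' h2
  refine ⟨q.comap ρ, inferInstance, ?_, ?_⟩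
  · intro x hx
    rw [Ideal.mem_comap, Ideal.mem_comap]
    have : ρ (Ideal.Quotient.mk _ x) = 0 := by
      change Ideal.Quotient.mk (Ideal.span s) (Ideal.Quotient.mk p x) = 0
      rw [Ideal.Quotient.eq_zero_iff_mem.2 hx, map_zero]
    rw [this]
    exact zero_mem _
  · refine hle.trans ?_
    have := Ideal.height_le_ringKrullDim_of_ne_top (I := M'.comap ρ) (Ideal.IsPrime.ne_top inferInstance)
    have := this.trans hdim
    exact_mod_cast this

lemma descend (d h r : ℕ) (f g : MvPolynomial (Fin (d + 2)) k)
    (hdim : ringKrullDim (MvPolynomial (Fin (d + 2)) k ⧸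
      (Ideal.span {f, g} : Ideal (MvPolynomial (Fin (d + 2)) k))) ≤ (d : WithBot ℕ∞))
    (hf : f ∈ irr k (d + 2)) (hg : g ∈ irr k (d + 2))
    (p : Ideal (MvPolynomial (Fin (d + 2)) k)) [p.IsPrime] (hp : p ≤ irr k (d + 2))
    (hph : p.height ≤ h) (hrd : h + r ≤ d) :
    ∃ P : Ideal (MvPolynomial (Fin (d + 2)) k ⧸
      (Ideal.span {f, g} : Ideal (MvPolynomial (Fin (d + 2)) k))), P.IsPrime ∧
      p ≤ P.comap (Ideal.Quotient.mk _) ∧ r + P.height ≤ d :=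
  descend_aux d r f g hdim p (irr k (d + 2)) hf hg hp
    (quot_height p _ hp h (r + 2) hph (by omega))

lemma exists_core (p : Ideal (MvPolynomial (Fin N) k)) [hp : p.IsPrime] :
    ∃ q : Ideal (MvPolynomial (Fin N) k), q.IsPrime ∧ q ≤ p ∧ q ≤ irr k N ∧
      ∀ (x) (i : ℕ), x ∈ homogeneousSubmodule (Fin N) k i → x ∈ p → x ∈ q := by
  classical
  let _ : GradedAlgebra (homogeneousSubmodule (Fin N) k) := MvPolynomial.gradedAlgebra
  refine ⟨(p.homogeneousCore (homogeneousSubmodule (Fin N) k)).toIdeal, hp.homogeneousCore,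
    Ideal.toIdeal_homogeneousCore_le _ _, ?_, ?_⟩
  · intro x hx
    have h1 := (p.homogeneousCore (homogeneousSubmodule (Fin N) k)).isHomogeneous 0 hx
    have h2 : (DirectSum.decompose (homogeneousSubmodule (Fin N) k) x 0 : MvPolynomial (Fin N) k)
        = homogeneousComponent 0 x := MvPolynomial.decomposition.decompose'_apply x 0
    rw [h2, homogeneousComponent_zero] at h1
    rw [irr, RingHom.mem_ker]
    by_contra hne
    have hpr : (p.homogeneousCore (homogeneousSubmodule (Fin N) k)).toIdeal.IsPrime := hp.homogeneousCore
    exact hpr.ne_top (Ideal.eq_top_of_isUnit_mem _ h1 ((IsUnit.mk0 _ hne).map C))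
  · intro x i hx hxp
    exact Ideal.mem_homogeneousCore_of_homogeneous_of_mem ⟨i, hx⟩ hxp

end descend

section modules

lemma red_mulVec {m n R : Type} [Fintype n] [CommRing R] (p : Ideal R) [p.IsPrime]
    (φ : Matrix m n R) (v : n → R) :
    red p (φ.mulVec v) = (φ.map (algebraMap R p.ResidueField)).mulVec (red p v) := by
  funext i
  simp [red, Matrix.mulVec, dotProduct]

lemma red_eq_zero {m R : Type} [CommRing R] (p : Ideal R) [p.IsPrime] (v : m → R) :
    red p v = 0 ↔ ∀ i, v i ∈ p := by
  constructor
  · intro h i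
    exact Ideal.algebraMap_residueField_eq_zero.1 (congrFun h i)
  · intro h
    funext i
    exact Ideal.algebraMap_residueField_eq_zero.2 (h i)

lemma rank_of_height_zero {m n R : Type} [Fintype m] [Fintype n] [CommRing R] [IsNoetherianRing R]
    (p : Ideal R) [p.IsPrime] (hp : p.height = 0) (φ : Matrix m n R)
    (hinj : Function.Injective φ.mulVecLin) :
    Fintype.card n ≤ Module.finrank p.ResidueField (colV p φ) := by
  rw [finrank_colV]
  by_contra! hlt
  have hmin : p ∈ minimalPrimes R := Ideal.height_eq_zero_iff.1 hp
  have hass : IsAssociatedPrime p R :=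
    Module.associatedPrimes.minimalPrimes_annihilator_subset_associatedPrimes R R (by
      rw [Module.annihilator_eq_bot.2 inferInstance]
      exact hmin)
  obtain ⟨-, a, ha⟩ := isAssociatedPrime_iff.1 hass
  have ha' : ∀ x, x ∈ p ↔ x * a = 0 := by
    intro x
    rw [ha]
    simp [Submodule.mem_colon_singleton]
  have hker : LinearMap.ker (φ.map (algebraMap R p.ResidueField)).mulVecLin ≠ ⊥ := by
    intro h
    have h1 := LinearMap.finrank_range_add_finrank_ker (φ.map (algebraMap R p.ResidueField)).mulVecLin
    rw [h] at h1
    simp only [finrank_bot, add_zero, Module.finrank_fintype_fun_eq_card] at h1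
    rw [Matrix.rank] at hlt
    omega
  obtain ⟨v, hv, hv0⟩ := Submodule.exists_mem_ne_zero_of_ne_bot hker
  obtain ⟨w, b, hb, hw⟩ := clear_denom p v
  have h1 : red p (φ.mulVec w) = 0 := by
    rw [red_mulVec, hw, Matrix.mulVec_smul]
    have : (φ.map (algebraMap R p.ResidueField)).mulVec v = 0 := hv
    rw [this, smul_zero]
  rw [red_eq_zero] at h1
  have h2 : φ.mulVecLin (a • w) = φ.mulVecLin 0 := by
    rw [map_smul, map_zero]
    funext i
    simp only [Matrix.mulVecLin_apply, Pi.smul_apply, smul_eq_mul, Pi.zero_apply]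
    rw [mul_comm]
    exact (ha' _).1 (h1 i)
  have h3 := hinj h2
  have h4 : red p w = 0 := by
    rw [red_eq_zero]
    intro i
    rw [ha', mul_comm]
    exact congrFun h3 i
  rw [hw] at h4
  exact (smul_ne_zero hb hv0) h4

lemma card_le_of_gens {m n R E : Type} [Fintype m] [Fintype n] [CommRing R] [AddCommGroup E] [Module R E]
    (p : Ideal R) [p.IsPrime] (φ : Matrix m n R) (π : (m → R) →ₗ[R] E)
    (hsurj : Function.Surjective π) (hker : LinearMap.ker π = LinearMap.range φ.mulVecLin)
    (s : Finset (LocalizedModule p.primeCompl E))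
    (hs : Submodule.span (Localization.AtPrime p) (s : Set (LocalizedModule p.primeCompl E)) = ⊤) :
    Fintype.card m ≤ s.card + Module.finrank p.ResidueField (colV p φ) := by
  classical
  let W := (m → p.ResidueField) ⧸ colV p φ
  let u : (m → R) →ₗ[R] W := ((colV p φ).mkQ.restrictScalars R) ∘ₗ
    ({ toFun := red p
       map_add' := fun v w => by funext i; simp [red]
       map_smul' := fun a w => by funext i; simp [red, Algebra.smul_def] } : (m → R) →ₗ[R] (m → p.ResidueField))
  have hu : ∀ v, u v = (colV p φ).mkQ (red p v) := fun v => rfl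
  have hku : LinearMap.ker π ≤ LinearMap.ker u := by
    rw [hker]
    rintro _ ⟨v, rfl⟩
    rw [LinearMap.mem_ker, hu, Submodule.mkQ_apply, Submodule.Quotient.mk_eq_zero, Matrix.mulVecLin_apply,
      Matrix.mulVec_eq_sum]
    have : red p (∑ i, MulOpposite.op (v i) • φ.transpose i) =
        ∑ i, algebraMap R p.ResidueField (v i) • red p (φ.col i) := by
      funext j
      simp [red, Finset.sum_apply, mul_comm, Matrix.col, Algebra.smul_def]
    rw [this]
    exact Submodule.sum_mem _ fun i _ => Submodule.smul_mem _ _ (Submodule.subset_span ⟨_, ⟨i, rfl⟩, rfl⟩)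
  let g : E →ₗ[R] W := (LinearMap.ker π).liftQ u hku ∘ₗ (π.quotKerEquivOfSurjective hsurj).symm.toLinearMap
  have hg : ∀ v, g (π v) = u v := by
    intro v
    have : (π.quotKerEquivOfSurjective hsurj).symm (π v) = Submodule.Quotient.mk v := by
      rw [LinearEquiv.symm_apply_eq]
      rfl
    simp only [g, LinearMap.comp_apply, LinearEquiv.coe_coe, this]
    rfl
  have hunit : ∀ x : p.primeCompl, IsUnit (algebraMap R (Module.End R W) x) := by
    intro x
    have hx : algebraMap R p.ResidueField x ≠ 0 := fun h => x.2 (Ideal.algebraMap_residueField_eq_zero.1 h)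
    rw [Module.End.isUnit_iff]
    have : ⇑(algebraMap R (Module.End R W) (x : R)) = fun w : W => algebraMap R p.ResidueField x • w := by
      funext w
      simp [Module.algebraMap_end_apply]
    rw [this]
    exact (IsUnit.mk0 _ hx).smul_bijective
  let G : LocalizedModule p.primeCompl E →ₗ[R] W := LocalizedModule.lift p.primeCompl g hunit
  have hG : ∀ e, G (LocalizedModule.mkLinearMap p.primeCompl E e) = g e := by
    intro e
    exact LinearMap.congr_fun (LocalizedModule.lift_comp p.primeCompl g hunit) e
  let G' : LocalizedModule p.primeCompl E →ₗ[Localization.AtPrime p] W :=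
    G.extendScalarsOfIsLocalization p.primeCompl (Localization.AtPrime p)
  let U : Submodule p.ResidueField W := Submodule.span _ ((s.image G : Finset W) : Set W)
  have hU : ∀ x, G x ∈ U := by
    intro x
    have hx : x ∈ Submodule.span (Localization.AtPrime p) (s : Set (LocalizedModule p.primeCompl E)) := by
      rw [hs]; trivial
    have h1 : Submodule.span (Localization.AtPrime p) (s : Set (LocalizedModule p.primeCompl E)) ≤
        (U.restrictScalars (Localization.AtPrime p)).comap G' := by
      rw [Submodule.span_le]
      intro y hy
      exact Submodule.subset_span (by simpa using ⟨y, hy, rfl⟩)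
    exact h1 hx
  have hUtop : U = ⊤ := by
    rw [eq_top_iff, ← (colV p φ).range_mkQ, LinearMap.range_eq_map,
      ← (Pi.basisFun p.ResidueField m).span_eq, Submodule.map_span, Submodule.span_le]
    rintro _ ⟨_, ⟨i, rfl⟩, rfl⟩
    have hr : red p (Pi.single i 1) = Pi.basisFun p.ResidueField m i := by
      funext j
      by_cases hj : j = i
      · subst hj; simp [red]
      · simp [red, hj]
    rw [← hr, ← hu, ← hg, ← hG]
    exact hU _
  have h1 : Module.finrank p.ResidueField W ≤ s.card := by
    rw [← finrank_top p.ResidueField W, ← hUtop]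
    exact (finrank_span_finset_le_card _).trans Finset.card_image_le
  have h2 := Submodule.finrank_quotient_add_finrank (colV p φ)
  rw [Module.finrank_fintype_fun_eq_card] at h2
  change Module.finrank p.ResidueField ((m → p.ResidueField) ⧸ colV p φ) ≤ s.card at h1
  omega

end modules

section graded
variable {k : Type} [Field k]

lemma minors_hom {N a b : ℕ} (ψ : Matrix (Fin a) (Fin b) (MvPolynomial (Fin N) k))
    (hψ : ∀ i j, ψ i j ∈ homogeneousSubmodule (Fin N) k 1) (s : ℕ) (f : Fin s → Fin a) (g : Fin s → Fin b) :
    (ψ.submatrix f g).det ∈ homogeneousSubmodule (Fin N) k s := by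
  rw [Matrix.det_apply]
  refine Submodule.sum_mem _ fun τ _ => ?_
  rw [Units.smul_def]
  refine zsmul_mem ?_ _
  rw [mem_homogeneousSubmodule]
  have := IsHomogeneous.prod (Finset.univ : Finset (Fin s)) (fun i => ψ.submatrix f g (τ i) i) (fun _ => 1)
    (fun i _ => (mem_homogeneousSubmodule _ _).1 (hψ _ _))
  simpa using this

lemma mem_irr_of_hom {N : ℕ} {i : ℕ} (hi : i ≠ 0) {f : MvPolynomial (Fin N) k}
    (hf : f ∈ homogeneousSubmodule (Fin N) k i) : f ∈ irr k N := by
  rw [irr, RingHom.mem_ker, constantCoeff_eq]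
  exact IsHomogeneous.coeff_eq_zero ((mem_homogeneousSubmodule _ _).1 hf) (by simpa using hi.symm)

lemma X_mem_of_linear {N a b : ℕ} (f g : MvPolynomial (Fin N) k)
    (hf : f ∈ homogeneousSubmodule (Fin N) k 2) (hg : g ∈ homogeneousSubmodule (Fin N) k 2)
    (ψ : Matrix (Fin a) (Fin b) (MvPolynomial (Fin N) k))
    (hψ : ∀ i j, ψ i j ∈ homogeneousSubmodule (Fin N) k 1)
    (φ : Matrix (Fin a) (Fin b) (MvPolynomial (Fin N) k ⧸ (Ideal.span {f, g} : Ideal (MvPolynomial (Fin N) k))))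
    (hφψ : ∀ i j, φ i j = Ideal.Quotient.mk _ (ψ i j))
    (hI1 : Ideal.span {r | ∃ i j, φ i j = r} =
      Ideal.span (Set.range fun t : Fin N => Ideal.Quotient.mk _ (X t))) (t : Fin N) :
    X t ∈ Ideal.span {r | ∃ i j, ψ i j = r} := by
  classical
  let _ : GradedAlgebra (homogeneousSubmodule (Fin N) k) := MvPolynomial.gradedAlgebra
  set J : Ideal (MvPolynomial (Fin N) k) := Ideal.span {r | ∃ i j, ψ i j = r} with hJ
  have h1 : Ideal.Quotient.mk (Ideal.span {f, g}) (X t) ∈ J.map (Ideal.Quotient.mk (Ideal.span {f, g})) := by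
    have h2 : Ideal.Quotient.mk (Ideal.span {f, g}) (X t) ∈ Ideal.span {r | ∃ i j, φ i j = r} := by
      rw [hI1]; exact Ideal.subset_span ⟨t, rfl⟩
    refine (Ideal.span_le.2 ?_ : Ideal.span {r | ∃ i j, φ i j = r} ≤ _) h2
    rintro _ ⟨i, j, rfl⟩
    rw [hφψ]
    exact Ideal.mem_map_of_mem _ (Ideal.subset_span ⟨i, j, rfl⟩)
  rw [Ideal.mem_map_iff_of_surjective _ Ideal.Quotient.mk_surjective] at h1
  obtain ⟨x, hx, hxt⟩ := h1
  rw [eq_comm, Ideal.Quotient.eq, Ideal.mem_span_pair] at hxt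
  obtain ⟨u, v, huv⟩ := hxt
  have hJh : J.IsHomogeneous (homogeneousSubmodule (Fin N) k) := by
    apply Ideal.homogeneous_span
    rintro _ ⟨i, j, rfl⟩
    exact ⟨1, hψ i j⟩
  have h3 : (DirectSum.decompose (homogeneousSubmodule (Fin N) k) (X t) 1 : MvPolynomial (Fin N) k) = X t :=
    DirectSum.decompose_of_mem_same _ (isHomogeneous_X _ _)
  have h4 : (X t : MvPolynomial (Fin N) k) = x + (u * f + v * g) := by rw [huv]; ring
  rw [← h3, h4, DirectSum.decompose_add, DirectSum.decompose_add]
  simp only [DirectSum.add_apply, Submodule.coe_add]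
  rw [DirectSum.coe_decompose_mul_of_right_mem_of_not_le _ hf (by norm_num),
    DirectSum.coe_decompose_mul_of_right_mem_of_not_le _ hg (by norm_num), add_zero, add_zero]
  exact hJh 1 hx

lemma rank_pos {N a b : ℕ} 
    (ψ : Matrix (Fin a) (Fin b) (MvPolynomial (Fin N) k))
    (hX : ∀ t, X t ∈ Ideal.span {r | ∃ i j, ψ i j = r})
    (p : Ideal (MvPolynomial (Fin N) k)) [p.IsPrime] (t : Fin N) (ht : X t ∉ p) :
    1 ≤ Module.finrank p.ResidueField (colV p ψ) := by
  by_contra! h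
  apply ht
  have h1 := (minors_le_iff p ψ 1).2 h
  refine (Ideal.span_le.2 ?_ : Ideal.span {r | ∃ i j, ψ i j = r} ≤ p) (hX t)
  rintro _ ⟨i, j, rfl⟩
  apply h1
  apply Ideal.subset_span
  exact ⟨fun _ => i, fun _ => j, by simp⟩

lemma gd_contra
    (d e : ℕ)
    (f g : MvPolynomial (Fin (d + 2)) k)
    (hf : f ∈ homogeneousSubmodule (Fin (d + 2)) k 2)
    (hg : g ∈ homogeneousSubmodule (Fin (d + 2)) k 2)
    (hfg : RingTheory.Sequence.IsRegular (MvPolynomial (Fin (d + 2)) k) [f, g])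
    (E : Type) [AddCommGroup E]
    [Module (MvPolynomial (Fin (d + 2)) k ⧸
      (Ideal.span {f, g} : Ideal (MvPolynomial (Fin (d + 2)) k))) E]
    (ψ : Matrix (Fin (d + e)) (Fin d) (MvPolynomial (Fin (d + 2)) k))
    (hψlin : ∀ i j, ψ i j ∈ homogeneousSubmodule (Fin (d + 2)) k 1)
    (φ : Matrix (Fin (d + e)) (Fin d) (MvPolynomial (Fin (d + 2)) k ⧸
      (Ideal.span {f, g} : Ideal (MvPolynomial (Fin (d + 2)) k))))
    (hφψ : ∀ i j, φ i j = Ideal.Quotient.mk _ (ψ i j))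
    (hinj : Function.Injective φ.mulVecLin)
    (π : (Fin (d + e) → (MvPolynomial (Fin (d + 2)) k ⧸
        (Ideal.span {f, g} : Ideal (MvPolynomial (Fin (d + 2)) k)))) →ₗ[MvPolynomial (Fin (d + 2)) k ⧸
        (Ideal.span {f, g} : Ideal (MvPolynomial (Fin (d + 2)) k))] E)
    (hsurj : Function.Surjective π)
    (hker : LinearMap.ker π = LinearMap.range φ.mulVecLin)
    (hGd : ∀ (p : Ideal (MvPolynomial (Fin (d + 2)) k ⧸
        (Ideal.span {f, g} : Ideal (MvPolynomial (Fin (d + 2)) k)))) (_ : p.IsPrime) (c : ℕ),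
      ringKrullDim (Localization.AtPrime p) = (c : WithBot ℕ∞) → 1 ≤ c → c ≤ d - 1 →
      ∃ s : Finset (LocalizedModule p.primeCompl E), s.card ≤ c + e - 1 ∧
        Submodule.span (Localization.AtPrime p)
          (s : Set (LocalizedModule p.primeCompl E)) = ⊤)
    (p : Ideal (MvPolynomial (Fin (d + 2)) k)) [p.IsPrime] (r h : ℕ)
    (hr : Module.finrank p.ResidueField (colV p ψ) = r)
    (hr1 : 1 ≤ r) (hrd : r + 1 ≤ d) (hph : p.height ≤ h) (hhr : h + r ≤ d) : False := by
  obtain ⟨q, hq, hqp, hqm, hqh⟩ := exists_core p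
  obtain ⟨P, hP, hqP, hPh⟩ := descend d h r f g (dim_le d f g hfg) (mem_irr_of_hom two_ne_zero hf)
    (mem_irr_of_hom two_ne_zero hg) q hqm ((Ideal.height_mono hqp).trans hph) hhr
  have hrk : Module.finrank P.ResidueField (colV P φ) < r + 1 := by
    rw [← minors_le_iff, Stmt13.minorsIdeal, Ideal.span_le]
    rintro _ ⟨F, G, rfl⟩
    have h1 : (φ.submatrix F G).det = Ideal.Quotient.mk _ (ψ.submatrix F G).det := by
      rw [RingHom.map_det]
      congr 1
      ext i j
      simp [hφψ]
    rw [h1]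
    apply hqP
    apply hqh _ _ (minors_hom ψ hψlin _ F G)
    have h2 := (minors_le_iff p ψ (r + 1)).2 (by omega)
    exact h2 (Ideal.subset_span ⟨F, G, rfl⟩)
  obtain ⟨c, hc⟩ : ∃ c : ℕ, P.height = c := by
    have : P.height ≠ ⊤ := by
      intro h
      rw [h] at hPh
      simp at hPh
    exact ⟨_, (ENat.natCast_toNat this).symm⟩
  rw [hc] at hPh
  have hPc : r + c ≤ d := by exact_mod_cast hPh
  rcases Nat.eq_zero_or_pos c with h0 | h0
  · subst h0
    have := rank_of_height_zero P (by simpa using hc) φ hinj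
    rw [Fintype.card_fin] at this
    omega
  · obtain ⟨s, hs1, hs2⟩ := hGd P hP c (by
      rw [IsLocalization.AtPrime.ringKrullDim_eq_height P (Localization.AtPrime P), hc]; rfl) h0 (by omega)
    have := card_le_of_gens P φ π hsurj hker s hs2
    rw [Fintype.card_fin] at this
    omega

end graded

section conclusion
variable {k : Type} [Field k]

lemma lin_col_mem {m n A : Type} [Fintype m] [CommRing A] (p : Ideal A) [p.IsPrime]
    (M : Matrix m n A) (j : n) : lin (M.col j) ∈ GV p (colV p M) :=
  (lin_mem_GV p _ _).2 (Submodule.subset_span ⟨_, ⟨j, rfl⟩, rfl⟩)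

lemma finrank_colV_le {m : Type} [Fintype m] {d : ℕ} {A : Type} [CommRing A] (p : Ideal A) [p.IsPrime]
    (M : Matrix m (Fin d) A) : Module.finrank p.ResidueField (colV p M) ≤ d := by
  rw [finrank_colV]
  exact (Matrix.rank_le_card_width _).trans (by simp)

lemma key_claim {N a d : ℕ} (ψ : Matrix (Fin a) (Fin d) (MvPolynomial (Fin N) k))
    (hX : ∀ t, X t ∈ Ideal.span {r | ∃ i j, ψ i j = r})
    (hc : ∀ (p : Ideal (MvPolynomial (Fin N) k)) [p.IsPrime] (r h : ℕ),
      Module.finrank p.ResidueField (colV p ψ) = r → 1 ≤ r → r + 1 ≤ d → p.height ≤ h →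
      h + r ≤ d → False)
    (P : Ideal (MvPolynomial (Fin a) (MvPolynomial (Fin N) k))) [P.IsPrime]
    (hP : ∀ j, lin (ψ.col j) ∈ P) (hPd : P.height ≤ d) (t : Fin N) (ht : C (X t) ∉ P) :
    P = GV ⊥ (colV ⊥ ψ) ∧ (d : ℕ∞) ≤ P.height := by
  have main : ∀ (p : Ideal (MvPolynomial (Fin N) k)) [p.IsPrime], P.comap C = p →
      p = ⊥ ∧ P = GV p (colV p ψ) ∧ (d : ℕ∞) ≤ P.height := by
    intro p _ hp
    have hle : GV p (colV p ψ) ≤ P := GV_le p _ P hp (Set.range ψ.col) le_rfl (by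
      rintro _ ⟨j, rfl⟩; exact hP j)
    have h1 := GV_lower p _ (colV p ψ) rfl
    have h2 := Ideal.height_mono hle
    have h3 := finrank_colV_le p ψ
    have h4 : 1 ≤ Module.finrank p.ResidueField (colV p ψ) :=
      rank_pos ψ hX p t (by rw [← hp]; exact ht)
    generalize hr : Module.finrank p.ResidueField (colV p ψ) = r at *
    have h5 : p.height + r ≤ d := (h1.trans h2).trans hPd
    obtain ⟨h, hh⟩ : ∃ h : ℕ, p.height = h := by
      have : p.height ≠ ⊤ := by
        intro h
        rw [h] at h5
        simp at h5
      exact ⟨_, (ENat.natCast_toNat this).symm⟩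
    rw [hh] at h5 h1
    have h6 : h + r ≤ d := by exact_mod_cast h5
    have h7 : r = d := by
      by_contra hne
      exact hc p r h hr h4 (by omega) hh.le h6
    have h8 : h = 0 := by omega
    subst h7 h8
    have h9 : (r : ℕ∞) ≤ (GV p (colV p ψ)).height := by simpa using h1
    refine ⟨?_, ?_, h9.trans h2⟩
    · exact Ideal.height_eq_zero_iff_eq_bot.1 (by simpa using hh)
    · exact (Ideal.eq_of_le_of_height_le _ hle (hPd.trans h9)).symm
  have hpr : (P.comap C).IsPrime := inferInstance
  have hb := (main (P.comap C) rfl).1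
  exact (main ⊥ hb).2

/-- `S[y] ≃ T[x]` -/
def Phi (k : Type) [Field k] (N a : ℕ) : MvPolynomial (Fin a) (MvPolynomial (Fin N) k) ≃+*
    MvPolynomial (Fin N) (MvPolynomial (Fin a) k) :=
  (((sumAlgEquiv k (Fin a) (Fin N)).symm.trans (renameEquiv k (Equiv.sumComm _ _))).trans
    (sumAlgEquiv k (Fin N) (Fin a))).toRingEquiv

lemma sum_inr {N a : ℕ} (q : MvPolynomial (Fin a) k) :
    sumAlgEquiv k (Fin N) (Fin a) (rename Sum.inr q) = C q := by
  have : (sumAlgEquiv k (Fin N) (Fin a)).toAlgHom.comp (rename Sum.inr) =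
      (IsScalarTower.toAlgHom k (MvPolynomial (Fin a) k) (MvPolynomial (Fin N) (MvPolynomial (Fin a) k))) := by
    ext i
    simp
  exact AlgHom.congr_fun this q

lemma sum_X_inl {N a : ℕ} (t : Fin N) :
    sumAlgEquiv k (Fin N) (Fin a) (X (Sum.inl t)) = X t := by
  simp

lemma sum_X_inr {N a : ℕ} (t : Fin a) :
    sumAlgEquiv k (Fin N) (Fin a) (X (Sum.inr t)) = C (X t) := by
  simp

lemma Phi_spec {N a : ℕ} (b : MvPolynomial (Fin N ⊕ Fin a) k) :
    Phi k N a (sumAlgEquiv k (Fin a) (Fin N) (rename Sum.swap b)) = sumAlgEquiv k (Fin N) (Fin a) b := by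
  simp [Phi, rename_rename]

lemma Phi_lin {N a d : ℕ} (ψ : Matrix (Fin a) (Fin d) (MvPolynomial (Fin N) k))
    (σ : Matrix (Fin N) (Fin d) (MvPolynomial (Fin a) k))
    (ℓ : Fin d → MvPolynomial (Fin N ⊕ Fin a) k)
    (hℓ : ∀ i, ℓ i = ∑ j, (rename Sum.inl (ψ j i)) * X (Sum.inr j))
    (hσ : ∀ j, ℓ j = ∑ t : Fin N, X (Sum.inl t) * (rename Sum.inr (σ t j))) (j : Fin d) :
    Phi k N a (lin (ψ.col j)) = lin (σ.col j) := by
  have h1 : sumAlgEquiv k (Fin a) (Fin N) (rename Sum.swap (ℓ j)) = lin (ψ.col j) := by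
    rw [hℓ]
    simp only [map_sum, map_mul, rename_rename, rename_X, lin]
    refine Finset.sum_congr rfl fun i _ => ?_
    have : (Sum.swap ∘ Sum.inl : Fin N → Fin a ⊕ Fin N) = Sum.inr := rfl
    rw [this, sum_inr, Sum.swap_inr, sum_X_inl]
    rfl
  have h2 : sumAlgEquiv k (Fin N) (Fin a) (ℓ j) = lin (σ.col j) := by
    rw [hσ]
    simp only [map_sum, map_mul, lin]
    refine Finset.sum_congr rfl fun i _ => ?_
    rw [sum_inr, sum_X_inl, mul_comm]
    rfl
  rw [← h1, Phi_spec, h2]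

lemma Phi_X {N a : ℕ} (t : Fin N) : Phi k N a (C (X t)) = X t := by
  rw [← sum_X_inr, ← Sum.swap_inl, ← rename_X, Phi_spec, sum_X_inl]

lemma final_height {a d : ℕ} (ψ : Matrix (Fin a) (Fin d) (MvPolynomial (Fin (d + 2)) k))
    (hX : ∀ t, X t ∈ Ideal.span {r | ∃ i j, ψ i j = r})
    (hc : ∀ (p : Ideal (MvPolynomial (Fin (d + 2)) k)) [p.IsPrime] (r h : ℕ),
      Module.finrank p.ResidueField (colV p ψ) = r → 1 ≤ r → r + 1 ≤ d → p.height ≤ h →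
      h + r ≤ d → False)
    (σ : Matrix (Fin (d + 2)) (Fin d) (MvPolynomial (Fin a) k))
    (hΦ : ∀ j, Phi k (d + 2) a (lin (ψ.col j)) = lin (σ.col j))
    (Q : Ideal (MvPolynomial (Fin a) k)) [Q.IsPrime] (hQ : Stmt13.minorsIdeal σ d ≤ Q) :
    2 ≤ Q.height := by
  by_contra hlt
  have hQ1 : Q.height ≤ 1 := by
    rw [not_le] at hlt
    exact ENat.lt_add_one_iff (by simp) |>.1 (by simpa [one_add_one_eq_two] using hlt)
  have step : ∀ (q : Ideal (MvPolynomial (Fin a) k)) [q.IsPrime],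
      (GV q (colV q σ)).height ≤ d →
      (GV q (colV q σ)).comap (Phi k (d + 2) a) = GV ⊥ (colV ⊥ ψ) ∧
        (d : ℕ∞) ≤ (GV q (colV q σ)).height := by
    intro q _ hq
    obtain ⟨t, ht⟩ := exists_X_notMem q (colV q σ) (by
      have := finrank_colV_le q σ
      rw [Fintype.card_fin]; omega)
    have hh : ((GV q (colV q σ)).comap (Phi k (d + 2) a)).height = (GV q (colV q σ)).height :=
      RingEquiv.height_comap _ _
    have := key_claim ψ hX hc ((GV q (colV q σ)).comap (Phi k (d + 2) a))
      (fun j => by rw [Ideal.mem_comap, hΦ]; exact lin_col_mem q σ j) (hh.le.trans hq) t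
      (by rw [Ideal.mem_comap, Phi_X]; exact ht)
    rw [hh] at this
    exact this
  have hr := (minors_le_iff Q σ d).1 hQ
  have hu := GV_upper Q (colV Q σ)
  generalize Module.finrank Q.ResidueField (colV Q σ) = r at *
  have hrd : (r : ℕ∞) + 1 ≤ d := by exact_mod_cast hr
  have hu1 : (GV Q (colV Q σ)).height ≤ d := by
    refine hu.trans (le_trans ?_ hrd)
    rw [add_comm]
    gcongr
  obtain ⟨e1, l1⟩ := step Q hu1
  have hub := GV_upper ⊥ (colV ⊥ σ)
  have hub1 : (GV ⊥ (colV ⊥ σ)).height ≤ d := by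
    refine hub.trans ?_
    rw [Ideal.height_bot, zero_add]
    exact_mod_cast finrank_colV_le ⊥ σ
  obtain ⟨e2, l2⟩ := step ⊥ hub1
  have e3 := Ideal.comap_injective_of_surjective (Phi k (d + 2) a) (Phi k (d + 2) a).surjective
    (e1.trans e2.symm)
  have e4 : Q = ⊥ := by
    rw [← GV_comap Q (colV Q σ), e3, GV_comap]
  have : (d : ℕ∞) ≤ r := by
    have h0 : Q.height = 0 := by rw [e4]; exact Ideal.height_bot
    rw [h0, zero_add] at hu
    exact l1.trans hu
  have : d ≤ r := by exact_mod_cast this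
  omega

end conclusion


end JD

namespace Stmt13

variable (k : Type) [Field k]

theorem ci_jacobian_dual_height
    (d e : ℕ) (hd : 2 ≤ d)
    -- `f, g`: a homogeneous `S`-regular sequence of quadrics in `S = k[x_1,…,x_{d+2}]`
    (f g : MvPolynomial (Fin (d + 2)) k)
    (hf : f ∈ homogeneousSubmodule (Fin (d + 2)) k 2)
    (hg : g ∈ homogeneousSubmodule (Fin (d + 2)) k 2)
    (hfg : RingTheory.Sequence.IsRegular (MvPolynomial (Fin (d + 2)) k) [f, g])
    -- `E`: a module over `R = S/(f,g)`
    (E : Type) [AddCommGroup E]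
    [Module (MvPolynomial (Fin (d + 2)) k ⧸
      (Ideal.span {f, g} : Ideal (MvPolynomial (Fin (d + 2)) k))) E]
    [Module.Finite (MvPolynomial (Fin (d + 2)) k ⧸
      (Ideal.span {f, g} : Ideal (MvPolynomial (Fin (d + 2)) k))) E]
    -- `E` is torsion-free
    (htf : Submodule.torsion (MvPolynomial (Fin (d + 2)) k ⧸
      (Ideal.span {f, g} : Ideal (MvPolynomial (Fin (d + 2)) k))) E = ⊥)
    -- `ψ`: the matrix of linear forms over `S` lifting the presentation matrix `φ`
    (ψ : Matrix (Fin (d + e)) (Fin d) (MvPolynomial (Fin (d + 2)) k))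
    (hψlin : ∀ i j, ψ i j ∈ homogeneousSubmodule (Fin (d + 2)) k 1)
    (φ : Matrix (Fin (d + e)) (Fin d) (MvPolynomial (Fin (d + 2)) k ⧸
      (Ideal.span {f, g} : Ideal (MvPolynomial (Fin (d + 2)) k))))
    (hφψ : ∀ i j, φ i j = Ideal.Quotient.mk _ (ψ i j))
    -- `0 → R^d →φ R^{d+e} →π E → 0` is a (minimal) free resolution, so `pd_R E = 1`
    -- and `rank E = e`
    (hinj : Function.Injective φ.mulVecLin)
    (π : (Fin (d + e) → (MvPolynomial (Fin (d + 2)) k ⧸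
        (Ideal.span {f, g} : Ideal (MvPolynomial (Fin (d + 2)) k)))) →ₗ[MvPolynomial (Fin (d + 2)) k ⧸
        (Ideal.span {f, g} : Ideal (MvPolynomial (Fin (d + 2)) k))] E)
    (hsurj : Function.Surjective π)
    (hker : LinearMap.ker π = LinearMap.range φ.mulVecLin)
    -- `I_1(φ) = (x_1,…,x_{d+2})R`
    (hI1 : Ideal.span {r | ∃ i j, φ i j = r} =
      Ideal.span (Set.range fun t : Fin (d + 2) => Ideal.Quotient.mk _ (X t)))
    -- `E` is minimally generated by `μ(E) = d+e` elements
    (hμ : ∀ s : Finset E,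
      Submodule.span (MvPolynomial (Fin (d + 2)) k ⧸
        (Ideal.span {f, g} : Ideal (MvPolynomial (Fin (d + 2)) k))) (s : Set E) = ⊤ →
      d + e ≤ s.card)
    -- `E` satisfies `G_d`
    (hGd : ∀ (p : Ideal (MvPolynomial (Fin (d + 2)) k ⧸
        (Ideal.span {f, g} : Ideal (MvPolynomial (Fin (d + 2)) k)))) (_ : p.IsPrime) (c : ℕ),
      ringKrullDim (Localization.AtPrime p) = (c : WithBot ℕ∞) → 1 ≤ c → c ≤ d - 1 →
      ∃ s : Finset (LocalizedModule p.primeCompl E), s.card ≤ c + e - 1 ∧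
        Submodule.span (Localization.AtPrime p)
          (s : Set (LocalizedModule p.primeCompl E)) = ⊤)
    -- the defining ideal `L = (ℓ_1,…,ℓ_d,f,g)` of `S(E)` as a quotient of
    -- `B = S ⊗_k T`, with `[ℓ_1 … ℓ_d] = [y_1 … y_{d+e}]·ψ`
    (ℓ : Fin d → B k (d + 2) (d + e))
    (hℓ : ∀ i, ℓ i = ∑ j, (rename Sum.inl (ψ j i)) * X (Sum.inr j))
    (L : Ideal (B k (d + 2) (d + e)))
    (hL : L = Ideal.span (Set.range ℓ ∪ {rename Sum.inl f, rename Sum.inl g}))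
    -- the Jacobian dual `σ = B(ψ)`
    (σ : Matrix (Fin (d + 2)) (Fin d) (T k (d + e)))
    (hσlin : ∀ t j, σ t j ∈ homogeneousSubmodule (Fin (d + e)) k 1)
    (hσ : ∀ j, ℓ j =
      ∑ t : Fin (d + 2), X (Sum.inl t) * (rename Sum.inr (σ t j) : B k (d + 2) (d + e))) :
    htGE (minorsIdeal σ d) 2 := by
  intro Q hQp hQ
  have hX := JD.X_mem_of_linear f g hf hg ψ hψlin φ hφψ hI1
  have h2 := JD.final_height ψ hX
    (fun p _ r h => JD.gd_contra d e f g hf hg hfg E ψ hψlin φ hφψ hinj π hsurj hker hGd p r h)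
    σ (JD.Phi_lin ψ σ ℓ hℓ hσ) Q hQ
  rw [IsLocalization.AtPrime.ringKrullDim_eq_height Q (Localization.AtPrime Q)]
  exact WithBot.coe_le_coe.2 h2

end Stmt13
end
end
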